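/- arXiv:1809.03984 — 4 statements merged into one kernel-verified Lean document; each statement's English description precedes it below -/
import Mathlib

section
/- Let A be a separable C*-algebra of stable rank one such that there is no surjective *-homomorphism from A onto the C*-algebra of compact operators on a nonzero complex Hilbert space (i.e., A has no nonzero elementary quotients). Then for every k ∈ ℕ with k ≥ 1 there exists a *-homomorphism φ : M_k(C_0((0,1])) → A whose range generates A as a closed two-sided ideal (i.e., φ has full range). -/
open ZeroAtInfty

universe u

section P0part
open Filter Topology



namespace Glimm

section calc0

variable {A : Type u} [NonUnitalCStarAlgebra A]

local instance instOrd : PartialOrder A := CStarAlgebra.spectralOrder A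
local instance instOrdR : StarOrderedRing A := CStarAlgebra.spectralOrderedRing A

theorem nn_sa (x : A) : IsSelfAdjoint (star x * x) := IsSelfAdjoint.star_mul_self x

theorem qsp_nonneg (x : A) {s : ℝ} (hs : s ∈ quasispectrum ℝ (star x * x)) : 0 ≤ s :=
  quasispectrum_nonneg_of_nonneg (star x * x) (star_mul_self_nonneg x) s hs

theorem norm_cfc_le (x : A) (f : ℝ → ℝ) {c : ℝ} (hc : 0 ≤ c) (h : ∀ s, 0 ≤ s → |f s| ≤ c) :
    ‖cfcₙ f (star x * x)‖ ≤ c :=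
  norm_cfcₙ_le (fun s hs => h s (qsp_nonneg x hs))

theorem norm_x_sub (x : A) (f : ℝ → ℝ) (hf : Continuous f) (h0 : f 0 = 0) {c : ℝ}
    (h : ∀ s, 0 ≤ s → s * (1 - f s) ^ 2 ≤ c) :
    ‖x - x * cfcₙ f (star x * x)‖ ^ 2 ≤ c := by
  have hc : 0 ≤ c := by simpa [h0] using h 0 le_rfl
  set a := star x * x with ha
  have hsa : IsSelfAdjoint a := nn_sa x
  have hF : star (cfcₙ f a) = cfcₙ f a := (cfcₙ_predicate f a : IsSelfAdjoint _).star_eq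
  have key : star (x - x * cfcₙ f a) * (x - x * cfcₙ f a) =
      cfcₙ (fun s => s * (1 - f s) ^ 2) a := by
    have e1 : cfcₙ (fun s => s * (1 - f s) ^ 2) a =
        cfcₙ (fun s => (id s - id s * f s) - f s * (id s - id s * f s)) a := by
      congr 1; ext s; simp only [id]; ring
    rw [e1, cfcₙ_sub _ _ a, cfcₙ_mul _ _ a, cfcₙ_sub _ _ a, cfcₙ_mul _ _ a, cfcₙ_id ℝ a]
    rw [star_sub, star_mul, hF, ha]
    noncomm_ring
  rw [sq, ← CStarRing.norm_star_mul_self, key]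
  refine norm_cfc_le x _ hc (fun s hs => ?_)
  rw [abs_of_nonneg (by positivity)]
  exact h s hs

/-- cutoffs -/
noncomputable def fn (τ s : ℝ) : ℝ := s / (max s τ) ^ 2
noncomputable def fm (τ s : ℝ) : ℝ := s * fn τ s
noncomputable def fcut (τ s : ℝ) : ℝ := max (s - τ) 0

theorem fn_cont {τ : ℝ} (h : 0 < τ) : Continuous (fn τ) := by
  unfold fn
  refine Continuous.div continuous_id (by fun_prop) (fun s => ?_)
  have : 0 < max s τ := lt_max_of_lt_right h
  positivity
theorem fm_cont {τ : ℝ} (h : 0 < τ) : Continuous (fm τ) := continuous_id.mul (fn_cont h)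
theorem fcut_cont {τ : ℝ} : Continuous (fcut τ) := by unfold fcut; fun_prop
@[simp] theorem fn_zero (τ : ℝ) : fn τ 0 = 0 := by simp [fn]
@[simp] theorem fm_zero (τ : ℝ) : fm τ 0 = 0 := by simp [fm]
theorem fcut_zero {τ : ℝ} (h : 0 < τ) : fcut τ 0 = 0 := by simp [fcut, h.le]

theorem fm_eq_one {τ s : ℝ} (h : 0 < τ) (hs : τ ≤ s) : fm τ s = 1 := by
  have : 0 < s := h.trans_le hs
  simp only [fm, fn, max_eq_left hs]; field_simp
theorem fm_of_le {τ s : ℝ} (hs : s ≤ τ) : fm τ s = s ^ 2 / τ ^ 2 := by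
  simp only [fm, fn, max_eq_right hs]; ring
theorem fm_mem {τ s : ℝ} (h : 0 < τ) (hs : 0 ≤ s) : 0 ≤ fm τ s ∧ fm τ s ≤ 1 := by
  rcases le_total τ s with h1 | h1
  · rw [fm_eq_one h h1]; norm_num
  · rw [fm_of_le h1]
    refine ⟨by positivity, ?_⟩
    rw [div_le_one (by positivity)]
    gcongr
theorem fn_bd {τ s : ℝ} (h : 0 < τ) (hs : 0 ≤ s) : |fn τ s| ≤ 1 / τ := by
  have h1 : 0 < max s τ := lt_max_of_lt_right h
  rw [fn, abs_of_nonneg (by positivity), div_le_div_iff₀ (by positivity) h]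
  have := le_max_left s τ
  have := le_max_right s τ
  nlinarith
theorem fm_err {τ s : ℝ} (h : 0 < τ) (hs : 0 ≤ s) : s * (1 - fm τ s) ^ 2 ≤ τ := by
  rcases le_total τ s with h1 | h1
  · rw [fm_eq_one h h1]; simpa using h.le
  · obtain ⟨h2, h3⟩ := fm_mem h hs
    have : (1 - fm τ s) ^ 2 ≤ 1 := by nlinarith
    nlinarith [sq_nonneg (1 - fm τ s)]
theorem fcut_fm {τ : ℝ} (h : 0 < τ) (s : ℝ) : fcut τ s * fm τ s = fcut τ s := by
  rcases le_total τ s with h1 | h1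
  · rw [fm_eq_one h h1, mul_one]
  · have : fcut τ s = 0 := by simp [fcut, h1]
    rw [this, zero_mul]
theorem fcut_err {τ s : ℝ} (h : 0 < τ) (hs : 0 ≤ s) : |s - fcut τ s| ≤ τ := by
  rcases le_total τ s with h1 | h1
  · have : fcut τ s = s - τ := by simp [fcut, h1]
    rw [this]; simp [abs_of_pos h]
  · have : fcut τ s = 0 := by simp [fcut, h1]
    rw [this, sub_zero, abs_of_nonneg hs]; exact h1

theorem mfac (a : A) (ha : IsSelfAdjoint a) {τ : ℝ} (h : 0 < τ) :
    cfcₙ (fm τ) a = a * cfcₙ (fn τ) a := by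
  have : fm τ = fun s => id s * fn τ s := by ext; simp [fm]
  rw [this, cfcₙ_mul _ _ a (hg := (fn_cont h).continuousOn), cfcₙ_id ℝ a]
theorem mfac' (a : A) (ha : IsSelfAdjoint a) {τ : ℝ} (h : 0 < τ) :
    cfcₙ (fm τ) a = cfcₙ (fn τ) a * a := by
  have : fm τ = fun s => fn τ s * id s := by ext; simp [fm, mul_comm]
  rw [this, cfcₙ_mul _ _ a (hf := (fn_cont h).continuousOn), cfcₙ_id ℝ a]
theorem cut_mul_m (a : A) {τ : ℝ} (h : 0 < τ) :
    cfcₙ (fcut τ) a * cfcₙ (fm τ) a = cfcₙ (fcut τ) a := by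
  rw [← cfcₙ_mul (fcut τ) (fm τ) a fcut_cont.continuousOn (fcut_zero h) (fm_cont h).continuousOn]
  simp only [fcut_fm h]
theorem m_mul_cut (a : A) {τ : ℝ} (h : 0 < τ) :
    cfcₙ (fm τ) a * cfcₙ (fcut τ) a = cfcₙ (fcut τ) a := by
  rw [← cfcₙ_mul (fm τ) (fcut τ) a (fm_cont h).continuousOn (fm_zero τ) fcut_cont.continuousOn
    (fcut_zero h)]
  simp only [mul_comm (fm τ _), fcut_fm h]
theorem norm_sub_cut (x : A) {τ : ℝ} (h : 0 < τ) :
    ‖star x * x - cfcₙ (fcut τ) (star x * x)‖ ≤ τ := by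
  have hsa := nn_sa x
  have : star x * x - cfcₙ (fcut τ) (star x * x) = cfcₙ (fun s => id s - fcut τ s) (star x * x) := by
    rw [cfcₙ_sub _ _ _ (hg := fcut_cont.continuousOn) (hg0 := fcut_zero h), cfcₙ_id ℝ (star x * x)]
  rw [this]
  exact norm_cfc_le x _ h.le (fun s hs => fcut_err h hs)
theorem norm_sub_m (x : A) {τ : ℝ} (h : 0 < τ) :
    ‖x - x * cfcₙ (fm τ) (star x * x)‖ ^ 2 ≤ τ :=
  norm_x_sub x _ (fm_cont h) (fm_zero τ) (fun _ hs => fm_err h hs)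

theorem norm_le_add (a b : A) (ha : 0 ≤ a) (hb : 0 ≤ b) : ‖a‖ ≤ ‖a + b‖ :=
  CStarAlgebra.norm_le_norm_of_nonneg_of_le ha (le_add_of_nonneg_right hb)

/-- approximate unit -/
theorem appr (a : A) {ε : ℝ} (h : 0 < ε) :
    ∃ e : A, star e = e ∧ ‖e‖ ≤ 1 ∧ ‖e * a - a‖ < ε ∧ ‖a * e - a‖ < ε := by
  have hu := CStarAlgebra.increasingApproximateUnit A
  have h1 := (hu.tendsto_mul_left a)
  have h2 := (hu.tendsto_mul_right a)
  have h3 := hu.eventually_star_eq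
  have h4 := hu.eventually_norm
  have h1' := (Metric.tendsto_nhds.1 h1 ε h)
  have h2' := (Metric.tendsto_nhds.1 h2 ε h)
  haveI := hu.neBot
  obtain ⟨e, q1, q2, q3, q4⟩ := (h1'.and (h2'.and (h3.and h4))).exists
  rw [dist_eq_norm] at q1 q2
  exact ⟨e, q3, q4, by first | exact q1 | exact q2, by first | exact q2 | exact q1⟩

end calc0
end Glimm

end P0part

section P1part
open Filter Topology



namespace Glimm

/-- closed two-sided ideals -/
structure CI (A : Type u) [NonUnitalCStarAlgebra A] extends Submodule ℂ A where
  closed' : IsClosed (carrier : Set A)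
  mulL' : ∀ a x : A, x ∈ carrier → a * x ∈ carrier
  mulR' : ∀ a x : A, x ∈ carrier → x * a ∈ carrier

section CIsec

attribute [local instance] instOrd instOrdR

variable {A : Type u} [NonUnitalCStarAlgebra A]

instance : SetLike (CI A) A where
  coe J := J.carrier
  coe_injective := by
    rintro ⟨J, _, _, _⟩ ⟨K, _, _, _⟩ h
    have : J = K := SetLike.coe_injective h
    subst this; rfl

instance : AddSubgroupClass (CI A) A where
  add_mem {J} := J.toSubmodule.add_mem
  zero_mem J := J.toSubmodule.zero_mem
  neg_mem {J} := J.toSubmodule.neg_mem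

instance : SMulMemClass (CI A) ℂ A where
  smul_mem {J} c _ h := J.toSubmodule.smul_mem c h

instance : PartialOrder (CI A) := PartialOrder.ofSetLike (CI A) A

variable (J : CI A)

theorem CI.isClosed : IsClosed (J : Set A) := J.closed'
theorem CI.mulL {x : A} (a : A) (h : x ∈ J) : a * x ∈ J := J.mulL' a x h
theorem CI.mulR {x : A} (a : A) (h : x ∈ J) : x * a ∈ J := J.mulR' a x h

theorem CI.mem_of_approx {x : A} (h : ∀ ε > 0, ∃ y ∈ J, ‖x - y‖ < ε) : x ∈ J := by
  have : x ∈ closure (J : Set A) := by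
    rw [Metric.mem_closure_iff]
    intro ε hε
    obtain ⟨y, hy, h1⟩ := h ε hε
    exact ⟨y, hy, by rwa [dist_eq_norm]⟩
  rwa [J.isClosed.closure_eq] at this

theorem CI.mul_m_mem {τ : ℝ} (hτ : 0 < τ) {a : A} (hs : IsSelfAdjoint a) (ha : a ∈ J) :
    cfcₙ (fm τ) a ∈ J := by
  rw [mfac a hs hτ]; exact J.mulR _ ha

theorem CI.star_mem {x : A} (h : x ∈ J) : star x ∈ J := by
  refine J.mem_of_approx fun ε hε => ?_
  have h1 := norm_sub_m (star x) (show 0 < ε ^ 2 / 2 by positivity)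
  refine ⟨_, J.mulL (star x) (J.mul_m_mem (τ := ε ^ 2 / 2) (by positivity)
    (nn_sa (star x)) (by rw [star_star]; exact J.mulR _ h)), ?_⟩
  refine lt_of_pow_lt_pow_left₀ 2 hε.le (h1.trans_lt ?_)
  have := pow_pos hε 2
  linarith

/-- The quotient. -/
def CI.Q (J : CI A) : Type u := A ⧸ J.toSubmodule

instance : IsClosed (J.toSubmodule : Set A) := J.closed'

noncomputable instance : NormedAddCommGroup J.Q :=
  inferInstanceAs (NormedAddCommGroup (A ⧸ J.toSubmodule))
noncomputable instance : NormedSpace ℂ J.Q :=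
  inferInstanceAs (NormedSpace ℂ (A ⧸ J.toSubmodule))
instance : CompleteSpace J.Q :=
  inferInstanceAs (CompleteSpace (A ⧸ J.toSubmodule))

def CI.q (J : CI A) (a : A) : J.Q := (Submodule.Quotient.mk a : A ⧸ J.toSubmodule)

theorem CI.q_surj : Function.Surjective J.q := Submodule.Quotient.mk_surjective J.toSubmodule
theorem CI.q_eq {a b : A} : J.q a = J.q b ↔ a - b ∈ J := Submodule.Quotient.eq J.toSubmodule
theorem CI.q_add (a b : A) : J.q (a + b) = J.q a + J.q b := rfl
theorem CI.q_smul (c : ℂ) (a : A) : J.q (c • a) = c • J.q a := rfl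
theorem CI.q_zero : J.q 0 = 0 := rfl
theorem CI.q_neg (a : A) : J.q (-a) = - J.q a := rfl
theorem CI.q_norm_le (a : A) : ‖J.q a‖ ≤ ‖a‖ := Submodule.Quotient.norm_mk_le J.toSubmodule a
theorem CI.q_lift (x : J.Q) {r : ℝ} (h : ‖x‖ < r) : ∃ a, J.q a = x ∧ ‖a‖ < r := by
  obtain ⟨m, h1, h2⟩ := Submodule.Quotient.norm_mk_lt (S := J.toSubmodule) x (sub_pos.2 h)
  exact ⟨m, h1, by linarith [show ‖m‖ < ‖x‖ + (r - ‖x‖) from h2]⟩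

noncomputable instance : Mul J.Q where
  mul x y := Quotient.map₂ (· * ·) (by
    intro a b h c d h'
    have h1 : a - b ∈ J := (Submodule.quotientRel_def _).1 h
    have h2 : c - d ∈ J := (Submodule.quotientRel_def _).1 h'
    refine (Submodule.quotientRel_def _).2 ?_
    have : a * c - b * d = (a - b) * c + b * (c - d) := by noncomm_ring
    show a * c - b * d ∈ J
    rw [this]
    exact add_mem (J.mulR _ h1) (J.mulL _ h2)) x y

theorem CI.q_mul (a b : A) : J.q (a * b) = J.q a * J.q b := rfl

noncomputable instance : Star J.Q where
  star x := Quotient.map star (by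
    intro a b h
    have h1 : a - b ∈ J := (Submodule.quotientRel_def _).1 h
    refine (Submodule.quotientRel_def _).2 ?_
    show star a - star b ∈ J
    rw [← star_sub]
    exact J.star_mem h1) x

theorem CI.q_star (a : A) : J.q (star a) = star (J.q a) := rfl

noncomputable instance : NonUnitalNormedRing J.Q where
  __ := (inferInstance : NormedAddCommGroup J.Q)
  left_distrib x y z := by
    obtain ⟨a, rfl⟩ := J.q_surj x; obtain ⟨b, rfl⟩ := J.q_surj y; obtain ⟨c, rfl⟩ := J.q_surj z
    rw [← J.q_add, ← J.q_mul, ← J.q_mul, ← J.q_mul, ← J.q_add, mul_add]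
  right_distrib x y z := by
    obtain ⟨a, rfl⟩ := J.q_surj x; obtain ⟨b, rfl⟩ := J.q_surj y; obtain ⟨c, rfl⟩ := J.q_surj z
    rw [← J.q_add, ← J.q_mul, ← J.q_mul, ← J.q_mul, ← J.q_add, add_mul]
  zero_mul x := by
    obtain ⟨a, rfl⟩ := J.q_surj x
    rw [← J.q_zero, ← J.q_mul, zero_mul]
  mul_zero x := by
    obtain ⟨a, rfl⟩ := J.q_surj x
    rw [← J.q_zero, ← J.q_mul, mul_zero]
  mul_assoc x y z := by
    obtain ⟨a, rfl⟩ := J.q_surj x; obtain ⟨b, rfl⟩ := J.q_surj y; obtain ⟨c, rfl⟩ := J.q_surj z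
    rw [← J.q_mul, ← J.q_mul, ← J.q_mul, ← J.q_mul, mul_assoc]
  norm_mul_le x y := by
    refine le_of_forall_pos_le_add fun ε hε => ?_
    have hc : ContinuousAt (fun t : ℝ => (‖x‖ + t) * (‖y‖ + t)) 0 := by fun_prop
    have := (Metric.tendsto_nhds.1 hc.tendsto ε hε)
    have h2 : ∀ᶠ t in 𝓝[>] (0:ℝ), (‖x‖ + t) * (‖y‖ + t) < ‖x‖ * ‖y‖ + ε := by
      filter_upwards [this.filter_mono nhdsWithin_le_nhds] with t ht
      rw [Real.dist_eq] at ht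
      simp only [add_zero] at ht
      linarith [(abs_lt.1 ht).2]
    obtain ⟨t, ht, ht0⟩ := (h2.and self_mem_nhdsWithin).exists
    obtain ⟨a, rfl, ha⟩ := J.q_lift x (lt_add_of_pos_right _ ht0)
    obtain ⟨b, rfl, hb⟩ := J.q_lift y (lt_add_of_pos_right _ ht0)
    rw [← J.q_mul]
    calc _ ≤ ‖a * b‖ := J.q_norm_le _
      _ ≤ ‖a‖ * ‖b‖ := norm_mul_le _ _
      _ ≤ _ := by gcongr
      _ ≤ _ := ht.le

noncomputable instance : StarRing J.Q where
  star_involutive x := by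
    obtain ⟨a, rfl⟩ := J.q_surj x
    rw [← J.q_star, ← J.q_star, star_star]
  star_mul x y := by
    obtain ⟨a, rfl⟩ := J.q_surj x; obtain ⟨b, rfl⟩ := J.q_surj y
    rw [← J.q_star, ← J.q_star, ← J.q_mul, ← J.q_mul, ← J.q_star, star_mul]
  star_add x y := by
    obtain ⟨a, rfl⟩ := J.q_surj x; obtain ⟨b, rfl⟩ := J.q_surj y
    rw [← J.q_star, ← J.q_star, ← J.q_add, ← J.q_add, ← J.q_star, star_add]

instance : IsScalarTower ℂ J.Q J.Q where
  smul_assoc c x y := by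
    obtain ⟨a, rfl⟩ := J.q_surj x; obtain ⟨b, rfl⟩ := J.q_surj y
    simp only [smul_eq_mul]
    rw [← J.q_smul, ← J.q_mul, ← J.q_mul, ← J.q_smul, smul_mul_assoc]

instance : SMulCommClass ℂ J.Q J.Q where
  smul_comm c x y := by
    obtain ⟨a, rfl⟩ := J.q_surj x; obtain ⟨b, rfl⟩ := J.q_surj y
    simp only [smul_eq_mul]
    rw [← J.q_smul, ← J.q_mul, ← J.q_mul, ← J.q_smul, mul_smul_comm]

instance : StarModule ℂ J.Q where
  star_smul c x := by
    obtain ⟨a, rfl⟩ := J.q_surj x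
    rw [← J.q_star, ← J.q_smul, ← J.q_smul, ← J.q_star, star_smul]

theorem norm_sub_mul_le (u : A) (h0 : 0 ≤ u) (h1 : ‖u‖ ≤ 1) :
    ‖(1 : Unitization ℂ A) - (u : Unitization ℂ A)‖ ≤ 1 := by
  have hn : (0 : Unitization ℂ A) ≤ (u : Unitization ℂ A) := Unitization.inr_nonneg_iff.2 h0
  have h2 : (u : Unitization ℂ A) ≤ 1 := by
    rw [← CStarAlgebra.norm_le_one_iff_of_nonneg _ hn, Unitization.norm_inr]; exact h1
  rw [CStarAlgebra.norm_le_one_iff_of_nonneg _ (sub_nonneg.2 h2)]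
  exact sub_le_self _ hn

instance : CStarRing J.Q where
  norm_mul_self_le x := by
    obtain ⟨a, rfl⟩ := J.q_surj x
    refine le_of_forall_pos_le_add fun ε hε => ?_
    obtain ⟨b, hb, hbn⟩ := J.q_lift (star (J.q a) * J.q a)
      (lt_add_of_pos_right _ (half_pos hε))
    rw [← J.q_star, ← J.q_mul] at hb
    set j := b - star a * a with hj
    have hjJ : j ∈ J := J.q_eq.1 hb
    have hτ : 0 < (ε / 2) ^ 2 := by positivity
    set u := cfcₙ (fm ((ε / 2) ^ 2)) (star j * j) with hu
    have huJ : u ∈ J := J.mul_m_mem hτ (nn_sa j) (J.mulL _ hjJ)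
    have hun : ‖u‖ ≤ 1 := norm_cfc_le j _ zero_le_one (fun s hs => by
      rw [abs_of_nonneg (fm_mem hτ hs).1]; exact (fm_mem hτ hs).2)
    have hu0 : 0 ≤ u := cfcₙ_nonneg (fun s hs => (fm_mem hτ (qsp_nonneg j hs)).1)
    have hjn : ‖j - j * u‖ ≤ ε / 2 := by
      have := norm_sub_m j hτ
      exact (sq_le_sq₀ (norm_nonneg _) (by positivity)).1 this
    have h1 : J.q a = J.q (a - a * u) := by
      rw [J.q_eq]; simpa using J.mulL a huJ
    have hus : star u = u := (IsSelfAdjoint.of_nonneg hu0).star_eq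
    have h2 : ‖a - a * u‖ * ‖a - a * u‖ ≤ ‖b‖ + ε / 2 := by
      rw [← CStarRing.norm_star_mul_self]
      set v : Unitization ℂ A := 1 - (u : Unitization ℂ A)
      have hv : ‖v‖ ≤ 1 := norm_sub_mul_le u hu0 hun
      have h3 : (((star (a - a * u) * (a - a * u) : A)) : Unitization ℂ A) =
          v * (b : Unitization ℂ A) * v - v * ((j - j * u : A) : Unitization ℂ A) := by
        have : b = star a * a + j := by rw [hj]; abel
        rw [this, star_sub, star_mul, hus]
        simp only [v, Unitization.inr_mul, Unitization.inr_sub, Unitization.inr_add]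
        noncomm_ring
      rw [← Unitization.norm_inr (𝕜 := ℂ), h3]
      calc _ ≤ ‖v * (b : Unitization ℂ A) * v‖ + ‖v * ((j - j * u : A) : Unitization ℂ A)‖ :=
            norm_sub_le _ _
        _ ≤ ‖v‖ * ‖(b : Unitization ℂ A)‖ * ‖v‖ + ‖v‖ * ‖((j - j * u : A) : Unitization ℂ A)‖ := by
            gcongr
            · exact norm_mul₃_le
            · exact norm_mul_le _ _
        _ ≤ 1 * ‖(b : Unitization ℂ A)‖ * 1 + 1 * ‖((j - j * u : A) : Unitization ℂ A)‖ := by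
            gcongr
        _ ≤ _ := by
            rw [Unitization.norm_inr, Unitization.norm_inr]; linarith
    calc ‖J.q a‖ * ‖J.q a‖ = ‖J.q (a - a * u)‖ * ‖J.q (a - a * u)‖ := by rw [← h1]
      _ ≤ ‖a - a * u‖ * ‖a - a * u‖ := by gcongr <;> exact J.q_norm_le _
      _ ≤ _ := h2
      _ ≤ _ := by linarith

noncomputable instance : NonUnitalCStarAlgebra J.Q where

noncomputable def CI.π (J : CI A) : A →⋆ₙₐ[ℂ] J.Q where
  toFun := J.q
  map_smul' _ _ := rfl
  map_zero' := rfl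
  map_add' _ _ := rfl
  map_mul' _ _ := rfl
  map_star' _ := rfl

theorem CI.π_surj : Function.Surjective J.π := J.q_surj
theorem CI.π_eq_zero {a : A} : J.π a = 0 ↔ a ∈ J := by
  have h := J.q_eq (a := a) (b := 0)
  rw [sub_zero] at h
  exact h
theorem CI.π_le (a : A) : ‖J.π a‖ ≤ ‖a‖ := J.q_norm_le a
theorem CI.π_cont : Continuous J.π :=
  AddMonoidHomClass.continuous_of_bound J.π 1 (fun a => by simpa using J.π_le a)
theorem CI.π_dist {a : A} {r : ℝ} (h : ‖J.π a‖ < r) : ∃ j ∈ J, ‖a - j‖ < r := by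
  obtain ⟨b, h1, h2⟩ := J.q_lift _ h
  exact ⟨a - b, J.q_eq.1 h1.symm, by simpa using h2⟩
theorem CI.π_le_dist {a j : A} (h : j ∈ J) : ‖J.π a‖ ≤ ‖a - j‖ := by
  have : J.π a = J.π (a - j) := by rw [map_sub, J.π_eq_zero.2 h, sub_zero]
  rw [this]; exact J.π_le _
theorem CI.π_mono {J K : CI A} (h : J ≤ K) (a : A) : ‖K.π a‖ ≤ ‖J.π a‖ := by
  refine le_of_forall_gt_imp_ge_of_dense fun r hr => ?_
  obtain ⟨j, h1, h2⟩ := J.π_dist hr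
  exact (K.π_le_dist (h h1)).trans h2.le

theorem CI.π_cfc (f : ℝ → ℝ) (hf : Continuous f) (h0 : f 0 = 0) (a : A) (ha : IsSelfAdjoint a) :
    J.π (cfcₙ f a) = cfcₙ f (J.π a) :=
  NonUnitalStarAlgHomClass.map_cfcₙ J.π f a hf.continuousOn h0 J.π_cont ha (ha.map J.π)

theorem CI.star_mul_mem {x : A} : star x * x ∈ J ↔ x ∈ J := by
  rw [← J.π_eq_zero, ← J.π_eq_zero, map_mul, map_star, CStarRing.star_mul_self_eq_zero_iff]
theorem CI.mul_star_mem {x : A} : x * star x ∈ J ↔ x ∈ J := by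
  rw [← J.π_eq_zero, ← J.π_eq_zero, map_mul, map_star, CStarRing.mul_star_self_eq_zero_iff]

theorem CI.cut_mem (x : A) {r : ℝ} (hr : 0 < r) (h : ‖J.π (star x * x)‖ ≤ r) :
    cfcₙ (fcut r) (star x * x) ∈ J := by
  rw [← J.π_eq_zero, J.π_cfc _ fcut_cont (fcut_zero hr) _ (nn_sa x)]
  rw [← cfcₙ_zero ℝ (J.π (star x * x))]
  refine cfcₙ_congr (fun s hs => ?_)
  have h2 := norm_apply_le_norm_cfcₙ (id : ℝ → ℝ) (J.π (star x * x)) hs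
    (ha := (nn_sa x).map J.π)
  rw [cfcₙ_id ℝ _ ((nn_sa x).map J.π)] at h2
  have := h2.trans h
  rw [Real.norm_eq_abs] at this
  have := (abs_le.1 this).2
  simpa [fcut] using this

/-- limit ideal along a filter -/
def limI {ι : Type*} (l : Filter ι) (F : ι → CI A) : CI A where
  carrier := {a | Tendsto (fun i => ‖(F i).π a‖) l (𝓝 0)}
  zero_mem' := by simp [tendsto_const_nhds]
  add_mem' {a b} ha hb := by
    refine squeeze_zero (fun _ => norm_nonneg _) (fun i => ?_) (by simpa using ha.add hb)
    rw [map_add]; exact norm_add_le _ _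
  smul_mem' c a ha := by
    refine squeeze_zero (fun _ => norm_nonneg _) (fun i => ?_) (by simpa using ha.const_mul ‖c‖)
    rw [map_smul, norm_smul]
  closed' := by
    rw [← isSeqClosed_iff_isClosed]
    intro u a hu hua
    refine Metric.tendsto_nhds.2 ?_
    intro ε hε
    obtain ⟨n, hn⟩ := (Metric.tendsto_nhds.1 hua (ε / 2) (half_pos hε)).exists
    filter_upwards [Metric.tendsto_nhds.1 (hu n) (ε / 2) (half_pos hε)] with i hi
    rw [dist_zero_right, norm_norm] at hi ⊢
    rw [dist_eq_norm, norm_sub_rev] at hn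
    have h1 : (F i).π a = (F i).π (a - u n) + (F i).π (u n) := by rw [← map_add, sub_add_cancel]
    rw [h1]
    have := norm_add_le ((F i).π (a - u n)) ((F i).π (u n))
    have := (F i).π_le (a - u n)
    linarith
  mulL' a x hx := by
    refine squeeze_zero (fun _ => norm_nonneg _) (fun i => ?_) (by simpa using hx.const_mul ‖a‖)
    rw [map_mul]
    refine (norm_mul_le _ _).trans ?_
    gcongr; exact (F i).π_le a
  mulR' a x hx := by
    refine squeeze_zero (fun _ => norm_nonneg _) (fun i => ?_) (by simpa using hx.mul_const ‖a‖)
    rw [map_mul]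
    refine (norm_mul_le _ _).trans ?_
    gcongr; exact (F i).π_le a

theorem mem_limI {ι : Type*} (l : Filter ι) (F : ι → CI A) (a : A) :
    a ∈ limI l F ↔ Tendsto (fun i => ‖(F i).π a‖) l (𝓝 0) := Iff.rfl

/-- closed ideal generated -/
def idl (S : Set A) : CI A where
  carrier := {a | ∀ K : CI A, (∀ s ∈ S, s ∈ K) → a ∈ K}
  zero_mem' K _ := zero_mem K
  add_mem' ha hb K h := add_mem (ha K h) (hb K h)
  smul_mem' c a ha K h := SMulMemClass.smul_mem c (ha K h)
  closed' := by
    have : {a : A | ∀ K : CI A, (∀ s ∈ S, s ∈ K) → a ∈ K} =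
        ⋂ (K : CI A) (_ : ∀ s ∈ S, s ∈ K), (K : Set A) := by ext; simp
    rw [this]
    exact isClosed_iInter fun K => isClosed_iInter fun _ => K.isClosed
  mulL' a x hx K h := K.mulL a (hx K h)
  mulR' a x hx K h := K.mulR a (hx K h)

theorem mem_idl {S : Set A} {s : A} (h : s ∈ S) : s ∈ idl S := fun _ hK => hK s h
theorem self_mem (w : A) : w ∈ idl {w} := mem_idl rfl
theorem idl_le {S : Set A} {K : CI A} (h : ∀ s ∈ S, s ∈ K) {a : A} (ha : a ∈ idl S) : a ∈ K :=
  ha K h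
theorem idl1_le {w : A} {K : CI A} (h : w ∈ K) {a : A} (ha : a ∈ idl {w}) : a ∈ K :=
  ha K (by rintro _ rfl; exact h)

theorem stab {w j : A} (h : j ∈ idl {w}) {ε : ℝ} (hε : 0 < ε) :
    ∃ δ > 0, ∀ J : CI A, ‖J.π w‖ < δ → ‖J.π j‖ < ε := by
  have h1 : j ∈ limI (comap (fun J : CI A => ‖J.π w‖) (𝓝 0)) id :=
    idl1_le tendsto_comap h
  have h2 := Metric.tendsto_nhds.1 h1 ε hε
  rw [eventually_comap] at h2
  obtain ⟨δ, hδ, h3⟩ := Metric.eventually_nhds_iff.1 h2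
  refine ⟨δ, hδ, fun J hJ => ?_⟩
  have := h3 (y := ‖J.π w‖) (by simpa using hJ) J rfl
  simpa using this

/-- if `c` is within `ε` of `idl {w}`, the same is true for all `J` nearly containing `w`. -/
theorem stab' {w c : A} {ε : ℝ} (h : ‖(idl {w}).π c‖ < ε) :
    ∃ δ > 0, ∀ J : CI A, ‖J.π w‖ < δ → ‖J.π c‖ < ε := by
  obtain ⟨r, h1, h2⟩ := exists_between h
  obtain ⟨j, hj, hn⟩ := (idl {w}).π_dist h1
  obtain ⟨δ, hδ, h3⟩ := stab hj (sub_pos.2 h2)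
  refine ⟨δ, hδ, fun J hJ => ?_⟩
  have h4 : J.π c = J.π (c - j) + J.π j := by rw [← map_add, sub_add_cancel]
  rw [h4]
  have := norm_add_le (J.π (c - j)) (J.π j)
  have := J.π_le (c - j)
  have := h3 J hJ
  linarith

/-- `{u | ∀ a, ∀ t ∈ T, u * a * t ∈ K}` -/
def annL (K : CI A) (T : Set A) : CI A where
  carrier := {u | ∀ a, ∀ t ∈ T, u * a * t ∈ K}
  zero_mem' a t _ := by simp [zero_mem]
  add_mem' ha hb a t ht := by rw [add_mul, add_mul]; exact add_mem (ha a t ht) (hb a t ht)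
  smul_mem' c a ha b t ht := by
    rw [smul_mul_assoc, smul_mul_assoc]; exact SMulMemClass.smul_mem c (ha b t ht)
  closed' := by
    have : {u : A | ∀ a, ∀ t ∈ T, u * a * t ∈ K} =
        ⋂ (a : A) (t : A) (_ : t ∈ T), (fun u => u * a * t) ⁻¹' (K : Set A) := by ext; simp
    rw [this]
    exact isClosed_iInter fun K => isClosed_iInter fun _ => isClosed_iInter fun _ =>
      CI.isClosed _ |>.preimage (by fun_prop)
  mulL' a x hx b t ht := by
    rw [mul_assoc, mul_assoc, ← mul_assoc x]; exact K.mulL a (hx b t ht)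
  mulR' a x hx b t ht := by rw [mul_assoc x]; exact hx _ t ht

def annR (K : CI A) (T : Set A) : CI A where
  carrier := {u | ∀ a, ∀ t ∈ T, t * a * u ∈ K}
  zero_mem' a t _ := by simp [zero_mem]
  add_mem' ha hb a t ht := by rw [mul_add]; exact add_mem (ha a t ht) (hb a t ht)
  smul_mem' c a ha b t ht := by
    rw [mul_smul_comm]; exact SMulMemClass.smul_mem c (ha b t ht)
  closed' := by
    have : {u : A | ∀ a, ∀ t ∈ T, t * a * u ∈ K} =
        ⋂ (a : A) (t : A) (_ : t ∈ T), (fun u => t * a * u) ⁻¹' (K : Set A) := by ext; simp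
    rw [this]
    exact isClosed_iInter fun K => isClosed_iInter fun _ => isClosed_iInter fun _ =>
      CI.isClosed _ |>.preimage (by fun_prop)
  mulL' a x hx b t ht := by
    rw [← mul_assoc, mul_assoc t]; exact hx _ t ht
  mulR' a x hx b t ht := by rw [← mul_assoc]; exact K.mulR a (hx b t ht)

theorem idl_prod {S T : Set A} {K : CI A} (h : ∀ s ∈ S, ∀ t ∈ T, ∀ a, s * a * t ∈ K)
    {u v : A} (hu : u ∈ idl S) (hv : v ∈ idl T) (a : A) : u * a * v ∈ K := by
  have h1 : ∀ s ∈ S, s ∈ annL K (idl T : Set A) := by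
    intro s hs a t ht
    have h2 : t ∈ annR K {s} := idl_le (fun t ht a' s' hs' => by
      rw [Set.mem_singleton_iff.1 hs']; exact h s hs t ht a') ht
    exact h2 a s rfl
  exact idl_le h1 hu a v hv

theorem CI.cube_mem {x : A} (h : x * star x * x ∈ J) : x ∈ J := by
  rw [← J.star_mul_mem, ← J.star_mul_mem]
  have : star (star x * x) * (star x * x) = star x * (x * star x * x) := by
    simp [mul_assoc]
  rw [this]; exact J.mulL _ h

end CIsec
end Glimm

end P1part

section P2part
open Filter Topology



namespace Glimm

section unital
variable {U : Type u} [CStarAlgebra U]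

theorem isUnit_swap {a b : U} {l : ℂ} (hl : l ≠ 0) (h : IsUnit (l • (1 : U) + b * a)) :
    IsUnit (l • (1 : U) + a * b) := by
  obtain ⟨v, hv⟩ := h
  have h1 : (l • (1 : U) + b * a) * ↑v⁻¹ = 1 := by rw [← hv]; simp
  have h2 : ↑v⁻¹ * (l • (1 : U) + b * a) = 1 := by rw [← hv]; simp
  set w : U := ↑v⁻¹
  have h1' : b * a * w = 1 - l • w := by
    rw [eq_sub_iff_add_eq, add_comm, ← h1, add_mul]; simp
  have h2' : w * (b * a) = 1 - l • w := by
    rw [eq_sub_iff_add_eq, add_comm, ← h2, mul_add]; simp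
  refine ⟨⟨l • 1 + a * b, l⁻¹ • (1 - a * w * b), ?_, ?_⟩, rfl⟩
  · have : (l • (1 : U) + a * b) * (1 - a * w * b) =
      l • 1 + a * b - l • (a * w * b) - a * (b * a * w) * b := by
      simp only [add_mul, mul_sub, smul_mul_assoc, one_mul, mul_one, mul_assoc]; abel
    rw [mul_smul_comm, this, h1']
    simp only [mul_sub, sub_mul, mul_one, mul_smul_comm, smul_mul_assoc]
    rw [show l • (1:U) + a * b - l • (a * w * b) - (a * b - l • (a * w * b)) = l • 1 by abel,
      smul_smul, inv_mul_cancel₀ hl, one_smul]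
  · have : (1 - a * w * b) * (l • (1 : U) + a * b) =
      l • 1 + a * b - l • (a * w * b) - a * (w * (b * a)) * b := by
      simp only [mul_add, sub_mul, mul_smul_comm, one_mul, mul_one, mul_assoc, smul_sub]; abel
    rw [smul_mul_assoc, this, h2']
    simp only [mul_sub, sub_mul, mul_one, mul_smul_comm, smul_mul_assoc]
    rw [show l • (1:U) + a * b - l • (a * w * b) - (a * b - l • (a * w * b)) = l • 1 by abel,
      smul_smul, inv_mul_cancel₀ hl, one_smul]

theorem perturb (hd : Dense {a : U | IsUnit a}) (y : U) {l : ℂ} (hl : l ≠ 0) {κ : ℝ}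
    (hκ : 0 < κ) (hκ1 : κ ≤ 1) :
    ∃ C : U, ‖C - 1‖ ≤ κ ∧ IsUnit (l • (1 : U) + C * y) := by
  have hl' : 0 < ‖l‖ := norm_pos_iff.2 hl
  obtain ⟨T, hT, hn⟩ := Metric.mem_closure_iff.1 (hd (l • (1 : U) + y)) (‖l‖ * (κ / 2))
    (by positivity)
  rw [dist_comm, dist_eq_norm] at hn
  set z : U := l⁻¹ • (T - (l • (1 : U) + y)) with hz
  have hzn : ‖z‖ ≤ κ / 2 := by
    rw [hz, norm_smul, norm_inv]
    rw [inv_mul_le_iff₀ hl']; exact hn.le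
  have hz1 : ‖-z‖ < 1 := by rw [norm_neg]; linarith
  set v := Units.oneSub (-z) hz1 with hv
  have hv1 : (v : U) = 1 + z := by simp [hv]
  have hTe : T = l • (1 + z) + y := by
    rw [hz, smul_add, smul_smul, mul_inv_cancel₀ hl, one_smul]; abel
  refine ⟨↑v⁻¹, ?_, ?_⟩
  · set C : U := ↑v⁻¹
    have hC : C * (1 + z) = 1 := by rw [← hv1]; simp [C]
    have h1 : C - 1 = - ((C - 1) * z) - z := by
      have : C = 1 - C * z := by rw [eq_sub_iff_add_eq, ← hC]; noncomm_ring
      calc C - 1 = (1 - C * z) - 1 := by rw [← this]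
        _ = _ := by noncomm_ring
    have h2 : ‖C - 1‖ ≤ ‖C - 1‖ * ‖z‖ + ‖z‖ := by
      calc ‖C - 1‖ = ‖- ((C - 1) * z) - z‖ := by rw [← h1]
        _ ≤ ‖- ((C - 1) * z)‖ + ‖z‖ := norm_sub_le _ _
        _ ≤ _ := by rw [norm_neg]; gcongr; exact norm_mul_le _ _
    have := norm_nonneg (C - 1)
    nlinarith
  · have : l • (1 : U) + ↑v⁻¹ * y = ↑v⁻¹ * T := by
      rw [hTe, mul_add, mul_smul_comm, ← hv1]; simp
    rw [this]
    exact (Units.isUnit _).mul hT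

end unital

section gen
attribute [local instance] instOrd instOrdR
variable {A : Type u} [NonUnitalCStarAlgebra A]

/-- multiplication of an element of the ideal `A` of the unitization -/
noncomputable def Lm (z : Unitization ℂ A) (a : A) : A := z.fst • a + z.snd * a
noncomputable def Rm (a : A) (z : Unitization ℂ A) : A := z.fst • a + a * z.snd

theorem inr_Lm (z : Unitization ℂ A) (a : A) : ((Lm z a : A) : Unitization ℂ A) = z * a := by
  ext <;> simp [Lm]
theorem inr_Rm (z : Unitization ℂ A) (a : A) : ((Rm a z : A) : Unitization ℂ A) = a * z := by
  ext <;> simp [Rm]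
theorem CI.Lm_mem (J : CI A) (z : Unitization ℂ A) {a : A} (h : a ∈ J) : Lm z a ∈ J :=
  add_mem (SMulMemClass.smul_mem _ h) (J.mulL _ h)
theorem CI.Rm_mem (J : CI A) (z : Unitization ℂ A) {a : A} (h : a ∈ J) : Rm a z ∈ J :=
  add_mem (SMulMemClass.smul_mem _ h) (J.mulR _ h)
theorem norm_Lm (z : Unitization ℂ A) (a : A) : ‖Lm z a‖ ≤ ‖z‖ * ‖a‖ := by
  rw [← Unitization.norm_inr (𝕜 := ℂ), inr_Lm, ← Unitization.norm_inr (𝕜 := ℂ) (a := a)]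
  exact norm_mul_le _ _
theorem inr_inj' {a b : A} (h : (a : Unitization ℂ A) = b) : a = b := Unitization.inr_injective h

noncomputable def fg (τ s : ℝ) : ℝ := fcut τ s / max s τ
noncomputable def fx (τ s : ℝ) : ℝ := fg τ s / max s τ
theorem fg_cont {τ : ℝ} (h : 0 < τ) : Continuous (fg τ) :=
  fcut_cont.div (by fun_prop) (fun s => (lt_max_of_lt_right h).ne')
theorem fx_cont {τ : ℝ} (h : 0 < τ) : Continuous (fx τ) :=
  (fg_cont h).div (by fun_prop) (fun s => (lt_max_of_lt_right h).ne')
theorem fg_zero {τ : ℝ} (h : 0 < τ) : fg τ 0 = 0 := by simp [fg, fcut_zero h]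
theorem fx_zero {τ : ℝ} (h : 0 < τ) : fx τ 0 = 0 := by simp [fx, fg_zero h]
theorem fx_mul {τ : ℝ} (h : 0 < τ) (s : ℝ) : fx τ s * s = fg τ s := by
  rcases le_total τ s with h1 | h1
  · have : 0 < s := h.trans_le h1
    simp only [fx, max_eq_left h1]; field_simp
  · have : fg τ s = 0 := by simp [fg, fcut, h1]
    simp [fx, this]
theorem fg_m {τ : ℝ} (h : 0 < τ) (s : ℝ) : fg τ s * fm τ s = fg τ s := by
  rw [fg, div_mul_eq_mul_div, fcut_fm h]
theorem fg_nonneg {τ : ℝ} (h : 0 < τ) (s : ℝ) : 0 ≤ fg τ s := by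
  have : 0 < max s τ := lt_max_of_lt_right h
  unfold fg fcut; positivity
theorem fg_err {τ s : ℝ} (h : 0 < τ) (_ : 0 ≤ s) : s * (1 - fg τ s) ^ 2 ≤ τ := by
  rcases le_total τ s with h1 | h1
  · have h2 : 0 < s := h.trans_le h1
    have : 1 - fg τ s = τ / s := by
      simp only [fg, max_eq_left h1, fcut, max_eq_left (sub_nonneg.2 h1)]; field_simp; ring
    rw [this, div_pow, ← mul_div_assoc, div_le_iff₀ (by positivity)]
    nlinarith [mul_pos h h2]
  · have : fg τ s = 0 := by simp [fg, fcut, h1]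
    rw [this]; simpa using h1

theorem gen_dense (hd : Dense {a : Unitization ℂ A | IsUnit a}) (E : Submodule ℂ A)
    (hE : ∀ x ∈ E, ∀ a, ∀ y ∈ E, x * a * y ∈ E) {x c : A} (hx : x ∈ E) (hc : c ∈ E) {δ ε : ℝ}
    (hδ : 0 < δ) (hε : 0 < ε) : ∃ w ∈ E, ‖w - x‖ < δ ∧ ‖(idl {w}).π c‖ < ε := by
  set a := star x * x with ha
  have hsa : IsSelfAdjoint a := nn_sa x
  set τ := (δ / 4) ^ 2 with hτd
  have hτ : 0 < τ := by positivity
  set x' := x * cfcₙ (fg τ) a with hx'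
  have hx'n : ‖x - x'‖ ≤ δ / 4 :=
    (sq_le_sq₀ (norm_nonneg _) (by positivity)).1
      (norm_x_sub x _ (fg_cont hτ) (fg_zero hτ) (fun s hs => fg_err hτ hs))
  have hx'E : x' ∈ E := by
    have : x' = x * (cfcₙ (fx τ) a * star x) * x := by
      have h1 : fg τ = fun s => fx τ s * id s := by ext s; simp [fx_mul hτ]
      rw [hx', h1, cfcₙ_mul _ _ a (fx_cont hτ).continuousOn (fx_zero hτ), cfcₙ_id ℝ a, ha]
      simp only [mul_assoc]
    rw [this]; exact hE _ hx _ _ hx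
  have hx'm : x' * cfcₙ (fm τ) a = x' := by
    rw [hx', mul_assoc, ← cfcₙ_mul _ _ a (fg_cont hτ).continuousOn (fg_zero hτ)
      (fm_cont hτ).continuousOn]
    simp only [fg_m hτ]
  set M := ‖c‖ + ‖x‖ * (2 * ‖c‖) * ‖c‖ + 1 with hM
  have hMp : 0 < M := by positivity
  set η := δ / (2 * M) with hη
  have hηp : 0 < η := by positivity
  obtain ⟨κ, hκ, hκ1, hκε⟩ : ∃ κ : ℝ, 0 < κ ∧ κ ≤ 1 ∧ κ * (‖x‖ + ‖a‖ * ‖c‖) < ε * τ := by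
    have hp : 0 < ‖x‖ + ‖a‖ * ‖c‖ + 1 := by positivity
    refine ⟨min 1 (ε * τ / (‖x‖ + ‖a‖ * ‖c‖ + 1)), by positivity, min_le_left _ _, ?_⟩
    calc _ ≤ ε * τ / (‖x‖ + ‖a‖ * ‖c‖ + 1) * (‖x‖ + ‖a‖ * ‖c‖) := by gcongr; exact min_le_right _ _
      _ < ε * τ / (‖x‖ + ‖a‖ * ‖c‖ + 1) * (‖x‖ + ‖a‖ * ‖c‖ + 1) := mul_lt_mul_of_pos_left (lt_add_one _) (by positivity)
      _ = ε * τ := by field_simp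
  have hκ0 : (κ : ℂ) ≠ 0 := by exact_mod_cast hκ.ne'
  obtain ⟨C, hC, hunit⟩ := perturb hd (((star c * x : A)) : Unitization ℂ A) hκ0 hκ hκ1
  have hR : IsUnit ((κ : ℂ) • (1 : Unitization ℂ A) + (x : Unitization ℂ A) * (C * (star c : A))) := by
    apply isUnit_swap hκ0
    rw [mul_assoc, ← Unitization.inr_mul]; exact hunit
  set e := Lm C (star c) with he
  set e' := Lm (C - 1) (star c) with he'
  have hee : e = star c + e' := by
    apply inr_inj'
    rw [Unitization.inr_add, inr_Lm, inr_Lm, sub_mul, one_mul]; abel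
  have he'n : ‖e'‖ ≤ κ * ‖c‖ := by
    refine (norm_Lm _ _).trans ?_
    rw [norm_star]; gcongr
  have hen : ‖e‖ ≤ 2 * ‖c‖ := by
    rw [hee]; refine (norm_add_le _ _).trans ?_
    rw [norm_star]; nlinarith [norm_nonneg c]
  set w := x' + (η : ℂ) • ((κ : ℂ) • c + x * e * c) with hw
  have hwE : w ∈ E := E.add_mem hx'E (E.smul_mem _ (E.add_mem (E.smul_mem _ hc) (hE _ hx _ _ hc)))
  have hwn : ‖w - x‖ < δ := by
    have h1 : ‖(κ : ℂ) • c + x * e * c‖ ≤ M := by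
      refine (norm_add_le _ _).trans ?_
      rw [norm_smul, Complex.norm_real, Real.norm_of_nonneg hκ.le]
      have : ‖x * e * c‖ ≤ ‖x‖ * (2 * ‖c‖) * ‖c‖ := norm_mul₃_le.trans (by gcongr)
      have : κ * ‖c‖ ≤ 1 * ‖c‖ := by gcongr
      linarith
    have h2 : w - x = -(x - x') + (η : ℂ) • ((κ : ℂ) • c + x * e * c) := by rw [hw]; abel
    rw [h2]
    calc _ ≤ ‖-(x - x')‖ + ‖(η : ℂ) • ((κ : ℂ) • c + x * e * c)‖ := norm_add_le _ _
      _ ≤ δ / 4 + η * M := by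
        rw [norm_neg, norm_smul, Complex.norm_real, Real.norm_of_nonneg hηp.le]; gcongr
      _ = δ / 4 + δ / 2 := by rw [hη]; field_simp
      _ < δ := by linarith
  refine ⟨w, hwE, hwn, ?_⟩
  set I := idl {w} with hI
  have hwI : w ∈ I := self_mem w
  have hcm : c - c * cfcₙ (fm τ) a ∈ I := by
    obtain ⟨R, hR⟩ := hR
    have h2 : c - c * cfcₙ (fm τ) a = (η : ℂ)⁻¹ • Lm (↑R⁻¹) (w - w * cfcₙ (fm τ) a) := by
      have h3 : (w : Unitization ℂ A) - x' = (η : ℂ) • (↑R * (c : Unitization ℂ A)) := by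
        rw [hR, hw, ← inr_Lm C, ← he, add_mul]
        simp [mul_assoc]
      have h4 : w - w * cfcₙ (fm τ) a = (w - x') - (w - x') * cfcₙ (fm τ) a := by
        rw [sub_mul, hx'm]; abel
      apply inr_inj'
      simp only [Unitization.inr_smul, inr_Lm, h4, Unitization.inr_sub, Unitization.inr_mul]
      rw [h3, smul_mul_assoc, ← smul_sub, mul_smul_comm, smul_smul,
        inv_mul_cancel₀ (by exact_mod_cast hηp.ne'), one_smul, mul_sub, mul_assoc, ← mul_assoc,
        Units.inv_mul, ← mul_assoc (↑R⁻¹ : Unitization ℂ A), Units.inv_mul, one_mul, one_mul]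
    rw [h2]; exact SMulMemClass.smul_mem _ (I.Lm_mem _ (sub_mem hwI (I.mulR _ hwI)))
  have hN : ‖I.π (c * a)‖ ≤ κ * (‖x‖ + ‖a‖ * ‖c‖) := by
    set N := ‖I.π (c * a)‖ with hNd
    set g := a * cfcₙ (fg τ) a * a with hg
    have hg0 : 0 ≤ I.π g := by
      have h2 : 0 ≤ g := by
        have h3 : 0 ≤ cfcₙ (fg τ) a := cfcₙ_nonneg (fun s hs => fg_nonneg hτ s)
        have h4 := star_left_conjugate_nonneg h3 a
        rwa [hsa.star_eq] at h4
      obtain ⟨y, hy⟩ := CStarAlgebra.nonneg_iff_eq_star_mul_self.1 h2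
      rw [hy, map_mul, map_star]; exact star_mul_self_nonneg _
    set f := (κ : ℂ) • star x + a * e' with hf
    have hfn : ‖f‖ ≤ κ * (‖x‖ + ‖a‖ * ‖c‖) := by
      refine (norm_add_le _ _).trans ?_
      rw [norm_smul, Complex.norm_real, Real.norm_of_nonneg hκ.le, norm_star]
      have := (norm_mul_le a e').trans (mul_le_mul_of_nonneg_left he'n (norm_nonneg a))
      linarith
    have h1 : star x * w * a = g + (η : ℂ) • (star (c * a) * (c * a)) + (η : ℂ) • (f * (c * a)) := by
      have h2 : star x * x' = a * cfcₙ (fg τ) a := by rw [hx', ← mul_assoc]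
      rw [hw, mul_add, add_mul, h2, hf, mul_smul_comm, smul_mul_assoc, add_assoc, ← smul_add,
        hee, star_mul, hsa.star_eq, ha]
      congr 2
      simp only [mul_add, add_mul, smul_mul_assoc, mul_smul_comm, mul_assoc]
      abel
    have h2 : I.π g + (η : ℂ) • (star (I.π (c * a)) * I.π (c * a)) =
        -((η : ℂ) • (I.π f * I.π (c * a))) := by
      rw [eq_neg_iff_add_eq_zero]
      have h3 : I.π (star x * w * a) = 0 := I.π_eq_zero.2 (I.mulR _ (I.mulL _ hwI))
      rw [h1] at h3
      simpa only [map_add, map_smul, map_mul, map_star] using h3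
    have h3 : η * (N * N) ≤ η * (‖f‖ * N) := by
      have hp : 0 ≤ (η : ℂ) • (star (I.π (c * a)) * I.π (c * a)) := by
        have : (η : ℂ) • (star (I.π (c * a)) * I.π (c * a)) =
          star (((Real.sqrt η : ℝ) : ℂ) • I.π (c * a)) * (((Real.sqrt η : ℝ) : ℂ) • I.π (c * a)) := by
          rw [star_smul, smul_mul_smul_comm]
          simp only [RCLike.star_def, Complex.conj_ofReal]
          rw [← Complex.ofReal_mul, Real.mul_self_sqrt hηp.le]
        rw [this]; exact star_mul_self_nonneg _
      have h4 := norm_le_add _ _ hp hg0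
      rw [add_comm, h2, norm_neg, norm_smul, norm_smul, CStarRing.norm_star_mul_self,
        Complex.norm_real, Real.norm_of_nonneg hηp.le] at h4
      refine h4.trans ?_
      gcongr
      exact (norm_mul_le _ _).trans (by gcongr; exact I.π_le f)
    have h4 : N * N ≤ ‖f‖ * N := le_of_mul_le_mul_left h3 hηp
    rcases (norm_nonneg (I.π (c * a))).eq_or_lt with h0 | h0
    · rw [hNd, ← h0]; positivity
    · exact (le_of_mul_le_mul_right h4 h0).trans hfn
  have h5 : I.π c = I.π (c * a) * I.π (cfcₙ (fn τ) a) := by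
    rw [← map_mul, mul_assoc, ← mfac a hsa hτ, ← sub_eq_zero, ← map_sub]
    exact I.π_eq_zero.2 hcm
  rw [h5]
  have h6 : ‖cfcₙ (fn τ) a‖ ≤ 1 / τ := norm_cfc_le x _ (by positivity) (fun s hs => fn_bd hτ hs)
  calc _ ≤ ‖I.π (c * a)‖ * ‖I.π (cfcₙ (fn τ) a)‖ := norm_mul_le _ _
    _ ≤ κ * (‖x‖ + ‖a‖ * ‖c‖) * (1 / τ) := by gcongr; exact (I.π_le _).trans h6
    _ < ε * τ * (1 / τ) := by gcongr
    _ = ε := by field_simp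

theorem generic (hd : Dense {a : Unitization ℂ A | IsUnit a}) [TopologicalSpace.SeparableSpace A]
    (E : Submodule ℂ A) (hcl : IsClosed (E : Set A))
    (hE : ∀ x ∈ E, ∀ a, ∀ y ∈ E, x * a * y ∈ E) : ∃ w ∈ E, ∀ c ∈ E, c ∈ idl {w} := by
  have : CompleteSpace E := hcl.completeSpace_coe
  have : SecondCountableTopology A := UniformSpace.secondCountable_of_separable A
  let O : ℕ × ℕ → Set E := fun p =>
    {w | ‖(idl {(w : A)}).π (TopologicalSpace.denseSeq E p.1 : A)‖ < 1 / ((p.2 : ℝ) + 1)}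
  have hO : ∀ p, IsOpen (O p) := by
    intro p
    rw [Metric.isOpen_iff]
    intro w hw
    obtain ⟨δ, hδ, h⟩ := stab' hw
    refine ⟨δ, hδ, fun w' hw' => h _ ?_⟩
    have h1 : ‖(w : A) - w'‖ < δ := by
      rw [Metric.mem_ball, dist_comm, dist_eq_norm] at hw'; exact hw'
    exact ((idl {(w' : A)}).π_le_dist (self_mem _)).trans_lt h1
  have hD : ∀ p, Dense (O p) := by
    intro p
    rw [Metric.dense_iff]
    intro x r hr
    obtain ⟨w, hw, h1, h2⟩ := gen_dense hd E hE x.2 (TopologicalSpace.denseSeq E p.1).2 hr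
      (show 0 < 1 / ((p.2 : ℝ) + 1) by positivity)
    refine ⟨⟨w, hw⟩, ?_, h2⟩
    rw [Metric.mem_ball, dist_eq_norm]; exact h1
  obtain ⟨w, hw⟩ := (dense_iInter_of_isOpen hO hD).nonempty
  rw [Set.mem_iInter] at hw
  refine ⟨w, w.2, fun c hc => ?_⟩
  have h1 : ∀ n, (TopologicalSpace.denseSeq E n : A) ∈ idl {(w : A)} := by
    intro n
    rw [← CI.π_eq_zero, ← norm_eq_zero]
    refine le_antisymm ?_ (norm_nonneg _)
    refine le_of_forall_pos_le_add fun ε hε => ?_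
    obtain ⟨m, hm⟩ := exists_nat_one_div_lt hε
    rw [zero_add]
    exact (hw (n, m)).le.trans hm.le
  have h2 : IsClosed {c : E | (c : A) ∈ idl {(w : A)}} :=
    (CI.isClosed _).preimage continuous_subtype_val
  have h3 : closure (Set.range (TopologicalSpace.denseSeq E)) ⊆ {c : E | (c : A) ∈ idl {(w : A)}} :=
    h2.closure_subset_iff.2 (by rintro _ ⟨n, rfl⟩; exact h1 n)
  exact h3 (TopologicalSpace.denseRange_denseSeq E ⟨c, hc⟩)

end gen
end Glimm

end P2part

section P3part
open Filter Topology



namespace Glimm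

/-- closed hereditary subalgebras -/
structure HS (A : Type u) [NonUnitalCStarAlgebra A] extends NonUnitalStarSubalgebra ℂ A where
  closed' : IsClosed (carrier : Set A)
  her' : ∀ x a y : A, x ∈ carrier → y ∈ carrier → x * a * y ∈ carrier

section HSsec
attribute [local instance] instOrd instOrdR
variable {A : Type u} [NonUnitalCStarAlgebra A]

/-- underlying type -/
abbrev HS.S (D : HS A) : Type u := ↥D.toNonUnitalStarSubalgebra

instance (D : HS A) : IsClosed (D.toNonUnitalStarSubalgebra : Set A) := D.closed'

noncomputable instance (D : HS A) : NonUnitalCStarAlgebra D.S := inferInstance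

theorem HS.her (D : HS A) {x y : A} (a : A) (hx : x ∈ D.toNonUnitalStarSubalgebra)
    (hy : y ∈ D.toNonUnitalStarSubalgebra) : x * a * y ∈ D.toNonUnitalStarSubalgebra :=
  D.her' x a y hx hy

theorem HS.sep (D : HS A) [TopologicalSpace.SeparableSpace A] :
    TopologicalSpace.SeparableSpace D.S := by
  have : SecondCountableTopology A := UniformSpace.secondCountable_of_separable A
  infer_instance

theorem norm_inl_le (l : ℂ) : ‖(Unitization.inl l : Unitization ℂ A)‖ ≤ ‖l‖ := by
  have h : (Unitization.inl l : Unitization ℂ A) = l • 1 := by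
    ext <;> simp
  rw [h, norm_smul]
  have : ‖(1 : Unitization ℂ A)‖ ≤ 1 := by
    exact (norm_one).le
  nlinarith [norm_nonneg l]

theorem HS.sr1 (D : HS A) (hd : Dense {a : Unitization ℂ A | IsUnit a}) :
    Dense {a : Unitization ℂ D.S | IsUnit a} := by
  rw [Metric.dense_iff]
  intro z ε hε
  obtain ⟨l, hl, hl0⟩ : ∃ l : ℂ, l ≠ 0 ∧ ‖l - z.fst‖ < ε / 4 := by
    by_cases h : z.fst = 0
    · refine ⟨(ε / 8 : ℝ), by exact_mod_cast (by positivity), ?_⟩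
      rw [h, sub_zero, Complex.norm_real, Real.norm_of_nonneg (by positivity)]; linarith
    · exact ⟨z.fst, h, by simpa using by positivity⟩
  set d : D.S := z.snd with hdd
  obtain ⟨e, hes, he1, hea, hae⟩ := appr d (show 0 < ε / 8 by positivity)
  obtain ⟨κ, hκ, hκ1, hκε⟩ : ∃ κ : ℝ, 0 < κ ∧ κ ≤ 1 ∧ κ * ‖d‖ < ε / 4 := by
    have hp : 0 < ‖d‖ + 1 := by positivity
    refine ⟨min 1 (ε / 4 / (‖d‖ + 1)), by positivity, min_le_left _ _, ?_⟩
    calc _ ≤ ε / 4 / (‖d‖ + 1) * ‖d‖ := by gcongr; exact min_le_right _ _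
      _ < ε / 4 / (‖d‖ + 1) * (‖d‖ + 1) := mul_lt_mul_of_pos_left (lt_add_one _) (by positivity)
      _ = ε / 4 := by field_simp
  obtain ⟨C, hC, hunit⟩ := perturb hd (((d : A) * e * e : A) : Unitization ℂ A) hl hκ hκ1
  set d' : A := e * (Lm C (d : A)) * e with hd'
  have hd'D : d' ∈ D.toNonUnitalStarSubalgebra := D.her _ e.2 e.2
  have hR : IsUnit (l • (1 : Unitization ℂ A) + (d' : Unitization ℂ A)) := by
    have := isUnit_swap hl (a := ((e : A) : Unitization ℂ A)) (b := C * ((d : A) * e : A)) (by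
      rw [mul_assoc, ← Unitization.inr_mul]; exact hunit)
    rw [hd', Unitization.inr_mul, Unitization.inr_mul, inr_Lm]
    rw [Unitization.inr_mul, ← mul_assoc] at this
    simpa only [mul_assoc] using this
  obtain ⟨V, hV⟩ := hR
  have hV1 : (l • (1 : Unitization ℂ A) + (d' : Unitization ℂ A)) * ↑V⁻¹ = 1 := by rw [← hV]; simp
  have hV2 : ↑V⁻¹ * (l • (1 : Unitization ℂ A) + (d' : Unitization ℂ A)) = 1 := by rw [← hV]; simp
  set W : Unitization ℂ A := ↑V⁻¹
  set α := W.fst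
  set b := W.snd
  have f1 : l * α = 1 := by simpa using congrArg (fun x : Unitization ℂ A => x.fst) hV1
  have s1 : l • b + α • d' + d' * b = 0 := by
    simpa using congrArg (fun x : Unitization ℂ A => x.snd) hV1
  have s2 : α • d' + l • b + b * d' = 0 := by
    simpa using congrArg (fun x : Unitization ℂ A => x.snd) hV2
  have hb1 : l • b = -(α • d' + d' * b) := by
    rw [eq_neg_iff_add_eq_zero, ← s1]; abel
  have hb2 : l • b = -(α • d' + b * d') := by
    rw [eq_neg_iff_add_eq_zero, ← s2]; abel
  have hc : d' * b = l⁻¹ • (-(α • (d' * d') + d' * b * d')) := by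
    have : d' * (l • b) = -(α • (d' * d') + d' * b * d') := by
      rw [hb2, mul_neg, mul_add, mul_smul_comm, mul_assoc d' b d']
    rw [← this, mul_smul_comm, smul_smul, inv_mul_cancel₀ hl, one_smul]
  have hcD : d' * b ∈ D.toNonUnitalStarSubalgebra := by
    rw [hc]
    exact SMulMemClass.smul_mem _ (neg_mem (add_mem (SMulMemClass.smul_mem _ (mul_mem hd'D hd'D))
      (D.her _ hd'D hd'D)))
  have hbD : b ∈ D.toNonUnitalStarSubalgebra := by
    have : b = l⁻¹ • (-(α • d' + d' * b)) := by
      rw [← hb1, smul_smul, inv_mul_cancel₀ hl, one_smul]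
    rw [this]
    exact SMulMemClass.smul_mem _ (neg_mem (add_mem (SMulMemClass.smul_mem _ hd'D) hcD))
  let dd : D.S := ⟨d', hd'D⟩
  let bb : D.S := ⟨b, hbD⟩
  refine ⟨Unitization.inl l + Unitization.inr dd, ?_, ?_⟩
  · rw [Metric.mem_ball, dist_eq_norm]
    have h1 : Unitization.inl l + Unitization.inr dd - z =
        Unitization.inl (l - z.fst) + Unitization.inr (dd - d) := by
      apply Unitization.ext <;> simp [hdd, sub_eq_add_neg]
    rw [h1]
    have h2 : ‖dd - d‖ ≤ ε / 2 := by
      have h3 : ‖d' - (e : A) * d * e‖ ≤ κ * ‖d‖ := by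
        have : d' - (e : A) * d * e = e * Lm (C - 1) (d : A) * e := by
          apply inr_inj'
          rw [hd']
          simp only [Unitization.inr_sub, Unitization.inr_mul, inr_Lm]
          noncomm_ring
        rw [this]
        have he1' : ‖(e : A)‖ ≤ 1 := he1
        calc _ ≤ ‖(e : A)‖ * ‖Lm (C - 1) (d : A)‖ * ‖(e : A)‖ := norm_mul₃_le
          _ ≤ 1 * (κ * ‖d‖) * 1 := by
            gcongr
            exact (norm_Lm _ _).trans (by gcongr; exact le_rfl)
          _ = _ := by ring
      have h4 : ‖(e : A) * d * e - d‖ ≤ ε / 4 := by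
        have : (e : A) * d * e - d = (e * d - d) * e + ((d : A) * e - d) := by noncomm_ring
        rw [this]
        have ha : ‖(e : A) * d - d‖ < ε / 8 := hea
        have hb : ‖(d : A) * e - d‖ < ε / 8 := hae
        have he1' : ‖(e : A)‖ ≤ 1 := he1
        calc _ ≤ ‖(e : A) * d - d‖ * ‖(e : A)‖ + ‖(d : A) * e - d‖ :=
              (norm_add_le _ _).trans (by gcongr; exact norm_mul_le _ _)
          _ ≤ ε / 8 * 1 + ε / 8 := by gcongr
          _ = ε / 4 := by ring
      have h5 : ‖dd - d‖ = ‖(d' - (e : A) * d * e) + ((e : A) * d * e - d)‖ := by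
        rw [sub_add_sub_cancel]; rfl
      rw [h5]
      exact (norm_add_le _ _).trans (by linarith)
    calc _ ≤ ‖(Unitization.inl (l - z.fst) : Unitization ℂ D.S)‖ + ‖((dd - d : D.S) : Unitization ℂ D.S)‖ := norm_add_le _ _
      _ ≤ ‖l - z.fst‖ + ‖dd - d‖ := by
        gcongr
        · exact norm_inl_le _
        · rw [Unitization.norm_inr]
      _ < ε := by linarith
  · have s1' : l • bb + α • dd + dd * bb = 0 := Subtype.ext s1
    have s2' : α • dd + l • bb + bb * dd = 0 := Subtype.ext s2
    refine ⟨⟨_, Unitization.inl α + Unitization.inr bb, ?_, ?_⟩, rfl⟩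
    · apply Unitization.ext
      · simpa using f1
      · simpa using s1'
    · apply Unitization.ext
      · simpa [mul_comm] using f1
      · simpa using s2'

end HSsec
end Glimm

end P3part

section P4part
open Filter Topology



namespace Glimm

section glue
attribute [local instance] instOrd instOrdR
variable {B : Type u} [NonUnitalCStarAlgebra B]

theorem norm_cube_le (x : B) : ‖x‖ ^ 3 ≤ ‖x * star x * x‖ := by
  have h1 : ‖x‖ ^ 4 ≤ ‖x‖ * ‖x * star x * x‖ := by
    have h2 : ‖star (star x * x) * (star x * x)‖ = ‖star x * x‖ * ‖star x * x‖ :=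
      CStarRing.norm_star_mul_self
    rw [(nn_sa x).star_eq, CStarRing.norm_star_mul_self] at h2
    calc ‖x‖ ^ 4 = ‖star x * x * (star x * x)‖ := by rw [h2]; ring
      _ = ‖star x * (x * star x * x)‖ := by simp only [mul_assoc]
      _ ≤ _ := (norm_mul_le _ _).trans (by rw [norm_star])
  rcases (norm_nonneg x).eq_or_lt with h | h
  · rw [← h]; simp
  · have : ‖x‖ * ‖x‖ ^ 3 ≤ ‖x‖ * ‖x * star x * x‖ := by rw [← pow_succ']; exact h1
    exact le_of_mul_le_mul_left this h

theorem CI.norm_Rm (K : CI B) (a : B) (z : Unitization ℂ B) :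
    ‖K.π (Rm a z)‖ ≤ ‖K.π a‖ * ‖z‖ := by
  have key : ∀ r, ‖K.π a‖ < r → ‖K.π (Rm a z)‖ ≤ r * ‖z‖ := by
    intro r hr
    obtain ⟨j, hj, h⟩ := K.π_dist hr
    refine (K.π_le_dist (K.Rm_mem z hj)).trans ?_
    have : Rm a z - Rm j z = Rm (a - j) z := by
      simp only [Rm, smul_sub, sub_mul]; abel
    rw [this, ← Unitization.norm_inr (𝕜 := ℂ), inr_Rm]
    refine (norm_mul_le _ _).trans ?_
    rw [Unitization.norm_inr]; gcongr
  have hc : Tendsto (fun r : ℝ => r * ‖z‖) (𝓝[>] ‖K.π a‖) (𝓝 (‖K.π a‖ * ‖z‖)) :=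
    (Continuous.tendsto (by fun_prop) _).mono_left nhdsWithin_le_nhds
  refine ge_of_tendsto hc ?_
  filter_upwards [self_mem_nhdsWithin] with r hr using key r hr

/-- two-sided annihilator space -/
def annE (p q : B) : Submodule ℂ B where
  carrier := {e | p * e = 0 ∧ e * q = 0}
  add_mem' := by
    rintro a b ⟨h1, h2⟩ ⟨h3, h4⟩
    exact ⟨by rw [mul_add, h1, h3, add_zero], by rw [add_mul, h2, h4, add_zero]⟩
  zero_mem' := by simp
  smul_mem' := by
    rintro c a ⟨h1, h2⟩
    exact ⟨by rw [mul_smul_comm, h1, smul_zero], by rw [smul_mul_assoc, h2, smul_zero]⟩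

theorem glue1 (hd : Dense {a : Unitization ℂ B | IsUnit a}) [TopologicalSpace.SeparableSpace B]
    {x y : B} (hx : x * x = 0) (hy : y * y = 0) {τ : ℝ} (hτ : 0 < τ) :
    ∃ w : B, cfcₙ (fcut τ) (y * star y) * w = 0 ∧ w * cfcₙ (fcut τ) (x * star x) = 0 ∧
      x ∈ idl {w} ∧ y ∈ idl {w} := by
  have sb1 : IsSelfAdjoint (x * star x) := IsSelfAdjoint.mul_star_self x
  have sb2 : IsSelfAdjoint (y * star y) := IsSelfAdjoint.mul_star_self y
  set b1 := x * star x with hb1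
  set b2 := y * star y with hb2
  set c1 := cfcₙ (fcut τ) b1
  set c2 := cfcₙ (fcut τ) b2
  have hc1 : c1 = b1 * (cfcₙ (fn τ) b1 * c1) := by
    rw [← mul_assoc, ← mfac b1 sb1 hτ]; exact (m_mul_cut b1 hτ).symm
  have hc2 : c2 = (c2 * cfcₙ (fn τ) b2) * b2 := by
    rw [mul_assoc, ← mfac' b2 sb2 hτ]; exact (cut_mul_m b2 hτ).symm
  have hsx : star x * star x = 0 := by rw [← star_mul, hx, star_zero]
  have hsy : star y * star y = 0 := by rw [← star_mul, hy, star_zero]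
  have h21 : c2 * (star y * y) = 0 := by
    rw [hc2, mul_assoc, hb2, mul_assoc y, ← mul_assoc (star y), hsy]; simp
  have h11 : (star x * x) * c1 = 0 := by
    rw [hc1, ← mul_assoc, hb1, mul_assoc (star x), ← mul_assoc x, hx]; simp
  obtain ⟨w, hw, hE⟩ := generic hd (annE c2 c1)
    (((isClosed_singleton (x := (0 : B))).preimage (continuous_const.mul continuous_id)).inter
      ((isClosed_singleton (x := (0 : B))).preimage (continuous_id.mul continuous_const)))
    (fun e he a f hf => ⟨by rw [mul_assoc, ← mul_assoc c2, he.1, zero_mul],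
      by rw [mul_assoc, hf.2, mul_zero]⟩)
  set J := idl {w}
  have i1 : ∀ z, (star y * y) * z * (star x * x) ∈ J := fun z => hE _
    ⟨by rw [mul_assoc, ← mul_assoc c2, h21, zero_mul], by rw [mul_assoc, h11, mul_zero]⟩
  have i2 : b2 * (star x * x) ∈ J := by
    have : y * star y * (star x * x) ∈ J := by
      rw [← J.star_mul_mem]
      have h := J.mulL (star (star x * x) * star (star y)) (i1 (star y))
      simpa only [star_mul, star_star, mul_assoc] using h
    exact this
  have i3 : (star y * y) * b1 ∈ J := by
    have h : (star y * y) * x * star x ∈ J := by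
      rw [← J.mul_star_mem]
      have h := J.mulR (star x * star (star y * y)) (i1 x)
      simpa only [star_mul, star_star, mul_assoc] using h
    rwa [mul_assoc] at h
  refine ⟨w, hw.1, hw.2, ?_, ?_⟩
  · rw [← J.star_mul_mem]
    have e1 : star x * x - cfcₙ (fm τ) b2 * (star x * x) ∈ J := by
      refine hE _ ⟨?_, ?_⟩
      · rw [mul_sub, ← mul_assoc c2 (cfcₙ (fm τ) b2), cut_mul_m b2 hτ, sub_self]
      · rw [sub_mul, mul_assoc (cfcₙ (fm τ) b2), h11, mul_zero, sub_zero]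
    have e2 : cfcₙ (fm τ) b2 * (star x * x) ∈ J := by
      rw [mfac' b2 sb2 hτ, mul_assoc]; exact J.mulL _ i2
    simpa using add_mem e1 e2
  · rw [← J.star_mul_mem]
    have e1 : star y * y - (star y * y) * cfcₙ (fm τ) b1 ∈ J := by
      refine hE _ ⟨?_, ?_⟩
      · rw [mul_sub, ← mul_assoc c2 (star y * y), h21, zero_mul, sub_self]
      · rw [sub_mul, mul_assoc _ (cfcₙ (fm τ) b1), m_mul_cut b1 hτ, sub_self]
    have e2 : (star y * y) * cfcₙ (fm τ) b1 ∈ J := by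
      rw [mfac b1 sb1 hτ, ← mul_assoc]; exact J.mulR _ i3
    simpa using add_mem e1 e2

theorem polar {U : Type u} [CStarAlgebra U] {T : U} (hT : IsUnit T) :
    ∃ u s : U, star u * u = 1 ∧ u * star u = 1 ∧ star T * T * star u = s * star T ∧
      ‖s‖ = ‖T‖ := by
  have h0 : 0 ≤ star T * T := star_mul_self_nonneg T
  set s := CFC.sqrt (star T * T) with hs
  have hss : s * s = star T * T := CFC.sqrt_mul_sqrt_self _ h0
  have hsa : star s = s := (IsSelfAdjoint.of_nonneg (CFC.sqrt_nonneg _)).star_eq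
  have hu : IsUnit s := (CFC.isUnit_sqrt_iff _ h0).2 (hT.star.mul hT)
  obtain ⟨v, hv⟩ := hu
  obtain ⟨t, ht⟩ := hT
  set r : U := ↑v⁻¹ with hr
  have r1 : r * s = 1 := by rw [← hv]; simp [hr]
  have r2 : s * r = 1 := by rw [← hv]; simp [hr]
  have hra : star r = r := by
    have h1 : s * star r = 1 := by
      have := congrArg star r1; rwa [star_mul, hsa, star_one] at this
    calc star r = r * s * star r := by rw [r1, one_mul]
      _ = r := by rw [mul_assoc, h1, mul_one]
  have e1 : star (T * r) * (T * r) = 1 := by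
    rw [star_mul, hra]
    calc r * star T * (T * r) = r * (star T * T) * r := by simp only [mul_assoc]
      _ = (r * s) * (s * r) := by rw [← hss]; simp only [mul_assoc]
      _ = 1 := by rw [r1, r2, one_mul]
  refine ⟨T * r, s, e1, ?_, ?_, ?_⟩
  · have hun : IsUnit (T * r) := by
      rw [← ht, hr]; exact (t * v⁻¹).isUnit
    obtain ⟨q, hq⟩ := hun
    have : star (T * r) = ↑q⁻¹ := by
      rw [← hq] at e1 ⊢
      exact (Units.inv_eq_of_mul_eq_one_left e1).symm
    rw [this, ← hq]; simp
  · rw [star_mul, hra, ← hss]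
    calc s * s * (r * star T) = s * (s * r) * star T := by simp only [mul_assoc]
      _ = _ := by rw [r2, mul_one]
  · have h1 : ‖s‖ * ‖s‖ = ‖T‖ * ‖T‖ := by
      rw [← CStarRing.norm_star_mul_self, hsa, hss, CStarRing.norm_star_mul_self]
    exact (mul_self_inj (norm_nonneg _) (norm_nonneg _)).1 h1

theorem glue2 (hd : Dense {a : Unitization ℂ B | IsUnit a}) {w v1 v2 : B}
    (h2 : star v2 * v2 * w = 0) (h1 : w * (star v1 * v1) = 0) {σ ζ : ℝ} (hσ : 0 < σ)
    (hζ : 0 < ζ) : ∃ b' : B, cfcₙ (fcut σ) (star w * w) * b' = 0 ∧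
      ∀ K : CI B, b' ∈ K → ‖K.π (star v1 * v1)‖ ≤ ζ ∧ ‖K.π (star v2 * v2)‖ ≤ ζ := by
  set b1 := star v1 * v1 with hb1
  set b2 := star v2 * v2 with hb2
  set p := star w * w with hp
  have sp : IsSelfAdjoint p := nn_sa w
  obtain ⟨ρ, hρ, hρ1, hρζ⟩ : ∃ ρ : ℝ, 0 < ρ ∧ ρ ≤ 1 ∧
      3 * (1 / σ * (ρ * ((3 * ‖w‖ + 2) * ‖b2‖))) ≤ ζ := by
    have hP : 0 < (3 * ‖w‖ + 2) * ‖b2‖ + 1 := by positivity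
    refine ⟨min 1 (ζ * σ / 3 / ((3 * ‖w‖ + 2) * ‖b2‖ + 1)), by positivity, min_le_left _ _, ?_⟩
    calc _ ≤ 3 * (1 / σ * (ζ * σ / 3 / ((3 * ‖w‖ + 2) * ‖b2‖ + 1) *
            ((3 * ‖w‖ + 2) * ‖b2‖ + 1))) := by
          gcongr
          · exact min_le_right _ _
          · linarith
      _ = ζ := by field_simp
  obtain ⟨T, hT, hTw⟩ := Metric.mem_closure_iff.1 (hd (w : Unitization ℂ B)) ρ hρ
  rw [dist_comm, dist_eq_norm] at hTw
  obtain ⟨u, s, u1, u2, hTu, hs⟩ := polar hT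
  have hun : ‖u‖ ≤ 1 := by
    have h3 : ‖u‖ * ‖u‖ = 1 := by
      rw [← CStarRing.norm_star_mul_self, u1]; exact norm_one
    nlinarith [norm_nonneg u]
  have hsun : ‖star u‖ ≤ 1 := by rwa [norm_star]
  have hTn : ‖T‖ ≤ ‖w‖ + 1 := by
    have : ‖T‖ ≤ ‖T - (w : Unitization ℂ B)‖ + ‖(w : Unitization ℂ B)‖ := by
      simpa using norm_add_le (T - (w : Unitization ℂ B)) w
    rw [Unitization.norm_inr] at this; linarith
  set r := Rm v2 u with hr
  set c2 := star r * r with hc2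
  have hc2' : (c2 : Unitization ℂ B) = star u * b2 * u := by
    rw [hc2, Unitization.inr_mul, Unitization.inr_star, hr, inr_Rm, hb2, star_mul]
    simp only [Unitization.inr_mul, Unitization.inr_star, mul_assoc]
  have hv2 : v2 = Rm r (star u) := by
    apply inr_inj'
    rw [inr_Rm, hr, inr_Rm, mul_assoc, u2, mul_one]
  have hwb2 : star w * b2 = 0 := by
    have := congrArg star h2
    rwa [star_mul, (nn_sa v2).star_eq, star_zero] at this
  have hpb1 : p * b1 = 0 := by rw [hp, mul_assoc, h1, mul_zero]
  have hpc2 : ‖p * c2‖ ≤ ρ * ((3 * ‖w‖ + 2) * ‖b2‖) := by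
    rw [← Unitization.norm_inr (𝕜 := ℂ), Unitization.inr_mul, hc2']
    have e1 : ((p : B) : Unitization ℂ B) * (star u * b2 * u) =
        (star (w : Unitization ℂ B) * (w - T) + star ((w : Unitization ℂ B) - T) * T) *
          (star u * b2 * u) + s * (star (T - (w : Unitization ℂ B)) * b2) * u := by
      have e2 : star (T - (w : Unitization ℂ B)) * (b2 : Unitization ℂ B) = star T * b2 := by
        rw [star_sub, sub_mul, ← Unitization.inr_star, ← Unitization.inr_mul, hwb2]; simp
      have e3 : s * (star T * (b2 : Unitization ℂ B)) * u = star T * T * (star u * b2 * u) := by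
        rw [← mul_assoc s, ← hTu]; simp only [mul_assoc]
      rw [e2, e3, ← add_mul, hp, Unitization.inr_mul, Unitization.inr_star]
      congr 1
      rw [star_sub]; noncomm_ring
    rw [e1]
    have hTw' : ‖(w : Unitization ℂ B) - T‖ ≤ ρ := by rw [norm_sub_rev]; exact hTw.le
    have hwn : ‖(w : Unitization ℂ B)‖ = ‖w‖ := Unitization.norm_inr _
    have hbn : ‖(b2 : Unitization ℂ B)‖ = ‖b2‖ := Unitization.norm_inr _
    have n1 : ‖star u * (b2 : Unitization ℂ B) * u‖ ≤ 1 * ‖b2‖ * 1 :=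
      norm_mul₃_le.trans (by rw [hbn]; gcongr)
    have n2 : ‖star (w : Unitization ℂ B) * (w - T)‖ ≤ ‖w‖ * ρ :=
      (norm_mul_le _ _).trans (by rw [norm_star, hwn]; gcongr)
    have n3 : ‖star ((w : Unitization ℂ B) - T) * T‖ ≤ ρ * (‖w‖ + 1) :=
      (norm_mul_le _ _).trans (by rw [norm_star]; gcongr)
    have n4 : ‖s * (star (T - (w : Unitization ℂ B)) * b2) * u‖ ≤ (‖w‖ + 1) * (ρ * ‖b2‖) * 1 := by
      refine norm_mul₃_le.trans ?_
      rw [hs]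
      gcongr
      refine (norm_mul_le _ _).trans ?_
      rw [norm_star, hbn]; gcongr
    calc _ ≤ (‖w‖ * ρ + ρ * (‖w‖ + 1)) * (1 * ‖b2‖ * 1) + (‖w‖ + 1) * (ρ * ‖b2‖) * 1 := by
          refine (norm_add_le _ _).trans (add_le_add ((norm_mul_le _ _).trans ?_) n4)
          gcongr
          exact (norm_add_le _ _).trans (add_le_add n2 n3)
      _ = _ := by ring
  set b := b1 + c2 with hb
  have sb : star b = b := by rw [hb, star_add, (nn_sa v1).star_eq, (nn_sa r).star_eq]
  set m := cfcₙ (fm σ) p with hm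
  have sm : star m = m := (cfcₙ_predicate (fm σ) p : IsSelfAdjoint _).star_eq
  have hmn : ‖m‖ ≤ 1 := norm_cfc_le w _ zero_le_one (fun t ht => by
    rw [abs_of_nonneg (fm_mem hσ ht).1]; exact (fm_mem hσ ht).2)
  have hmb : ‖m * b‖ ≤ 1 / σ * (ρ * ((3 * ‖w‖ + 2) * ‖b2‖)) := by
    rw [hm, mfac' p sp hσ, mul_assoc, hb, mul_add, hpb1, zero_add]
    refine (norm_mul_le _ _).trans ?_
    gcongr
    exact norm_cfc_le w _ (by positivity) (fun t ht => fn_bd hσ ht)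
  have hbm : ‖b * m‖ ≤ 1 / σ * (ρ * ((3 * ‖w‖ + 2) * ‖b2‖)) := by
    have : b * m = star (m * b) := by rw [star_mul, sm, sb]
    rw [this, norm_star]; exact hmb
  have hmbm : ‖m * b * m‖ ≤ 1 / σ * (ρ * ((3 * ‖w‖ + 2) * ‖b2‖)) := by
    refine (norm_mul_le _ _).trans ?_
    nlinarith [norm_nonneg (m * b), norm_nonneg m]
  refine ⟨b - m * b - b * m + m * b * m, ?_, ?_⟩
  · have h3 := cut_mul_m p hσ
    rw [← hm] at h3
    simp only [mul_add, mul_sub, ← mul_assoc, h3]; abel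
  · intro K hK
    have hbK : ‖K.π b‖ ≤ ζ := by
      refine (K.π_le_dist hK).trans ?_
      have : b - (b - m * b - b * m + m * b * m) = m * b + b * m - m * b * m := by abel
      rw [this]
      have := (norm_sub_le (m * b + b * m) (m * b * m)).trans
        (add_le_add_left (norm_add_le (m * b) (b * m)) _)
      linarith
    have p1 : 0 ≤ K.π b1 := by rw [hb1, map_mul, map_star]; exact star_mul_self_nonneg _
    have p2 : 0 ≤ K.π c2 := by rw [hc2, map_mul, map_star]; exact star_mul_self_nonneg _
    rw [hb, map_add] at hbK
    refine ⟨(norm_le_add _ _ p1 p2).trans hbK, ?_⟩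
    have h4 : ‖K.π c2‖ ≤ ζ := (norm_le_add _ _ p2 p1).trans (by rwa [add_comm])
    rw [hc2, map_mul, map_star, CStarRing.norm_star_mul_self] at h4
    rw [hb2, map_mul, map_star, CStarRing.norm_star_mul_self]
    have h5 : ‖K.π v2‖ ≤ ‖K.π r‖ := by
      rw [hv2]
      refine (K.norm_Rm r (star u)).trans ?_
      nlinarith [norm_nonneg (K.π r)]
    exact (mul_self_le_mul_self (norm_nonneg _) h5).trans h4

/-- bi-annihilator space -/
def biE (b p : B) : Submodule ℂ B where
  carrier := {e | (∀ r, p * r = 0 → e * r = 0) ∧ (∀ l, l * b = 0 → l * e = 0)}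
  add_mem' := by
    rintro a b ⟨h1, h2⟩ ⟨h3, h4⟩
    exact ⟨fun r hr => by rw [add_mul, h1 r hr, h3 r hr, add_zero],
      fun l hl => by rw [mul_add, h2 l hl, h4 l hl, add_zero]⟩
  zero_mem' := by simp
  smul_mem' := by
    rintro c a ⟨h1, h2⟩
    exact ⟨fun r hr => by rw [smul_mul_assoc, h1 r hr, smul_zero],
      fun l hl => by rw [mul_smul_comm, h2 l hl, smul_zero]⟩

theorem biE_mem (b p z : B) : b * z * p ∈ biE b p :=
  ⟨fun r hr => by rw [mul_assoc, hr, mul_zero], fun l hl => by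
    rw [mul_assoc, ← mul_assoc, hl, zero_mul]⟩

theorem biE_closed (b p : B) : IsClosed (biE b p : Set B) := by
  have h : (biE b p : Set B) = {e | ∀ r, p * r = 0 → e * r = 0} ∩ {e | ∀ l, l * b = 0 → l * e = 0} :=
    rfl
  rw [h]
  refine IsClosed.inter ?_ ?_
  · simp only [Set.ofPred_forall]
    refine isClosed_iInter fun r => isClosed_iInter fun _ => ?_
    exact isClosed_eq (by fun_prop) continuous_const
  · simp only [Set.ofPred_forall]
    refine isClosed_iInter fun r => isClosed_iInter fun _ => ?_
    exact isClosed_eq (by fun_prop) continuous_const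

theorem biE_mul (b p : B) : ∀ x ∈ biE b p, ∀ a, ∀ y ∈ biE b p, x * a * y ∈ biE b p :=
  fun x hx a y hy => ⟨fun r hr => by rw [mul_assoc, hy.1 r hr, mul_zero],
    fun l hl => by rw [mul_assoc, ← mul_assoc, hx.2 l hl, zero_mul]⟩

/-- generic element of the bi-annihilator space -/
theorem biE_generic (hd : Dense {a : Unitization ℂ B | IsUnit a})
    [TopologicalSpace.SeparableSpace B] (b p : B) :
    ∃ w ∈ biE b p, ∀ u ∈ idl {b}, ∀ v ∈ idl {p}, ∀ z, u * z * v ∈ idl {w} := by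
  obtain ⟨w, hw, h⟩ := generic hd (biE b p) (biE_closed b p) (biE_mul b p)
  refine ⟨w, hw, fun u hu v hv z => idl_prod ?_ hu hv z⟩
  rintro _ rfl _ rfl a
  exact h _ (biE_mem _ _ a)

theorem glue (hd : Dense {a : Unitization ℂ B | IsUnit a}) [TopologicalSpace.SeparableSpace B]
    {x y : B} (hx : x * x = 0) (hy : y * y = 0) {ε : ℝ} (hε : 0 < ε) :
    ∃ w : B, w * w = 0 ∧ ‖(idl {w}).π x‖ < ε ∧ ‖(idl {w}).π y‖ < ε := by
  set M := ‖x‖ + ‖y‖ + 1 with hM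
  have hM1 : 0 < M := by positivity
  obtain ⟨θ, hθ, hθ1, hθM⟩ : ∃ θ : ℝ, 0 < θ ∧ θ ≤ 1 ∧ 2 * θ * M ^ 2 < ε ^ 3 := by
    refine ⟨min 1 (ε ^ 3 / (4 * M ^ 2)), by positivity, min_le_left _ _, ?_⟩
    calc _ ≤ 2 * (ε ^ 3 / (4 * M ^ 2)) * M ^ 2 := by gcongr; exact min_le_right _ _
      _ = ε ^ 3 / 2 := by field_simp; norm_num
      _ < _ := by have := pow_pos hε 3; linarith
  have hτ : 0 < θ ^ 2 / 2 := by positivity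
  obtain ⟨w, hw2, hw1, hxw, hyw⟩ := glue1 hd hx hy hτ
  obtain ⟨δ1, hδ1, hst1⟩ := stab hxw hθ
  obtain ⟨δ2, hδ2, hst2⟩ := stab hyw hθ
  set δ := min δ1 δ2
  have hδ : 0 < δ := lt_min hδ1 hδ2
  have hσ : 0 < δ ^ 2 / 2 := by positivity
  have pos : ∀ v : B, ∃ c, cfcₙ (fcut (θ ^ 2 / 2)) (v * star v) = star c * c := fun v => by
    have : 0 ≤ cfcₙ (fcut (θ ^ 2 / 2)) (v * star v) :=
      cfcₙ_nonneg (fun s hs => le_max_right _ _)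
    exact CStarAlgebra.nonneg_iff_eq_star_mul_self.1 this
  obtain ⟨v1, hv1⟩ := pos x
  obtain ⟨v2, hv2⟩ := pos y
  rw [hv2] at hw2; rw [hv1] at hw1
  obtain ⟨b, hb, hK⟩ := glue2 hd hw2 hw1 hσ (show 0 < θ ^ 2 / 4 by positivity)
  rw [← hv1, ← hv2] at hK
  set p := cfcₙ (fcut (δ ^ 2 / 2)) (star w * w) with hp
  obtain ⟨w', hw', hgen⟩ := biE_generic hd b p
  -- b side
  have side1 : ∀ v : B, ‖(idl {b}).π (cfcₙ (fcut (θ ^ 2 / 2)) (v * star v))‖ ≤ θ ^ 2 / 4 →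
      ‖(idl {b}).π v‖ < θ := by
    intro v hv
    have h1 := norm_sub_cut (star v) hτ
    rw [star_star] at h1
    have h2 : ‖(idl {b}).π (v * star v)‖ ≤ θ ^ 2 / 2 + θ ^ 2 / 4 := by
      have h3 : (idl {b}).π (v * star v) = (idl {b}).π (v * star v -
        cfcₙ (fcut (θ ^ 2 / 2)) (v * star v)) + (idl {b}).π (cfcₙ (fcut (θ ^ 2 / 2)) (v * star v)) := by
        rw [← map_add, sub_add_cancel]
      rw [h3]
      exact (norm_add_le _ _).trans (add_le_add (((idl {b}).π_le _).trans h1) hv)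
    rw [map_mul, map_star, CStarRing.norm_self_mul_star] at h2
    have := norm_nonneg ((idl {b}).π v)
    nlinarith
  have hpw : ‖(idl {p}).π w‖ < δ := by
    have h1 := norm_sub_cut w hσ
    have h2 : ‖(idl {p}).π (star w * w)‖ ≤ δ ^ 2 / 2 := ((idl {p}).π_le_dist (self_mem p)).trans h1
    rw [map_mul, map_star, CStarRing.norm_star_mul_self] at h2
    have := norm_nonneg ((idl {p}).π w)
    nlinarith
  have fin : ∀ v : B, ‖v‖ ≤ M - 1 → ‖(idl {b}).π v‖ < θ → ‖(idl {p}).π v‖ < θ →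
      ‖(idl {w'}).π v‖ < ε := by
    intro v hvM h1 h2
    obtain ⟨j, hj, hj'⟩ := (idl {b}).π_dist h1
    obtain ⟨k, hk, hk'⟩ := (idl {p}).π_dist h2
    have h3 := hgen j hj k hk (star v)
    have h4 : ‖(idl {w'}).π v‖ ^ 3 ≤ ‖v * star v * v - j * star v * k‖ := by
      refine (norm_cube_le _).trans ?_
      rw [← map_star, ← map_mul, ← map_mul]
      exact (idl {w'}).π_le_dist h3
    have h5 : v * star v * v - j * star v * k = (v - j) * star v * v + j * star v * (v - k) := by
      noncomm_ring
    have hjn : ‖j‖ ≤ M := by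
      have : ‖j‖ ≤ ‖v‖ + ‖v - j‖ := by simpa using norm_sub_le v (v - j)
      linarith
    have h6 : ‖v * star v * v - j * star v * k‖ ≤ θ * M * M + M * M * θ := by
      rw [h5]
      refine (norm_add_le _ _).trans (add_le_add (norm_mul₃_le.trans ?_) (norm_mul₃_le.trans ?_))
      · rw [norm_star]; gcongr <;> linarith
      · rw [norm_star]; gcongr; linarith
    exact lt_of_pow_lt_pow_left₀ 3 hε.le (by linarith)
  refine ⟨w', hw'.2 _ (hw'.1 _ hb), ?_, ?_⟩
  · exact fin x (by rw [hM]; linarith [norm_nonneg y]) (side1 x (hK _ (self_mem b)).1)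
      (hst1 _ (hpw.trans_le (min_le_left _ _)))
  · exact fin y (by rw [hM]; linarith [norm_nonneg x]) (side1 y (hK _ (self_mem b)).2)
      (hst2 _ (hpw.trans_le (min_le_right _ _)))

end glue
end Glimm

end P4part

section P5part
open Filter Topology



namespace Glimm

section locsec
attribute [local instance] instOrd instOrdR
variable {A : Type u} [NonUnitalCStarAlgebra A]

/-- preimage of a closed ideal -/
def CI.comap {B : Type u} [NonUnitalCStarAlgebra B] (φ : B →⋆ₙₐ[ℂ] A) (hφ : Continuous φ)
    (K : CI A) : CI B where
  carrier := {b | φ b ∈ K}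
  zero_mem' := by simp [zero_mem]
  add_mem' ha hb := by simp only [Set.mem_ofPred_eq, map_add] at *; exact add_mem ha hb
  smul_mem' c a ha := by
    simp only [Set.mem_ofPred_eq, map_smul] at *; exact SMulMemClass.smul_mem c ha
  closed' := K.isClosed.preimage hφ
  mulL' a x hx := by
    simp only [Set.mem_ofPred_eq, map_mul] at *; exact K.mulL _ hx
  mulR' a x hx := by
    simp only [Set.mem_ofPred_eq, map_mul] at *; exact K.mulR _ hx

/-- the inclusion -/
def HS.inc (D : HS A) : D.S →⋆ₙₐ[ℂ] A := NonUnitalStarSubalgebraClass.subtype D.toNonUnitalStarSubalgebra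

theorem HS.inc_apply (D : HS A) (d : D.S) : D.inc d = (d : A) := rfl

theorem HS.transfer (D : HS A) {w x : D.S} {δ : ℝ} (h : ‖(idl {w}).π x‖ < δ) :
    ‖(idl {(w : A)}).π (x : A)‖ < δ := by
  obtain ⟨j, hj, hn⟩ := (idl {w}).π_dist h
  have hc : Continuous D.inc := continuous_subtype_val
  have : (j : A) ∈ idl {(w : A)} := by
    have h1 : w ∈ (idl {(w : A)}).comap D.inc hc := self_mem (w : A)
    exact idl1_le h1 hj
  exact ((idl {(w : A)}).π_le_dist this).trans_lt hn

/-- full hereditary subalgebra -/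
def HS.Full (D : HS A) : Prop :=
  ∀ J : CI A, (∀ d ∈ D.toNonUnitalStarSubalgebra, d ∈ J) → ∀ a, a ∈ J

theorem HS.sqz (D : HS A) (hd : Dense {a : Unitization ℂ A | IsUnit a})
    [TopologicalSpace.SeparableSpace A]
    (hsq : ∀ J : CI A, (∀ w ∈ D.toNonUnitalStarSubalgebra, w * w = 0 → w ∈ J) → ∀ a, a ∈ J)
    (c : A) {ε : ℝ} (hε : 0 < ε) :
    ∃ w ∈ D.toNonUnitalStarSubalgebra, w * w = 0 ∧ ‖(idl {w}).π c‖ < ε := by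
  have := D.sep
  let R : Set A := {c | ∀ ε > (0 : ℝ), ∃ w ∈ D.toNonUnitalStarSubalgebra, w * w = 0 ∧
    ‖(idl {w}).π c‖ < ε}
  have bd : ∀ (c c' : A) (M : ℝ), 0 < M → (∀ K : CI A, ‖K.π c'‖ ≤ M * ‖K.π c‖) → c ∈ R → c' ∈ R := by
    intro c c' M hM h hc ε hε
    obtain ⟨w, h1, h2, h3⟩ := hc (ε / M) (by positivity)
    refine ⟨w, h1, h2, (h _).trans_lt ?_⟩
    rwa [lt_div_iff₀' hM] at h3
  let J : CI A :=
    { carrier := R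
      zero_mem' := fun ε hε => ⟨0, zero_mem _, by simp, by simpa using hε⟩
      add_mem' := by
        intro a b ha hb ε hε
        obtain ⟨w1, h1, h2, h3⟩ := ha (ε / 2) (by positivity)
        obtain ⟨w2, h4, h5, h6⟩ := hb (ε / 2) (by positivity)
        obtain ⟨δ1, hδ1, hst1⟩ := stab' h3
        obtain ⟨δ2, hδ2, hst2⟩ := stab' h6
        obtain ⟨w, hw, hx, hy⟩ := glue (D.sr1 hd) (x := ⟨w1, h1⟩) (y := ⟨w2, h4⟩) (Subtype.ext h2)
          (Subtype.ext h5) (lt_min hδ1 hδ2)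
        refine ⟨w, w.2, congrArg Subtype.val hw, ?_⟩
        have e1 := hst1 _ ((D.transfer hx).trans_le (min_le_left _ _))
        have e2 := hst2 _ ((D.transfer hy).trans_le (min_le_right _ _))
        rw [map_add]
        exact (norm_add_le _ _).trans_lt (by linarith)
      smul_mem' := by
        intro c a ha
        refine bd a _ (‖c‖ + 1) (by positivity) (fun K => ?_) ha
        rw [map_smul, norm_smul]; gcongr; linarith
      closed' := by
        refine isClosed_of_closure_subset fun a ha ε hε => ?_
        obtain ⟨b, hb, hn⟩ := Metric.mem_closure_iff.1 ha (ε / 2) (by positivity)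
        obtain ⟨w, h1, h2, h3⟩ := hb (ε / 2) (by positivity)
        refine ⟨w, h1, h2, ?_⟩
        have : a = (a - b) + b := by abel
        rw [this, map_add]
        rw [dist_eq_norm] at hn
        have := (idl {w}).π_le (a - b)
        exact (norm_add_le _ _).trans_lt (by linarith)
      mulL' := by
        intro b a ha
        refine bd a _ (‖b‖ + 1) (by positivity) (fun K => ?_) ha
        rw [map_mul]
        refine (norm_mul_le _ _).trans ?_
        gcongr
        exact (K.π_le b).trans (by linarith)
      mulR' := by
        intro b a ha
        refine bd a _ (‖b‖ + 1) (by positivity) (fun K => ?_) ha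
        rw [map_mul, mul_comm (‖b‖ + 1)]
        refine (norm_mul_le _ _).trans ?_
        gcongr
        exact (K.π_le b).trans (by linarith) }
  refine hsq J (fun w hw h2 ε hε => ⟨w, hw, h2, ?_⟩) c ε hε
  rw [(idl {w}).π_eq_zero.2 (self_mem w)]; simpa using hε

theorem exists_max (I : CI A) (h : A) {r : ℝ} (hI : r ≤ ‖I.π h‖) :
    ∃ P : CI A, I ≤ P ∧ r ≤ ‖P.π h‖ ∧ ∀ K : CI A, P ≤ K → r ≤ ‖K.π h‖ → K ≤ P := by
  obtain ⟨P, hIP, hP⟩ := zorn_le_nonempty₀ {K : CI A | r ≤ ‖K.π h‖} (by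
    intro c hc hch y hy
    have : Nonempty c := ⟨⟨y, hy⟩⟩
    have : IsDirected c (· ≤ ·) := ⟨fun a b => by
      rcases hch.total a.2 b.2 with h | h
      · exact ⟨b, h, le_rfl⟩
      · exact ⟨a, le_rfl, h⟩⟩
    have hNB : (atTop : Filter c).NeBot := atTop_neBot
    refine ⟨limI (atTop : Filter c) (fun i => i.1), ?_, ?_⟩
    · by_contra hlt
      simp only [Set.mem_ofPred_eq, not_le] at hlt
      obtain ⟨j, hj, hn⟩ := (limI (atTop : Filter c) (fun i => i.1)).π_dist hlt
      rw [mem_limI] at hj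
      have h1 := (hj.const_add ‖h - j‖).eventually_lt_const (show ‖h - j‖ + 0 < r by simpa using hn)
      obtain ⟨i, hi⟩ := h1.exists
      have h2 : r ≤ ‖(i : CI A).π h‖ := hc i.2
      have h3 : (i : CI A).π h = (i : CI A).π (h - j) + (i : CI A).π j := by
        rw [← map_add, sub_add_cancel]
      rw [h3] at h2
      have h4 := norm_add_le ((i : CI A).π (h - j)) ((i : CI A).π j)
      have h5 := (i : CI A).π_le (h - j)
      linarith
    · intro z hz a ha
      show a ∈ limI (atTop : Filter c) (fun i => i.1)
      rw [mem_limI]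
      refine tendsto_const_nhds.congr' ?_
      filter_upwards [eventually_ge_atTop (⟨z, hz⟩ : c)] with i hi
      have : a ∈ (i : CI A) := hi ha
      rw [(i : CI A).π_eq_zero.2 this, norm_zero]) I hI
  exact ⟨P, hIP, hP.prop, fun K hK hr => hP.le_of_ge hr hK⟩

theorem max_prime {P : CI A} {y : A} {r : ℝ} (hr0 : 0 < r) (hr : r ≤ ‖P.π (star y * y)‖)
    (hmax : ∀ K : CI A, P ≤ K → r ≤ ‖K.π (star y * y)‖ → K ≤ P) {a b : A}
    (hab : ∀ z, a * z * b ∈ P) : a ∈ P ∨ b ∈ P := by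
  by_contra hcon
  rw [not_or] at hcon
  have aux : ∀ a, a ∉ P → ‖(idl ((P : Set A) ∪ {a})).π (star y * y)‖ < r := by
    intro a ha
    by_contra hlt
    rw [not_lt] at hlt
    have := hmax _ (fun x hx => mem_idl (Or.inl hx)) hlt
    exact ha (this (mem_idl (Or.inr rfl)))
  have h1 := aux a hcon.1
  have h2 := aux b hcon.2
  obtain ⟨ρ, hρ, hρr⟩ := exists_between (max_lt (max_lt h1 h2) hr0)
  have hρ0 : 0 < ρ := (le_max_right _ _).trans_lt hρ
  have k1 := CI.cut_mem (idl ((P : Set A) ∪ {a})) y hρ0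
    ((le_max_left _ _).trans ((le_max_left _ _).trans hρ.le))
  have k2 := CI.cut_mem (idl ((P : Set A) ∪ {b})) y hρ0
    ((le_max_right _ _).trans ((le_max_left _ _).trans hρ.le))
  set k := cfcₙ (fcut ρ) (star y * y) with hk
  have sk : star k = k := (cfcₙ_predicate (fcut ρ) _ : IsSelfAdjoint _).star_eq
  have h3 : k * k * k ∈ P := by
    refine idl_prod ?_ k1 k2 k
    rintro s (hs | rfl) t (ht | rfl) z
    · exact P.mulL _ ht
    · exact P.mulR _ (P.mulR _ hs)
    · exact P.mulL _ ht
    · exact hab z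
  have h4 : k ∈ P := P.cube_mem (by rwa [sk])
  have h5 := (P.π_le_dist h4).trans (norm_sub_cut y hρ0)
  linarith

theorem ge_or_le_conn {Q : Type u} [NonUnitalCStarAlgebra Q] {d h : Q} (h0 : 0 ≤ h) (hne : h ≠ 0)
    (hcov : ∀ t : ℝ, 0 ≤ d - (t : ℂ) • h ∨ d - (t : ℂ) • h ≤ 0) : ∃ t : ℝ, d = (t : ℂ) • h := by
  have hpos : 0 < ‖h‖ := norm_pos_iff.2 hne
  have hcont : Continuous fun t : ℝ => d - (t : ℂ) • h := by fun_prop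
  have c1 : IsClosed {t : ℝ | 0 ≤ d - (t : ℂ) • h} := isClosed_le continuous_const hcont
  have c2 : IsClosed {t : ℝ | d - (t : ℂ) • h ≤ 0} := isClosed_le hcont continuous_const
  have bound : ∀ (e : Q) (t : ℝ), 0 ≤ t → 0 ≤ e - (t : ℂ) • h → t * ‖h‖ ≤ ‖e‖ := by
    intro e t ht he
    have hp : 0 ≤ (t : ℂ) • h := by
      obtain ⟨y, hy⟩ := CStarAlgebra.nonneg_iff_eq_star_mul_self.1 h0
      have : (t : ℂ) • h = star (((Real.sqrt t : ℝ) : ℂ) • y) * (((Real.sqrt t : ℝ) : ℂ) • y) := by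
        rw [star_smul, smul_mul_smul_comm, hy]
        simp only [RCLike.star_def, Complex.conj_ofReal]
        rw [← Complex.ofReal_mul, Real.mul_self_sqrt ht]
      rw [this]; exact star_mul_self_nonneg _
    have := norm_le_add _ _ hp he
    rw [norm_smul, Complex.norm_real, Real.norm_of_nonneg ht] at this
    simpa using this
  set N := (‖d‖ + 1) / ‖h‖ with hN
  have hNp : 0 ≤ N := by positivity
  have hNh : N * ‖h‖ = ‖d‖ + 1 := by rw [hN]; field_simp
  have m1 : d - (N : ℂ) • h ≤ 0 := by
    rcases hcov N with h1 | h1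
    · have := bound d N hNp h1; linarith
    · exact h1
  have m2 : 0 ≤ d - ((-N : ℝ) : ℂ) • h := by
    rcases hcov (-N) with h1 | h1
    · exact h1
    · have h2 : 0 ≤ -d - (N : ℂ) • h := by
        have h3 : -d - (N : ℂ) • h = -(d - ((-N : ℝ) : ℂ) • h) := by push_cast; rw [neg_smul]; abel
        rw [h3]; exact neg_nonneg.2 h1
      have := bound (-d) N hNp h2
      rw [norm_neg] at this; linarith
  obtain ⟨t, -, t1, t2⟩ := isPreconnected_closed_iff.1 (isPreconnected_univ (α := ℝ)) _ _ c1 c2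
    (fun t _ => hcov t) ⟨-N, trivial, m2⟩ ⟨N, trivial, m1⟩
  exact ⟨t, sub_eq_zero.1 (le_antisymm t2 t1)⟩

theorem pn_split (s : A) (hs : IsSelfAdjoint s) : ∃ p n : A, s = p - n ∧
    (∃ v, p = star v * v) ∧ (∃ v, n = star v * v) ∧ n * p = 0 := by
  refine ⟨cfcₙ (fun t : ℝ => max t 0) s, cfcₙ (fun t : ℝ => max (-t) 0) s, ?_, ?_, ?_, ?_⟩
  · rw [← cfcₙ_sub _ _ s]
    conv_lhs => rw [← cfcₙ_id ℝ s]
    congr 1; ext t; simp only [id]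
    rcases le_total t 0 with h | h <;> simp [h]
  · exact CStarAlgebra.nonneg_iff_eq_star_mul_self.1 (cfcₙ_nonneg (fun _ _ => le_max_right _ _))
  · exact CStarAlgebra.nonneg_iff_eq_star_mul_self.1 (cfcₙ_nonneg (fun _ _ => le_max_right _ _))
  · rw [← cfcₙ_mul _ _ s]
    have : (fun t : ℝ => max (-t) 0 * max t 0) = fun _ => 0 := by
      ext t
      rcases le_total t 0 with h | h <;> simp [h]
    rw [this, cfcₙ_const_zero]

theorem locB (D : HS A) (hfull : D.Full) (I : CI A)
    (hI : ∀ w ∈ D.toNonUnitalStarSubalgebra, w * w = 0 → w ∈ I) {a : A} (ha : a ∉ I) :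
    ∃ (P : CI A) (p : P.Q), star p = p ∧ p * p = p ∧ p ≠ 0 ∧
      (∀ x, ∃ c : ℂ, p * x * p = c • p) ∧ (∀ K : CI P.Q, p ∈ K → ∀ x, x ∈ K) := by
  obtain ⟨y, hyD, hyI⟩ : ∃ y ∈ D.toNonUnitalStarSubalgebra, y ∉ I := by
    by_contra hcon
    push Not at hcon
    exact ha (hfull I hcon a)
  set h := star y * y with hh
  have hhD : h ∈ D.toNonUnitalStarSubalgebra := mul_mem (star_mem hyD) hyD
  have hr : 0 < ‖I.π h‖ := by
    rw [norm_pos_iff]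
    intro h0
    rw [I.π_eq_zero, I.star_mul_mem] at h0
    exact hyI h0
  obtain ⟨P, hIP, hPr, hmax⟩ := exists_max I h le_rfl
  have hprime : ∀ {a b : A}, (∀ z, a * z * b ∈ P) → a ∈ P ∨ b ∈ P := fun hab =>
    max_prime hr hPr hmax hab
  have hπ0 : 0 ≤ P.π h := by rw [hh, map_mul, map_star]; exact star_mul_self_nonneg _
  have hπne : P.π h ≠ 0 := norm_pos_iff.1 (hr.trans_le hPr)
  have hhs : star h = h := (nn_sa y).star_eq
  have key : ∀ s ∈ D.toNonUnitalStarSubalgebra, star s = s → 0 ≤ P.π s ∨ P.π s ≤ 0 := by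
    intro s hs hss
    obtain ⟨p, n, hpn, hp, hn, hnp⟩ := pn_split (⟨s, hs⟩ : D.S) (Subtype.ext hss)
    have hpn' : s = (p : A) - n := congrArg Subtype.val hpn
    have hnp' : (n : A) * p = 0 := congrArg Subtype.val hnp
    have pos : ∀ q : D.S, (∃ v, q = star v * v) → 0 ≤ P.π (q : A) := by
      rintro q ⟨v, hv⟩
      have : (q : A) = star (v : A) * v := congrArg Subtype.val hv
      rw [this, map_mul, map_star]; exact star_mul_self_nonneg _
    have h1 : (p : A) ∈ P ∨ (n : A) ∈ P := hprime (fun z => hIP (hI _ (D.her z p.2 n.2) (by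
      have : (p : A) * z * n * (p * z * n) = p * z * (n * p) * z * n := by simp only [mul_assoc]
      rw [this, hnp']; simp)))
    rcases h1 with h1 | h1
    · right
      rw [hpn', map_sub, P.π_eq_zero.2 h1, zero_sub]
      exact neg_nonpos.2 (pos n hn)
    · left
      rw [hpn', map_sub, P.π_eq_zero.2 h1, sub_zero]
      exact pos p hp
  have sa : ∀ d ∈ D.toNonUnitalStarSubalgebra, star d = d → ∃ t : ℝ, P.π d = (t : ℂ) • P.π h := by
    intro d hdD hds
    refine ge_or_le_conn hπ0 hπne (fun t => ?_)
    rw [← map_smul, ← map_sub]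
    refine key _ (sub_mem hdD (SMulMemClass.smul_mem _ hhD)) ?_
    rw [star_sub, star_smul, hds, hhs, RCLike.star_def, Complex.conj_ofReal]
  have all : ∀ d ∈ D.toNonUnitalStarSubalgebra, ∃ c : ℂ, P.π d = c • P.π h := by
    intro d hdD
    obtain ⟨t1, h1⟩ := sa (d + star d) (add_mem hdD (star_mem hdD)) (by
      rw [star_add, star_star, add_comm])
    obtain ⟨t2, h2⟩ := sa (Complex.I • (star d - d))
      (SMulMemClass.smul_mem _ (sub_mem (star_mem hdD) hdD)) (by
        rw [star_smul, star_sub, star_star, RCLike.star_def, Complex.conj_I, neg_smul, ← smul_neg,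
          neg_sub])
    refine ⟨(1 / 2 : ℂ) * (t1 + Complex.I * t2), ?_⟩
    have : d = (1 / 2 : ℂ) • ((d + star d) + Complex.I • (Complex.I • (star d - d))) := by
      rw [smul_smul, Complex.I_mul_I, neg_smul, one_smul, neg_sub]
      have : d + star d + (d - star d) = (2 : ℂ) • d := by rw [two_smul]; abel
      rw [this, smul_smul]; norm_num
    rw [this, map_smul, map_add, h1, map_smul, h2, smul_smul, ← add_smul, smul_smul]
  obtain ⟨t, ht⟩ := sa (h * h) (mul_mem hhD hhD) (by rw [star_mul, hhs])
  rw [map_mul] at ht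
  have hπs : star (P.π h) = P.π h := by rw [← map_star, hhs]
  have ht0 : (t : ℂ) ≠ 0 := by
    intro h0
    rw [h0, zero_smul] at ht
    have : ‖star (P.π h) * P.π h‖ = 0 := by rw [hπs, ht, norm_zero]
    rw [CStarRing.norm_star_mul_self] at this
    exact hπne (norm_eq_zero.1 (mul_self_eq_zero.1 this))
  refine ⟨P, (t : ℂ)⁻¹ • P.π h, ?_, ?_, ?_, ?_, ?_⟩
  · rw [star_smul, hπs, RCLike.star_def, map_inv₀, Complex.conj_ofReal]
  · rw [smul_mul_smul_comm, ht, smul_smul, mul_assoc, inv_mul_cancel₀ ht0, mul_one]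
  · exact smul_ne_zero (inv_ne_zero ht0) hπne
  · intro x
    obtain ⟨z, rfl⟩ := P.π_surj x
    obtain ⟨c, hc⟩ := all (h * z * h) (D.her z hhD hhD)
    refine ⟨(t : ℂ)⁻¹ * c, ?_⟩
    rw [smul_mul_assoc, smul_mul_smul_comm, ← map_mul, ← map_mul, hc, smul_smul, smul_smul]
    congr 1; ring
  · intro K hK x
    obtain ⟨z, rfl⟩ := P.π_surj x
    have hK' : P.π h ∈ K := by
      have := SMulMemClass.smul_mem (t : ℂ) hK
      rwa [smul_smul, mul_inv_cancel₀ ht0, one_smul] at this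
    refine hfull (K.comap P.π P.π_cont) (fun d hdD => ?_) z
    obtain ⟨c, hc⟩ := all d hdD
    show P.π d ∈ K
    rw [hc]; exact SMulMemClass.smul_mem _ hK'

end locsec
end Glimm

end P5part

section P6part
open Filter Topology



namespace Glimm

theorem compact_mem {H : Type u} [NormedAddCommGroup H] [InnerProductSpace ℂ H] [CompleteSpace H]
    (R : AddSubmonoid (H →L[ℂ] H)) (hcl : IsClosed (R : Set (H →L[ℂ] H)))
    (hR : ∀ x y : H, InnerProductSpace.rankOne ℂ x y ∈ R) {T : H →L[ℂ] H}
    (hT : IsCompactOperator T) : T ∈ R := by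
  have : T ∈ closure (R : Set (H →L[ℂ] H)) := by
    rw [Metric.mem_closure_iff]
    intro ε hε
    have hc := hT.isCompact_closure_image_closedBall (f := (T : H →ₗ[ℂ] H)) (r := 1)
    obtain ⟨t, htf, ht⟩ := Metric.totallyBounded_iff.1 hc.totallyBounded (ε / 4) (by positivity)
    let F : Submodule ℂ H := Submodule.span ℂ t
    have : FiniteDimensional ℂ F := FiniteDimensional.span_of_finite ℂ htf
    let b := stdOrthonormalBasis ℂ F
    refine ⟨F.starProjection ∘L T, ?_, ?_⟩
    · rw [b.starProjection_eq_sum_rankOne]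
      have h1 : (∑ i, InnerProductSpace.rankOne ℂ (b i : H) (b i : H)) ∘L T =
          ∑ i, InnerProductSpace.rankOne ℂ (b i : H) (ContinuousLinearMap.adjoint T (b i : H)) := by
        ext x
        simp [ContinuousLinearMap.adjoint_inner_left]
      rw [h1]
      exact sum_mem (fun i _ => hR _ _)
    · rw [dist_eq_norm]
      have : ‖T - F.starProjection ∘L T‖ ≤ ε / 2 := by
        refine ContinuousLinearMap.opNorm_le_of_unit_norm (by positivity) fun x hx => ?_
        have h1 : T x ∈ closure ((T : H →ₗ[ℂ] H) '' Metric.closedBall 0 1) :=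
          subset_closure ⟨x, by simp [hx], rfl⟩
        obtain ⟨y, hy, hxy⟩ := Set.mem_iUnion₂.1 (ht h1)
        rw [Metric.mem_ball, dist_eq_norm] at hxy
        have hyF : F.starProjection y = y :=
          Submodule.starProjection_eq_self_iff.2 (Submodule.subset_span hy)
        have h2 : (T - F.starProjection ∘L T) x = (T x - y) - F.starProjection (T x - y) := by
          simp [hyF]
        rw [h2]
        have h3 : ‖F.starProjection (T x - y)‖ ≤ ‖T x - y‖ := by
          refine (F.starProjection.le_opNorm _).trans ?_
          have := F.starProjection_norm_le
          nlinarith [norm_nonneg (T x - y)]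
        exact (norm_sub_le _ _).trans (by linarith)
      linarith
  rwa [hcl.closure_eq] at this

/-- A minimal projection. -/
structure PD (Q : Type u) [NonUnitalCStarAlgebra Q] where
  p : Q
  hs : star p = p
  hi : p * p = p
  hn : p ≠ 0
  hc : ∀ x, ∃ c : ℂ, p * x * p = c • p

section elem
attribute [local instance] instOrd instOrdR
variable {Q : Type u} [NonUnitalCStarAlgebra Q] (X : PD Q)

def PD.sub : Submodule ℂ Q where
  carrier := {x | x * X.p = x}
  zero_mem' := by simp
  add_mem' := by
    intro a b ha hb
    show (a + b) * X.p = a + b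
    rw [add_mul, show a * X.p = a from ha, show b * X.p = b from hb]
  smul_mem' := by
    intro c a ha
    show (c • a) * X.p = c • a
    rw [smul_mul_assoc, show a * X.p = a from ha]

/-- the Hilbert space -/
def PD.H : Type u := ↥X.sub

noncomputable instance : NormedAddCommGroup X.H := inferInstanceAs (NormedAddCommGroup X.sub)
noncomputable instance : NormedSpace ℂ X.H := inferInstanceAs (NormedSpace ℂ X.sub)

def PD.v (x : X.H) : Q := (x : X.sub).1
def PD.mk' (x : Q) (h : x * X.p = x) : X.H := (⟨x, h⟩ : X.sub)
theorem PD.v_mk (x : Q) (h : x * X.p = x) : X.v (X.mk' x h) = x := rfl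
theorem PD.v_mul (x : X.H) : X.v x * X.p = X.v x := (x : X.sub).2
theorem PD.v_add (x y : X.H) : X.v (x + y) = X.v x + X.v y := rfl
theorem PD.v_smul (c : ℂ) (x : X.H) : X.v (c • x) = c • X.v x := rfl
theorem PD.v_norm (x : X.H) : ‖X.v x‖ = ‖x‖ := rfl
theorem PD.v_inj {x y : X.H} (h : X.v x = X.v y) : x = y := Subtype.ext h

instance : CompleteSpace X.H := by
  have : IsClosed (X.sub : Set Q) := isClosed_eq (by fun_prop) continuous_id
  exact this.completeSpace_coe

noncomputable def PD.sc (x : Q) : ℂ := (X.hc x).choose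
theorem PD.sc_spec (x : Q) : X.p * x * X.p = X.sc x • X.p := (X.hc x).choose_spec
theorem PD.sc_eq {x : Q} {c : ℂ} (h : X.p * x * X.p = c • X.p) : X.sc x = c := by
  rw [X.sc_spec x] at h
  exact smul_left_injective ℂ X.hn h

theorem PD.np : ‖X.p‖ = 1 := by
  have h : ‖X.p‖ * ‖X.p‖ = ‖X.p‖ := by
    rw [← CStarRing.norm_star_mul_self, X.hs, X.hi]
  have h0 : ‖X.p‖ ≠ 0 := norm_ne_zero_iff.2 X.hn
  exact mul_left_cancel₀ h0 (by rw [h, mul_one])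

theorem PD.sv (x y : X.H) : star (X.v x) * X.v y = X.sc (star (X.v x) * X.v y) • X.p := by
  rw [← X.sc_spec]
  conv_lhs => rw [← X.v_mul x, ← X.v_mul y, star_mul, X.hs]
  simp only [mul_assoc]

theorem PD.p_nonneg : 0 ≤ X.p := by
  have := star_mul_self_nonneg X.p
  rwa [X.hs, X.hi] at this

theorem PD.norm_sq (x : X.H) : ‖x‖ ^ 2 = RCLike.re (X.sc (star (X.v x) * X.v x)) := by
  have h1 := X.sv x x
  set c := X.sc (star (X.v x) * X.v x) with hc
  have hn : ‖x‖ ^ 2 = ‖c‖ := by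
    rw [← X.v_norm, sq, ← CStarRing.norm_star_mul_self, h1, norm_smul, X.np, mul_one]
  have hr : star c = c := by
    have h2 := (nn_sa (X.v x)).star_eq
    rw [h1, star_smul, X.hs] at h2
    exact smul_left_injective ℂ X.hn h2
  obtain ⟨r, hr⟩ : ∃ r : ℝ, (r : ℂ) = c := Complex.conj_eq_iff_real.1 hr |>.imp fun _ h => h.symm
  rw [← hr] at h1 hn ⊢
  rw [Complex.norm_real] at hn
  rw [hn]
  simp only [RCLike.re_to_complex, Complex.ofReal_re]
  rcases le_or_gt 0 r with h0 | h0
  · exact Real.norm_of_nonneg h0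
  · exfalso
    have p1 : 0 ≤ (r : ℂ) • X.p := by rw [← h1]; exact star_mul_self_nonneg _
    have p2 : 0 ≤ -((r : ℂ) • X.p) := by
      have : -((r : ℂ) • X.p) = star (((Real.sqrt (-r) : ℝ) : ℂ) • X.p) *
          (((Real.sqrt (-r) : ℝ) : ℂ) • X.p) := by
        rw [star_smul, smul_mul_smul_comm, X.hs, X.hi]
        simp only [RCLike.star_def, Complex.conj_ofReal]
        rw [← Complex.ofReal_mul, Real.mul_self_sqrt (by linarith)]
        push_cast; rw [neg_smul]
      rw [this]; exact star_mul_self_nonneg _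
    have h3 := le_antisymm (neg_nonneg.1 p2) p1
    rcases smul_eq_zero.1 h3 with h | h
    · exact h0.ne (by exact_mod_cast h)
    · exact X.hn h

noncomputable instance : InnerProductSpace ℂ X.H where
  inner x y := X.sc (star (X.v x) * X.v y)
  norm_sq_eq_re_inner x := X.norm_sq x
  conj_inner_symm x y := by
    symm
    apply X.sc_eq
    have h := X.sc_spec (star (X.v y) * X.v x)
    have := congrArg star h
    rw [star_smul, X.hs] at this
    rw [← starRingEnd_apply] at this
    simpa only [star_mul, star_star, X.hs, mul_assoc] using this
  add_left x y z := by
    apply X.sc_eq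
    rw [X.v_add, star_add, add_mul, mul_add, add_mul, X.sc_spec, X.sc_spec, add_smul]
  smul_left x y c := by
    apply X.sc_eq
    rw [X.v_smul, star_smul, smul_mul_assoc, mul_smul_comm, smul_mul_assoc, X.sc_spec, smul_smul]
    rfl

theorem PD.inner_def (x y : X.H) : inner ℂ x y = X.sc (star (X.v x) * X.v y) := rfl

noncomputable def PD.Lo (a : Q) : X.H →L[ℂ] X.H :=
  LinearMap.mkContinuous
    { toFun := fun x => X.mk' (a * X.v x) (by rw [mul_assoc, X.v_mul])
      map_add' := fun x y => X.v_inj (by simp only [X.v_mk, X.v_add, mul_add])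
      map_smul' := fun c x => X.v_inj (by
        simp only [X.v_mk, X.v_smul, mul_smul_comm, RingHom.id_apply]) } ‖a‖
    (fun x => by
      rw [← X.v_norm x]; exact norm_mul_le a (X.v x))

theorem PD.v_Lo (a : Q) (x : X.H) : X.v (X.Lo a x) = a * X.v x := rfl

noncomputable def PD.L : Q →⋆ₙₐ[ℂ] (X.H →L[ℂ] X.H) where
  toFun := X.Lo
  map_smul' c a := by
    ext x; apply X.v_inj
    rw [smul_apply, X.v_smul, X.v_Lo, X.v_Lo, smul_mul_assoc]; rfl
  map_zero' := by
    ext x; apply X.v_inj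
    rw [X.v_Lo, zero_mul]; rfl
  map_add' a b := by
    ext x; apply X.v_inj
    rw [add_apply, X.v_add, X.v_Lo, X.v_Lo, X.v_Lo, add_mul]
  map_mul' a b := by
    ext x; apply X.v_inj
    rw [mul_apply_eq_comp, X.v_Lo, X.v_Lo, X.v_Lo, mul_assoc]
  map_star' a := by
    rw [ContinuousLinearMap.star_eq_adjoint, ContinuousLinearMap.eq_adjoint_iff]
    intro x y
    rw [X.inner_def, X.inner_def, X.v_Lo, X.v_Lo, star_mul, star_star, mul_assoc]

theorem PD.v_L (a : Q) (x : X.H) : X.v (X.L a x) = a * X.v x := rfl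

/-- zero ideal -/
def botI (Q : Type u) [NonUnitalCStarAlgebra Q] : CI Q where
  __ := (⊥ : Submodule ℂ Q)
  closed' := isClosed_singleton
  mulL' := by rintro a x rfl; exact mul_zero a
  mulR' := by rintro a x rfl; exact zero_mul a

theorem mem_botI {x : Q} : x ∈ botI Q ↔ x = 0 := Iff.rfl

theorem PD.rank (x y : X.H) : InnerProductSpace.rankOne ℂ x y = X.L (X.v x * star (X.v y)) := by
  ext z; apply X.v_inj
  rw [InnerProductSpace.rankOne_apply, X.v_smul, X.v_L, mul_assoc, X.sv, mul_smul_comm, X.v_mul,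
    X.inner_def]

theorem PD.range (hfull : ∀ K : CI Q, X.p ∈ K → ∀ x, x ∈ K) :
    Set.range X.L = {T : X.H →L[ℂ] X.H | IsCompactOperator T} := by
  have hinj : Function.Injective X.L := by
    rw [injective_iff_map_eq_zero]
    intro x hx
    have h1 : X.p ∈ annR (botI Q) {x} := by
      rintro a _ rfl
      rw [mem_botI, mul_assoc]
      have := congrArg (fun T : X.H →L[ℂ] X.H => X.v (T (X.mk' (a * X.p) (by rw [mul_assoc, X.hi])))) hx
      exact this
    have h2 : x * star x * x = 0 := hfull _ h1 x (star x) x rfl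
    have h3 := norm_cube_le x
    rw [h2, norm_zero] at h3
    have := norm_nonneg x
    exact norm_eq_zero.1 (pow_eq_zero_iff (n := 3) (by norm_num) |>.1 (le_antisymm h3 (by positivity)))
  have hiso : Isometry X.L := NonUnitalStarAlgHom.isometry X.L hinj
  have hcl : IsClosed (Set.range X.L) := hiso.isClosedEmbedding.isClosed_range
  apply Set.Subset.antisymm
  · rintro _ ⟨a, rfl⟩
    let C : CI Q :=
      { carrier := {a | IsCompactOperator (X.L a)}
        zero_mem' := by
          show IsCompactOperator (X.L 0)
          rw [map_zero]; exact isCompactOperator_zero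
        add_mem' := by
          intro a b ha hb
          show IsCompactOperator (X.L (a + b))
          rw [map_add]; exact IsCompactOperator.add ha hb
        smul_mem' := by
          intro c a ha
          show IsCompactOperator (X.L (c • a))
          rw [map_smul]; exact IsCompactOperator.smul ha c
        closed' := isClosed_setOfPred_isCompactOperator.preimage hiso.continuous
        mulL' := by
          intro a x hx
          show IsCompactOperator (X.L (a * x))
          rw [map_mul]; exact IsCompactOperator.clm_comp hx (X.L a)
        mulR' := by
          intro a x hx
          show IsCompactOperator (X.L (x * a))
          rw [map_mul]; exact IsCompactOperator.comp_clm hx (X.L a) }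
    have hp : X.p ∈ C := by
      show IsCompactOperator (X.L X.p)
      have h1 : X.L X.p = InnerProductSpace.rankOne ℂ (X.mk' X.p X.hi) (X.mk' X.p X.hi) := by
        rw [X.rank, X.v_mk, X.hs, X.hi]
      rw [h1, InnerProductSpace.rankOne_def']
      exact (isCompactOperator_of_locallyCompactSpace_rng
        (ContinuousLinearMap.toSpanSingleton ℂ (X.mk' X.p X.hi))).comp_clm _
    exact hfull C hp a
  · intro T hT
    exact compact_mem (AddMonoidHom.mrange (X.L : Q →+ (X.H →L[ℂ] X.H))) hcl
      (fun x y => ⟨_, (X.rank x y).symm⟩) hT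

end elem

theorem local_sq {A : Type u} [NonUnitalCStarAlgebra A]
    (hel : ∀ (H : Type u) [NormedAddCommGroup H] [InnerProductSpace ℂ H] [CompleteSpace H],
        Nontrivial H → ∀ φ : A →⋆ₙₐ[ℂ] (H →L[ℂ] H),
          Set.range φ ≠ {T : H →L[ℂ] H | IsCompactOperator T})
    (D : HS A) (hfull : D.Full) (I : CI A)
    (hI : ∀ w ∈ D.toNonUnitalStarSubalgebra, w * w = 0 → w ∈ I) (a : A) : a ∈ I := by
  by_contra ha
  obtain ⟨P, p, h1, h2, h3, h4, h5⟩ := locB D hfull I hI ha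
  let X : PD P.Q := ⟨p, h1, h2, h3, h4⟩
  have : Nontrivial X.H := ⟨X.mk' p h2, 0, fun h => h3 (congrArg X.v h)⟩
  refine hel X.H this (X.L.comp P.π) ?_
  rw [← X.range h5]
  ext T
  constructor
  · rintro ⟨a, rfl⟩; exact ⟨P.π a, rfl⟩
  · rintro ⟨x, rfl⟩
    obtain ⟨a, rfl⟩ := P.π_surj x
    exact ⟨a, rfl⟩

end Glimm

end P6part

section P7part
open Filter Topology



namespace Glimm

section orth
attribute [local instance] instOrd instOrdR
variable {A : Type u} [NonUnitalCStarAlgebra A]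

/-- annihilator inside a hereditary subalgebra -/
def HS.ann (D : HS A) (s : A) (hs : star s = s) : HS A where
  carrier := {d | d ∈ D.toNonUnitalStarSubalgebra ∧ d * s = 0 ∧ s * d = 0}
  add_mem' := by
    rintro a b ⟨h1, h2, h3⟩ ⟨h4, h5, h6⟩
    exact ⟨add_mem h1 h4, by rw [add_mul, h2, h5, add_zero], by rw [mul_add, h3, h6, add_zero]⟩
  zero_mem' := ⟨zero_mem _, zero_mul _, mul_zero _⟩
  mul_mem' := by
    rintro a b ⟨h1, h2, h3⟩ ⟨h4, h5, h6⟩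
    exact ⟨mul_mem h1 h4, by rw [mul_assoc, h5, mul_zero], by rw [← mul_assoc, h3, zero_mul]⟩
  smul_mem' := by
    rintro c a ⟨h1, h2, h3⟩
    exact ⟨SMulMemClass.smul_mem c h1, by rw [smul_mul_assoc, h2, smul_zero],
      by rw [mul_smul_comm, h3, smul_zero]⟩
  star_mem' := by
    rintro a ⟨h1, h2, h3⟩
    refine ⟨star_mem h1, ?_, ?_⟩
    · have := congrArg star h3
      rwa [star_mul, hs, star_zero] at this
    · have := congrArg star h2
      rwa [star_mul, hs, star_zero] at this
  closed' := by
    refine IsClosed.inter D.closed' (IsClosed.inter ?_ ?_)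
    · exact isClosed_eq (continuous_id.mul continuous_const) continuous_const
    · exact isClosed_eq (continuous_const.mul continuous_id) continuous_const
  her' := by
    rintro x a y ⟨h1, h2, h3⟩ ⟨h4, h5, h6⟩
    exact ⟨D.her a h1 h4, by rw [mul_assoc, h5, mul_zero],
      by rw [← mul_assoc, ← mul_assoc, h3, zero_mul, zero_mul]⟩

theorem HS.mem_ann (D : HS A) (s : A) (hs : star s = s) (d : A) :
    d ∈ (D.ann s hs).toNonUnitalStarSubalgebra ↔
      d ∈ D.toNonUnitalStarSubalgebra ∧ d * s = 0 ∧ s * d = 0 := Iff.rfl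

theorem HS.step (D : HS A) (hfull : D.Full) {w c : A} (hw : w ∈ D.toNonUnitalStarSubalgebra)
    (hww : w * w = 0) {ε : ℝ} (hn : ‖(idl {w}).π c‖ < ε) :
    ∃ (s : A) (D' : HS A), s ∈ D.toNonUnitalStarSubalgebra ∧ star s = s ∧ D'.Full ∧
      (∀ d ∈ D'.toNonUnitalStarSubalgebra, d ∈ D.toNonUnitalStarSubalgebra ∧ d * s = 0 ∧ s * d = 0)
      ∧ ‖(idl {s}).π c‖ < ε := by
  obtain ⟨δ, hδ, hst⟩ := stab' hn
  have hτ : 0 < δ ^ 2 / 4 := by positivity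
  set τ := δ ^ 2 / 4 with hτd
  set p := star w * w with hp
  have hsa : IsSelfAdjoint p := nn_sa w
  have hpD : p ∈ D.toNonUnitalStarSubalgebra := mul_mem (star_mem hw) hw
  set s := cfcₙ (fcut τ) p with hs
  set m := cfcₙ (fm τ) p with hm
  set n := cfcₙ (fn τ) p with hnn
  have m1 : m = p * n := mfac p hsa hτ
  have m2 : m = n * p := mfac' p hsa hτ
  have sm : s * m = s := cut_mul_m p hτ
  have ms : m * s = s := m_mul_cut p hτ
  have hss : star s = s := (cfcₙ_predicate (fcut τ) p : IsSelfAdjoint _).star_eq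
  have hsD : s ∈ D.toNonUnitalStarSubalgebra := by
    have : s = p * (n * s * n) * p := by
      calc s = m * s * m := by rw [ms, sm]
        _ = (p * n) * s * (n * p) := by rw [← m1, ← m2]
        _ = _ := by simp only [mul_assoc]
    rw [this]; exact D.her _ hpD hpD
  have pw : p * w = 0 := by rw [hp, mul_assoc, hww, mul_zero]
  have wp : star w * p = 0 := by
    rw [hp, ← mul_assoc, ← star_mul, hww, star_zero, zero_mul]
  have sw : s * w = 0 := by
    rw [← sm, m2, mul_assoc, mul_assoc, pw, mul_zero, mul_zero]
  have ws : star w * s = 0 := by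
    rw [← ms, m1, ← mul_assoc, ← mul_assoc, wp, zero_mul, zero_mul]
  refine ⟨s, D.ann s hss, hsD, hss, ?_, fun d hd => hd, ?_⟩
  · intro J hJ
    have hwJ : w ∈ J := by
      rw [← J.mul_star_mem]
      refine hJ _ ⟨mul_mem hw (star_mem hw), ?_, ?_⟩
      · rw [mul_assoc, ws, mul_zero]
      · rw [← mul_assoc, sw, zero_mul]
    have hpJ : p ∈ J := J.mulL _ hwJ
    have hmJ : m ∈ J := by rw [m1]; exact J.mulR _ hpJ
    refine hfull J (fun d hd => ?_)
    have md : m * d ∈ D.toNonUnitalStarSubalgebra := by rw [m1]; exact D.her _ hpD hd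
    have dm : d * m ∈ D.toNonUnitalStarSubalgebra := by
      rw [m2, ← mul_assoc]; exact D.her _ hd hpD
    have mdm : m * d * m ∈ D.toNonUnitalStarSubalgebra := by
      have : m * d * m = p * (n * d * n) * p := by
        calc m * d * m = (p * n) * d * (n * p) := by rw [← m1, ← m2]
          _ = _ := by simp only [mul_assoc]
      rw [this]; exact D.her _ hpD hpD
    have h1 : d - m * d - d * m + m * d * m ∈ J := by
      refine hJ _ ⟨add_mem (sub_mem (sub_mem hd md) dm) mdm, ?_, ?_⟩
      · rw [add_mul, sub_mul, sub_mul, mul_assoc d, mul_assoc (m * d), ms]; abel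
      · rw [mul_add, mul_sub, mul_sub, ← mul_assoc s m, ← mul_assoc s (m * d), ← mul_assoc s m, sm,
          ← mul_assoc]; abel
    have h2 : d = (d - m * d - d * m + m * d * m) + m * d + d * m - m * d * m := by abel
    rw [h2]
    exact sub_mem (add_mem (add_mem h1 (J.mulR _ hmJ)) (J.mulL _ hmJ)) (J.mulL _ hmJ)
  · apply hst
    have h1 : ‖(idl {s}).π w‖ * ‖(idl {s}).π w‖ ≤ τ := by
      rw [← CStarRing.norm_star_mul_self, ← map_star, ← map_mul]
      exact ((idl {s}).π_le_dist (self_mem s)).trans (norm_sub_cut w hτ)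
    have := norm_nonneg ((idl {s}).π w)
    nlinarith

/-- everything -/
def HS.univ (A : Type u) [NonUnitalCStarAlgebra A] : HS A where
  __ := (⊤ : NonUnitalStarSubalgebra ℂ A)
  closed' := isClosed_univ
  her' := fun _ _ _ _ _ => trivial

theorem exists_s (hD : ∀ D : HS A, D.Full → ∀ (c : A) (ε : ℝ), 0 < ε →
      ∃ w ∈ D.toNonUnitalStarSubalgebra, w * w = 0 ∧ ‖(idl {w}).π c‖ < ε)
    (c : ℕ → A) (ε : ℕ → ℝ) (hε : ∀ n, 0 < ε n) :
    ∃ s : ℕ → A, (∀ n, star (s n) = s n) ∧ (∀ i j, i ≠ j → s i * s j = 0) ∧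
      ∀ n, ‖(idl {s n}).π (c n)‖ < ε n := by
  have key : ∀ (n : ℕ) (D : {D : HS A // D.Full}), ∃ (q : A × {D : HS A // D.Full}),
      q.1 ∈ D.1.toNonUnitalStarSubalgebra ∧ star q.1 = q.1 ∧
      (∀ d ∈ q.2.1.toNonUnitalStarSubalgebra, d ∈ D.1.toNonUnitalStarSubalgebra ∧
        d * q.1 = 0 ∧ q.1 * d = 0) ∧ ‖(idl {q.1}).π (c n)‖ < ε n := by
    rintro n ⟨D, hf⟩
    obtain ⟨w, hw, hww, hn⟩ := hD D hf (c n) (ε n) (hε n)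
    obtain ⟨s, D', h1, h2, h3, h4, h5⟩ := D.step hf hw hww hn
    exact ⟨(s, ⟨D', h3⟩), h1, h2, h4, h5⟩
  choose F hF1 hF2 hF3 hF4 using key
  let DD : ℕ → {D : HS A // D.Full} := fun n =>
    Nat.rec ⟨HS.univ A, fun J h a => h a trivial⟩ (fun n D => (F n D).2) n
  have hDD : ∀ n, DD (n + 1) = (F n (DD n)).2 := fun n => rfl
  have mono : ∀ i j, i ≤ j → ∀ d ∈ (DD j).1.toNonUnitalStarSubalgebra,
      d ∈ (DD i).1.toNonUnitalStarSubalgebra := by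
    intro i j h
    induction j, h using Nat.le_induction with
    | base => exact fun d h => h
    | succ j _ ih => exact fun d hd => ih d (hF3 j (DD j) d hd).1
  have lt : ∀ i j, i < j → (F j (DD j)).1 * (F i (DD i)).1 = 0 ∧
      (F i (DD i)).1 * (F j (DD j)).1 = 0 := by
    intro i j h
    exact (hF3 i (DD i) _ (mono (i + 1) j h _ (hF1 j (DD j)))).2
  refine ⟨fun n => (F n (DD n)).1, fun n => hF2 _ _, fun i j h => ?_, fun n => hF4 _ _⟩
  rcases lt_or_gt_of_ne h with h | h
  · exact (lt i j h).2
  · exact (lt j i h).1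

theorem exists_g [TopologicalSpace.SeparableSpace A]
    (hD : ∀ D : HS A, D.Full → ∀ (c : A) (ε : ℝ), 0 < ε →
      ∃ w ∈ D.toNonUnitalStarSubalgebra, w * w = 0 ∧ ‖(idl {w}).π c‖ < ε) :
    ∃ g : ℕ → A, (∀ n, star (g n) = g n) ∧ (∀ i j, i ≠ j → g i * g j = 0) ∧
      ∀ n a, a ∈ idl {g n} := by
  obtain ⟨s, s1, s2, s3⟩ := exists_s hD
    (fun n => TopologicalSpace.denseSeq A (Nat.unpair (Nat.unpair n).2).1)
    (fun n => 1 / ((Nat.unpair (Nat.unpair n).2).2 + 1 : ℝ)) (fun n => by positivity)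
  let r : ℕ → ℕ → ℝ := fun j N => (1 / 2) ^ N / (‖s (Nat.pair j N)‖ + 1)
  have hr : ∀ j N, 0 < r j N := fun j N => by positivity
  let f : ℕ → ℕ → A := fun j N => ((r j N : ℝ) : ℂ) • s (Nat.pair j N)
  have hf : ∀ j, Summable (f j) := by
    intro j
    refine Summable.of_norm_bounded (g := fun N : ℕ => ((1 : ℝ) / 2) ^ N)
      summable_geometric_two (fun N => ?_)
    simp only [f]
    rw [norm_smul, Complex.norm_real, Real.norm_of_nonneg (hr j N).le]
    simp only [r]
    rw [div_mul_eq_mul_div, div_le_iff₀ (by positivity)]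
    have : (0 : ℝ) < (1 / 2) ^ N := by positivity
    nlinarith
  have fs : ∀ j N, star (f j N) = f j N := by
    intro j N
    simp only [f]
    rw [star_smul, s1]; simp
  have ff : ∀ i j N M, (i ≠ j ∨ N ≠ M) → f i N * f j M = 0 := by
    intro i j N M h
    simp only [f]
    rw [smul_mul_smul_comm, s2, smul_zero]
    intro h'
    have := Nat.pair_eq_pair.1 h'
    rcases h with h | h
    · exact h this.1
    · exact h this.2
  refine ⟨fun j => ∑' N, f j N, ?_, ?_, ?_⟩
  · intro j
    rw [tsum_star]; simp only [fs]
  · intro i j hij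
    rw [← (hf i).tsum_mul_right]
    rw [show (fun N => f i N * ∑' M, f j M) = fun _ => 0 from ?_, tsum_zero]
    ext N
    rw [← (hf j).tsum_mul_left]
    simp only [ff i j _ _ (Or.inl hij), tsum_zero]
  · intro j
    set g := ∑' N, f j N with hg
    have h1 : ∀ N, s (Nat.pair j N) ∈ idl {g} := by
      intro N
      have e1 : f j N * g = f j N * f j N := by
        rw [hg, ← (hf j).tsum_mul_left]
        exact tsum_eq_single N (fun M hM => ff j j N M (Or.inr hM.symm))
      have h2 : f j N ∈ idl {g} := by
        apply CI.cube_mem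
        rw [fs, ← e1]
        exact (idl {g}).mulR _ ((idl {g}).mulL _ (self_mem g))
      have h3 := SMulMemClass.smul_mem (((r j N)⁻¹ : ℝ) : ℂ) h2
      simp only [f, smul_smul] at h3
      rw [← Complex.ofReal_mul, inv_mul_cancel₀ (hr j N).ne', Complex.ofReal_one, one_smul] at h3
      exact h3
    have h2 : ∀ i, TopologicalSpace.denseSeq A i ∈ idl {g} := by
      intro i
      rw [← CI.π_eq_zero, ← norm_le_zero_iff]
      refine le_of_forall_pos_lt_add (fun ε hε => ?_)
      obtain ⟨l, hl⟩ := exists_nat_one_div_lt hε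
      have h4 := s3 (Nat.pair j (Nat.pair i l))
      simp only [Nat.unpair_pair] at h4
      have hle : idl {s (Nat.pair j (Nat.pair i l))} ≤ idl {g} := fun a ha => idl1_le (h1 _) ha
      have := CI.π_mono hle (TopologicalSpace.denseSeq A i)
      linarith
    intro a
    have h3 : closure (Set.range (TopologicalSpace.denseSeq A)) ⊆ (idl {g} : Set A) :=
      closure_minimal (by rintro _ ⟨i, rfl⟩; exact h2 i) (idl {g}).isClosed
    exact h3 (TopologicalSpace.denseRange_denseSeq A a)

end orth
end Glimm

end P7part

section P8part
open Filter Topology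



namespace Glimm

section sys
attribute [local instance] instOrd instOrdR
variable {A : Type u} [NonUnitalCStarAlgebra A]

theorem sqrt_ex (h : A) : ∃ t : A, star t = t ∧ t * t = star h * h :=
  ⟨CFC.sqrt (star h * h), (IsSelfAdjoint.of_nonneg (CFC.sqrt_nonneg _)).star_eq,
    CFC.sqrt_mul_sqrt_self _ (star_mul_self_nonneg h)⟩

/-- closure of b A e -/
def cE (b e : A) : Submodule ℂ A :=
  (LinearMap.range ((LinearMap.mulRight ℂ e).comp (LinearMap.mulLeft ℂ b))).topologicalClosure

theorem cE_mem (b e z : A) : b * z * e ∈ cE b e :=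
  Submodule.le_topologicalClosure _ ⟨z, rfl⟩

theorem cE_ind {b e : A} {S : Set A} (hS : IsClosed S) (h : ∀ z, b * z * e ∈ S) {w : A}
    (hw : w ∈ cE b e) : w ∈ S := by
  have h1 : closure (LinearMap.range
      ((LinearMap.mulRight ℂ e).comp (LinearMap.mulLeft ℂ b)) : Set A) ⊆ S :=
    closure_minimal (by rintro _ ⟨z, rfl⟩; exact h z) hS
  exact h1 hw

theorem cE_mul (b e : A) : ∀ x ∈ cE b e, ∀ a, ∀ y ∈ cE b e, x * a * y ∈ cE b e := by
  intro x hx a y hy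
  have hcl : IsClosed (cE b e : Set A) := Submodule.isClosed_topologicalClosure _
  refine cE_ind (S := {x | x * a * y ∈ cE b e}) (hcl.preimage (by fun_prop)) (fun z => ?_) hx
  refine cE_ind (S := {y | b * z * e * a * y ∈ cE b e}) (hcl.preimage (by fun_prop))
    (fun z' => ?_) hy
  show b * z * e * a * (b * z' * e) ∈ cE b e
  have : b * z * e * a * (b * z' * e) = b * (z * e * a * (b * z')) * e := by
    simp only [mul_assoc]
  rw [this]; exact cE_mem _ _ _

theorem full_of_mem {K : CI A} {w : A} (hf : ∀ a, a ∈ idl {w}) (h : w ∈ K) (a : A) : a ∈ K :=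
  idl1_le h (hf a)

theorem sys_ex [TopologicalSpace.SeparableSpace A] (hd : Dense {a : Unitization ℂ A | IsUnit a})
    (g : ℕ → A) (g1 : ∀ n, star (g n) = g n) (g2 : ∀ i j, i ≠ j → g i * g j = 0)
    (g3 : ∀ n a, a ∈ idl {g n}) (j : ℕ) :
    ∃ (x : ℕ → A) (h : A), (∀ i ≤ j, ∀ l ≤ j, star (x i) * x l = if i = l then star h * h else 0) ∧
      (∀ i ≤ j, ∀ l, l ≠ i → g l * x i = 0) ∧ (∀ a, a ∈ idl {star h * h}) := by
  induction j with
  | zero =>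
    refine ⟨fun _ => g 0, g 0, ?_, ?_, ?_⟩
    · intro i hi l hl
      obtain rfl := Nat.le_zero.1 hi
      obtain rfl := Nat.le_zero.1 hl
      simp
    · intro i hi l hl
      obtain rfl := Nat.le_zero.1 hi
      exact g2 _ _ hl
    · exact full_of_mem (g3 0) ((CI.star_mul_mem _).1 (self_mem _))
  | succ j ih =>
    obtain ⟨x, h, h1, h2, h3⟩ := ih
    obtain ⟨t, t1, t2⟩ := sqrt_ex h
    set e := star h * h with he
    have es : star e = e := (nn_sa h).star_eq
    set b := g (j + 1) with hb
    obtain ⟨w, hw, hgen⟩ := generic hd (cE b e) (Submodule.isClosed_topologicalClosure _)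
      (cE_mul b e)
    have wfull : ∀ a, a ∈ idl {w} := by
      intro a
      apply CI.cube_mem
      refine idl_prod (S := {b}) (T := {e}) ?_ (g3 _ a) (h3 a) (star a)
      rintro _ rfl _ rfl z
      exact hgen _ (cE_mem _ _ _)
    have gw : ∀ l, l ≠ j + 1 → g l * w = 0 := by
      intro l hl
      refine cE_ind (S := {w | g l * w = 0}) (isClosed_eq (by fun_prop) (by fun_prop))
        (fun z => ?_) hw
      show g l * (b * z * e) = 0
      rw [mul_assoc b, ← mul_assoc, hb, g2 _ _ hl, zero_mul]
    have xw : ∀ i ≤ j, star (x i) * w = 0 := by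
      intro i hi
      refine cE_ind (S := {w | star (x i) * w = 0}) (isClosed_eq (by fun_prop) (by fun_prop))
        (fun z => ?_) hw
      show star (x i) * (b * z * e) = 0
      have : star (x i) * b = 0 := by
        have := congrArg star (h2 i hi (j + 1) (by omega))
        rwa [star_mul, g1, star_zero] at this
      rw [mul_assoc b, ← mul_assoc, this, zero_mul]
    set c := star (w * t) * (w * t) with hc
    have cs : star c = c := (nn_sa _).star_eq
    obtain ⟨d, d1, d2⟩ := sqrt_ex (w * t)
    have c2 : c = t * (star w * (w * t)) := by rw [hc, star_mul, t1, mul_assoc]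
    have wK : ∀ K : CI A, w * t ∈ K → w ∈ K := by
      intro K hK
      rw [← K.mul_star_mem]
      refine cE_ind (S := {v | w * star v ∈ K}) (K.isClosed.preimage (by fun_prop))
        (fun z => ?_) hw
      show w * star (b * z * e) ∈ K
      rw [star_mul, es, ← t2, ← mul_assoc, ← mul_assoc]
      exact K.mulR _ (K.mulR _ hK)
    refine ⟨fun i => if i = j + 1 then w * t * d else x i * (star w * w * t), c, ?_, ?_, ?_⟩
    · have z1 : ∀ i ≤ j, star (x i * (star w * w * t)) * (w * t * d) = 0 := by
        intro i hi
        have : star (x i) * (w * t * d) = 0 := by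
          rw [mul_assoc w, ← mul_assoc, xw i hi, zero_mul]
        rw [star_mul, mul_assoc, this, mul_zero]
      have z2 : star (w * t * d) * (w * t * d) = c * c := by
        rw [star_mul, d1]
        calc d * star (w * t) * (w * t * d) = d * (star (w * t) * (w * t)) * d := by
              simp only [mul_assoc]
          _ = c * c := by rw [← d2, ← mul_assoc, mul_assoc, d2]
      have z3 : ∀ i ≤ j, ∀ l ≤ j, star (x i * (star w * w * t)) * (x l * (star w * w * t)) =
          if i = l then c * c else 0 := by
        intro i hi l hl
        have : star (x i * (star w * w * t)) * (x l * (star w * w * t)) =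
            star (star w * w * t) * (star (x i) * x l) * (star w * w * t) := by
          rw [star_mul]; simp only [mul_assoc]
        rw [this, h1 i hi l hl]
        split_ifs
        · rw [← t2, c2]
          simp only [star_mul, star_star, t1, mul_assoc]
        · rw [mul_zero, zero_mul]
      intro i hi l hl
      dsimp only
      rw [cs]
      by_cases hi' : i = j + 1
      · by_cases hl' : l = j + 1
        · rw [if_pos hi', if_pos hl', if_pos (hi'.trans hl'.symm), z2]
        · rw [if_pos hi', if_neg hl', if_neg (by omega)]
          have := congrArg star (z1 l (by omega))
          rwa [star_mul, star_star, star_zero] at this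
      · by_cases hl' : l = j + 1
        · rw [if_neg hi', if_pos hl', if_neg (by omega), z1 i (by omega)]
        · rw [if_neg hi', if_neg hl', z3 i (by omega) l (by omega)]
    · intro i hi l hl
      dsimp only
      by_cases hi' : i = j + 1
      · rw [if_pos hi', ← mul_assoc, ← mul_assoc, gw l (by omega), zero_mul, zero_mul]
      · rw [if_neg hi', ← mul_assoc, h2 i (by omega) l hl, zero_mul]
    · refine full_of_mem wfull (wK _ ?_)
      rw [← CI.star_mul_mem, ← CI.star_mul_mem]
      exact self_mem _

end sys
end Glimm

end P8part

section P9part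
open Filter Topology



namespace Glimm

section hom1
attribute [local instance] instOrd instOrdR
variable {A : Type u} [NonUnitalCStarAlgebra A]

/-- functional calculus with complex functions of a real variable -/
noncomputable def Ph (h : A) (f : ℝ → ℂ) : A := cfcₙ (fun z : ℂ => f z.re) (star h * h)

theorem qsC (h : A) {z : ℂ} (hz : z ∈ quasispectrum ℂ (star h * h)) :
    0 ≤ z.re ∧ ((z.re : ℝ) : ℂ) = z := by
  have h1 : ((z.re : ℝ) : ℂ) = z :=
    (isSelfAdjoint_iff_isStarNormal_and_quasispectrumRestricts.1 (nn_sa h)).2.rightInvOn hz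
  refine ⟨qsp_nonneg h ?_, h1⟩
  rw [← quasispectrum.algebraMap_mem_iff ℂ]
  change ((z.re : ℝ) : ℂ) ∈ _
  rwa [h1]

variable (h : A) {f g : ℝ → ℂ}

theorem ctC (hf : Continuous f) {s : Set ℂ} : ContinuousOn (fun z : ℂ => f z.re) s :=
  (hf.comp Complex.continuous_re).continuousOn

theorem Ph_mul (hf : Continuous f) (hf0 : f 0 = 0) (hg : Continuous g) (hg0 : g 0 = 0) :
    Ph h f * Ph h g = Ph h (fun t => f t * g t) :=
  (cfcₙ_mul (fun z : ℂ => f z.re) (fun z : ℂ => g z.re) (star h * h) (ctC hf) (by simpa)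
    (ctC hg) (by simpa)).symm

theorem Ph_add (hf : Continuous f) (hf0 : f 0 = 0) (hg : Continuous g) (hg0 : g 0 = 0) :
    Ph h f + Ph h g = Ph h (fun t => f t + g t) :=
  (cfcₙ_add (a := star h * h) (fun z : ℂ => f z.re) (fun z : ℂ => g z.re) (ctC hf) (by simpa)
    (ctC hg) (by simpa)).symm

theorem Ph_sub (hf : Continuous f) (hf0 : f 0 = 0) (hg : Continuous g) (hg0 : g 0 = 0) :
    Ph h f - Ph h g = Ph h (fun t => f t - g t) :=
  (cfcₙ_sub (fun z : ℂ => f z.re) (fun z : ℂ => g z.re) (star h * h) (ctC hf) (by simpa)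
    (ctC hg) (by simpa)).symm

theorem Ph_smul (c : ℂ) (hf : Continuous f) (hf0 : f 0 = 0) :
    c • Ph h f = Ph h (fun t => c * f t) :=
  (cfcₙ_smul c (fun z : ℂ => f z.re) (star h * h) (ctC hf) (by simpa)).symm

theorem Ph_star : star (Ph h f) = Ph h (fun t => star (f t)) :=
  (cfcₙ_star (fun z : ℂ => f z.re) (star h * h)).symm

theorem Ph_id : Ph h (fun t => (t : ℂ)) = star h * h := by
  have hn : IsStarNormal (star h * h) := (nn_sa h).isStarNormal
  rw [Ph]
  conv_rhs => rw [← cfcₙ_id ℂ (star h * h)]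
  exact cfcₙ_congr (fun _ hz => (qsC h hz).2)

theorem Ph_norm {c : ℝ} (hb : ∀ t : ℝ, 0 ≤ t → ‖f t‖ ≤ c) : ‖Ph h f‖ ≤ c :=
  norm_cfcₙ_le (fun _ hz => hb _ (qsC h hz).1)

theorem Ph_congr (hb : ∀ t : ℝ, 0 ≤ t → f t = g t) : Ph h f = Ph h g :=
  cfcₙ_congr (fun _ hz => hb _ (qsC h hz).1)

/-- square-root cutoff -/
noncomputable def fq (τ t : ℝ) : ℝ := √t / max t τ

theorem fq_cont {τ : ℝ} (hτ : 0 < τ) : Continuous (fun t => (fq τ t : ℂ)) := by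
  refine Complex.continuous_ofReal.comp ?_
  unfold fq
  refine Continuous.div (by fun_prop) (by fun_prop) (fun s => ?_)
  exact (lt_max_of_lt_right hτ).ne'

theorem fq_zero (τ : ℝ) : ((fq τ 0 : ℝ) : ℂ) = 0 := by simp [fq]

theorem fq_sq {τ t : ℝ} (ht : 0 ≤ t) : fq τ t * t * fq τ t = fm τ t := by
  have := Real.mul_self_sqrt ht
  simp only [fq, fm, fn]
  calc √t / max t τ * t * (√t / max t τ) = (√t * √t) * t / max t τ ^ 2 := by ring
    _ = _ := by rw [this]; ring

theorem fq_diff {τ σ t δ : ℝ} (hτ : 0 < τ) (hσ : 0 < σ) (h1 : τ ≤ δ) (h2 : σ ≤ δ) (ht : 0 ≤ t) :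
    0 ≤ (fq τ t - fq σ t) * t * (fq τ t - fq σ t) ∧
    (fq τ t - fq σ t) * t * (fq τ t - fq σ t) ≤ 1 ∧
    (δ ≤ t → (fq τ t - fq σ t) * t * (fq τ t - fq σ t) = 0) := by
  have h3 := Real.mul_self_sqrt ht
  have e : (fq τ t - fq σ t) * t * (fq τ t - fq σ t) = (t / max t τ - t / max t σ) ^ 2 := by
    simp only [fq]
    calc (√t / max t τ - √t / max t σ) * t * (√t / max t τ - √t / max t σ)
        = (√t * √t) * t * (1 / max t τ - 1 / max t σ) ^ 2 := by ring
      _ = _ := by rw [h3]; ring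
  have b : ∀ τ : ℝ, 0 < τ → 0 ≤ t / max t τ ∧ t / max t τ ≤ 1 := by
    intro τ hτ
    have : 0 < max t τ := lt_max_of_lt_right hτ
    refine ⟨by positivity, ?_⟩
    rw [div_le_one this]; exact le_max_left _ _
  rw [e]
  refine ⟨by positivity, ?_, ?_⟩
  · have := b τ hτ
    have := b σ hσ
    rw [sq_le_one_iff_abs_le_one, abs_le]
    constructor <;> linarith
  · intro h
    rw [max_eq_left (h1.trans h), max_eq_left (h2.trans h)]; simp

/-- extension of a function on (0,1] to the line -/
noncomputable def ex (f : C₀(↥(Set.Ioc (0:ℝ) 1), ℂ)) (t : ℝ) : ℂ :=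
  if h : 0 < t then f ⟨min t 1, lt_min h one_pos, min_le_right _ _⟩ else 0

theorem ex_zero (f : C₀(↥(Set.Ioc (0:ℝ) 1), ℂ)) : ex f 0 = 0 := by simp [ex]

theorem ex_cont (f : C₀(↥(Set.Ioc (0:ℝ) 1), ℂ)) : Continuous (ex f) := by
  rw [continuous_iff_continuousAt]
  intro t
  rcases lt_trichotomy t 0 with ht | rfl | ht
  · have : ex f =ᶠ[𝓝 t] fun _ => 0 := by
      filter_upwards [gt_mem_nhds ht] with s hs
      simp [ex, hs.le]
    exact continuousAt_const.congr this.symm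
  · rw [ContinuousAt, ex_zero, Metric.tendsto_nhds]
    intro ε hε
    have h1 := Metric.tendsto_nhds.1 f.zero_at_infty' ε hε
    obtain ⟨K, hK, hKs⟩ := mem_cocompact.1 h1
    have hK' : IsCompact ((fun x : ↥(Set.Ioc (0:ℝ) 1) => (x : ℝ)) '' K) :=
      hK.image continuous_subtype_val
    have h0 : (0 : ℝ) ∈ ((fun x : ↥(Set.Ioc (0:ℝ) 1) => (x : ℝ)) '' K)ᶜ := by
      rintro ⟨x, -, hx⟩
      exact x.2.1.ne' hx
    have h2 : Tendsto (fun t : ℝ => min t 1) (𝓝 0) (𝓝 0) := by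
      have : Continuous (fun t : ℝ => min t 1) := by fun_prop
      simpa using this.tendsto 0
    filter_upwards [h2 (hK'.isClosed.isOpen_compl.mem_nhds h0)] with s hs
    by_cases hs0 : 0 < s
    · rw [ex, dif_pos hs0]
      apply hKs
      intro h
      exact hs ⟨_, h, rfl⟩
    · rw [ex, dif_neg hs0, dist_self]; exact hε
  · have : ContinuousOn (ex f) (Set.Ioi 0) := by
      rw [continuousOn_iff_continuous_domRestrict]
      have : (Set.Ioi 0).domRestrict (ex f) = fun s : Set.Ioi (0:ℝ) =>
          f ⟨min s 1, lt_min (Set.mem_Ioi.1 s.2) one_pos, min_le_right _ _⟩ := by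
        ext s
        rw [Set.domRestrict_apply, ex, dif_pos (Set.mem_Ioi.1 s.2)]
      rw [this]
      exact f.continuous.comp (Continuous.subtype_mk (by fun_prop) _)
    exact this.continuousAt (Ioi_mem_nhds ht)

/-- the functional calculus on functions on (0,1] -/
noncomputable def Ps (h : A) (f : C₀(↥(Set.Ioc (0:ℝ) 1), ℂ)) : A := Ph h (ex f)

theorem Ps_add (f g : C₀(↥(Set.Ioc (0:ℝ) 1), ℂ)) : Ps h (f + g) = Ps h f + Ps h g := by
  rw [Ps, Ps, Ps, Ph_add h (ex_cont f) (ex_zero f) (ex_cont g) (ex_zero g)]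
  congr 1; ext t; simp only [ex]; split_ifs <;> simp

theorem Ps_mul (f g : C₀(↥(Set.Ioc (0:ℝ) 1), ℂ)) : Ps h (f * g) = Ps h f * Ps h g := by
  rw [Ps, Ps, Ps, Ph_mul h (ex_cont f) (ex_zero f) (ex_cont g) (ex_zero g)]
  congr 1; ext t; simp only [ex]; split_ifs <;> simp

theorem Ps_smul (c : ℂ) (f : C₀(↥(Set.Ioc (0:ℝ) 1), ℂ)) : Ps h (c • f) = c • Ps h f := by
  rw [Ps, Ps, Ph_smul h c (ex_cont f) (ex_zero f)]
  congr 1; ext t; simp only [ex]; split_ifs <;> simp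

theorem Ps_star (f : C₀(↥(Set.Ioc (0:ℝ) 1), ℂ)) : Ps h (star f) = star (Ps h f) := by
  rw [Ps, Ps, Ph_star]
  congr 1; ext t; simp only [ex]; split_ifs <;> simp

theorem Ps_zero : Ps h 0 = 0 := by
  have := Ps_add h 0 0
  simpa using this

theorem Ps_sum {ι : Type*} (s : Finset ι) (f : ι → C₀(↥(Set.Ioc (0:ℝ) 1), ℂ)) :
    Ps h (∑ i ∈ s, f i) = ∑ i ∈ s, Ps h (f i) := by
  classical
  induction s using Finset.induction_on with
  | empty => simp [Ps_zero]
  | insert a s ha ih => rw [Finset.sum_insert ha, Finset.sum_insert ha, Ps_add, ih]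

theorem ex_small (f : C₀(↥(Set.Ioc (0:ℝ) 1), ℂ)) {ε : ℝ} (hε : 0 < ε) :
    ∃ δ > 0, ∀ t, 0 ≤ t → t < δ → ‖ex f t‖ < ε := by
  have h1 := (ex_cont f).tendsto 0
  rw [ex_zero] at h1
  obtain ⟨δ, hδ, h2⟩ := Metric.eventually_nhds_iff.1 (Metric.tendsto_nhds.1 h1 ε hε)
  refine ⟨δ, hδ, fun t ht h3 => ?_⟩
  have := h2 (y := t) (by rw [Real.dist_eq, sub_zero, abs_of_nonneg ht]; exact h3)
  simpa using this

end hom1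
end Glimm

end P9part

section P10part
open Filter Topology



namespace Glimm

section hom2
attribute [local instance] instOrd instOrdR
variable {A : Type u} [NonUnitalCStarAlgebra A] (h : A)

noncomputable def qq (τ : ℝ) : A := Ph h (fun t => (fq τ t : ℂ))

theorem qq_star (τ : ℝ) : star (qq h τ) = qq h τ := by
  rw [qq, Ph_star]; congr 1; ext t; simp

theorem qeq {τ : ℝ} (hτ : 0 < τ) :
    qq h τ * (star h * h) * qq h τ = Ph h (fun t => (fm τ t : ℂ)) := by
  rw [← Ph_id, qq, Ph_mul h (fq_cont hτ) (fq_zero τ) Complex.continuous_ofReal (by simp),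
    Ph_mul h (f := fun t => (fq τ t : ℂ) * (t : ℂ))
      ((fq_cont hτ).mul Complex.continuous_ofReal) (by simp) (fq_cont hτ) (fq_zero τ)]
  apply Ph_congr
  intro t ht
  rw [← fq_sq ht]; push_cast; ring

theorem fmc {τ : ℝ} (hτ : 0 < τ) : Continuous (fun t => (fm τ t : ℂ)) :=
  Complex.continuous_ofReal.comp (fm_cont hτ)

theorem v_mul {x y z : A} (hx : star x * y = z) (τ : ℝ) :
    star (x * qq h τ) * (y * qq h τ) = qq h τ * z * qq h τ := by
  rw [star_mul, qq_star, ← hx]; simp only [mul_assoc]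

theorem v_norm {x : A} (hx : star x * x = star h * h) {τ : ℝ} (hτ : 0 < τ) :
    ‖x * qq h τ‖ ≤ 1 := by
  have : ‖x * qq h τ‖ * ‖x * qq h τ‖ ≤ 1 := by
    rw [← CStarRing.norm_star_mul_self, v_mul h hx, qeq h hτ]
    refine Ph_norm h (fun t ht => ?_)
    rw [Complex.norm_real, Real.norm_of_nonneg (fm_mem hτ ht).1]
    exact (fm_mem hτ ht).2
  nlinarith [norm_nonneg (x * qq h τ)]

theorem v_diff {x : A} (hx : star x * x = star h * h) {τ σ δ ε : ℝ} (hτ : 0 < τ) (hσ : 0 < σ)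
    (h1 : τ ≤ δ) (h2 : σ ≤ δ) (f : C₀(↥(Set.Ioc (0:ℝ) 1), ℂ)) (hε : 0 ≤ ε)
    (hf : ∀ t, 0 ≤ t → t < δ → ‖ex f t‖ < ε) :
    ‖x * qq h τ * Ps h f - x * qq h σ * Ps h f‖ ≤ ε := by
  have e1 : x * qq h τ * Ps h f - x * qq h σ * Ps h f = x * ((qq h τ - qq h σ) * Ps h f) := by
    rw [sub_mul, mul_sub, mul_assoc, mul_assoc]
  have c1 : Continuous (fun t => (fq τ t : ℂ) - (fq σ t : ℂ)) := (fq_cont hτ).sub (fq_cont hσ)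
  have z1 : (fq τ 0 : ℂ) - (fq σ 0 : ℂ) = 0 := by rw [fq_zero, fq_zero, sub_zero]
  have e2 : (qq h τ - qq h σ) * Ps h f = Ph h (fun t => ((fq τ t : ℂ) - (fq σ t : ℂ)) * ex f t) := by
    rw [qq, qq, Ph_sub h (fq_cont hτ) (fq_zero τ) (fq_cont hσ) (fq_zero σ), Ps,
      Ph_mul h c1 z1 (ex_cont f) (ex_zero f)]
  have c2 : Continuous (fun t => ((fq τ t : ℂ) - (fq σ t : ℂ)) * ex f t) := c1.mul (ex_cont f)
  have z2 : ((fq τ 0 : ℂ) - (fq σ 0 : ℂ)) * ex f 0 = 0 := by rw [z1, zero_mul]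
  have c3 : Continuous (fun t => star (((fq τ t : ℂ) - (fq σ t : ℂ)) * ex f t)) := c2.star
  have z3 : star (((fq τ 0 : ℂ) - (fq σ 0 : ℂ)) * ex f 0) = 0 := by rw [z2, star_zero]
  have key : ‖x * ((qq h τ - qq h σ) * Ps h f)‖ * ‖x * ((qq h τ - qq h σ) * Ps h f)‖ ≤ ε * ε := by
    rw [← CStarRing.norm_star_mul_self, star_mul]
    have e3 : star ((qq h τ - qq h σ) * Ps h f) * star x * (x * ((qq h τ - qq h σ) * Ps h f)) =
        star ((qq h τ - qq h σ) * Ps h f) * (star x * x) * ((qq h τ - qq h σ) * Ps h f) := by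
      simp only [mul_assoc]
    rw [e3, hx, e2, ← Ph_id, Ph_star, Ph_mul h c3 z3 Complex.continuous_ofReal (by simp),
      Ph_mul h (f := fun t => star (((fq τ t : ℂ) - (fq σ t : ℂ)) * ex f t) * (t : ℂ))
        (c3.mul Complex.continuous_ofReal) (by simp) c2 z2]
    refine Ph_norm h (fun t ht => ?_)
    obtain ⟨d1, d2, d3⟩ := fq_diff hτ hσ h1 h2 ht
    have e4 : ‖star (((fq τ t : ℂ) - (fq σ t : ℂ)) * ex f t) * (t : ℂ) *
        (((fq τ t : ℂ) - (fq σ t : ℂ)) * ex f t)‖ =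
        ((fq τ t - fq σ t) * t * (fq τ t - fq σ t)) * (‖ex f t‖ * ‖ex f t‖) := by
      rw [norm_mul, norm_mul, norm_star, norm_mul, ← Complex.ofReal_sub, Complex.norm_real,
        Complex.norm_real, Real.norm_of_nonneg ht, Real.norm_eq_abs]
      have := abs_mul_abs_self (fq τ t - fq σ t)
      calc _ = (|fq τ t - fq σ t| * |fq τ t - fq σ t|) * t * (‖ex f t‖ * ‖ex f t‖) := by ring
        _ = _ := by rw [this]; ring
    rw [e4]
    by_cases hδ : δ ≤ t
    · rw [d3 hδ, zero_mul]; positivity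
    · have := hf t ht (not_le.1 hδ)
      have h5 : ‖ex f t‖ * ‖ex f t‖ ≤ ε * ε := by gcongr
      have h6 : 0 ≤ ‖ex f t‖ * ‖ex f t‖ := by positivity
      nlinarith
  rw [e1]
  exact abs_le_of_sq_le_sq' (by nlinarith) hε |>.2

theorem m_diff {τ δ ε : ℝ} (hτ : 0 < τ) (h1 : τ ≤ δ) (f : C₀(↥(Set.Ioc (0:ℝ) 1), ℂ)) (hε : 0 ≤ ε)
    (hf : ∀ t, 0 ≤ t → t < δ → ‖ex f t‖ < ε) :
    ‖Ph h (fun t => (fm τ t : ℂ)) * Ps h f - Ps h f‖ ≤ ε := by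
  rw [Ps, Ph_mul h (fmc hτ) (by simp) (ex_cont f) (ex_zero f),
    Ph_sub h (f := fun t => (fm τ t : ℂ) * ex f t) ((fmc hτ).mul (ex_cont f)) (by simp) (ex_cont f) (ex_zero f)]
  refine Ph_norm h (fun t ht => ?_)
  have e : (fm τ t : ℂ) * ex f t - ex f t = ((fm τ t - 1 : ℝ) : ℂ) * ex f t := by push_cast; ring
  rw [e, norm_mul, Complex.norm_real]
  by_cases hδ : δ ≤ t
  · rw [fm_eq_one hτ (h1.trans hδ)]; simpa
  · have h2 := hf t ht (not_le.1 hδ)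
    have h3 := fm_mem hτ ht
    have : ‖fm τ t - 1‖ ≤ 1 := by rw [Real.norm_eq_abs, abs_le]; constructor <;> linarith
    nlinarith [norm_nonneg (ex f t)]

noncomputable def tn (n : ℕ) : ℝ := 1 / ((n : ℝ) + 1)
theorem tn_pos (n : ℕ) : 0 < tn n := by unfold tn; positivity
theorem tn_lim {δ : ℝ} (hδ : 0 < δ) : ∃ N, ∀ n ≥ N, tn n ≤ δ := by
  obtain ⟨N, hN⟩ := exists_nat_one_div_lt hδ
  refine ⟨N, fun n hn => le_trans ?_ hN.le⟩
  unfold tn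
  have : (N : ℝ) ≤ n := by exact_mod_cast hn
  gcongr

theorem v_cauchy {x : A} (hx : star x * x = star h * h) (f : C₀(↥(Set.Ioc (0:ℝ) 1), ℂ)) :
    CauchySeq (fun n => x * qq h (tn n) * Ps h f) := by
  rw [Metric.cauchySeq_iff]
  intro ε hε
  obtain ⟨δ, hδ, hf⟩ := ex_small f (half_pos hε)
  obtain ⟨N, hN⟩ := tn_lim hδ
  refine ⟨N, fun m hm n hn => ?_⟩
  rw [dist_eq_norm]
  have := v_diff h hx (tn_pos m) (tn_pos n) (hN m hm) (hN n hn) f (half_pos hε).le hf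
  linarith

theorem m_lim (f : C₀(↥(Set.Ioc (0:ℝ) 1), ℂ)) :
    Tendsto (fun n => Ph h (fun t => (fm (tn n) t : ℂ)) * Ps h f) atTop (𝓝 (Ps h f)) := by
  rw [Metric.tendsto_atTop]
  intro ε hε
  obtain ⟨δ, hδ, hf⟩ := ex_small f (half_pos hε)
  obtain ⟨N, hN⟩ := tn_lim hδ
  refine ⟨N, fun n hn => ?_⟩
  rw [dist_eq_norm]
  have := m_diff h (tn_pos n) (hN n hn) f (half_pos hε).le hf
  linarith

theorem w_cauchy {x y : A} (hx : star x * x = star h * h) (hy : star y * y = star h * h)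
    (f : C₀(↥(Set.Ioc (0:ℝ) 1), ℂ)) :
    CauchySeq (fun n => x * qq h (tn n) * Ps h f * star (y * qq h (tn n))) := by
  have h1 := v_cauchy h hx f
  have h2 := v_cauchy h hy (star f)
  rw [Metric.cauchySeq_iff] at *
  intro ε hε
  obtain ⟨N, hN⟩ := h1 (ε / 2) (half_pos hε)
  obtain ⟨M, hM⟩ := h2 (ε / 2) (half_pos hε)
  refine ⟨max N M, fun m hm n hn => ?_⟩
  have a1 := hN m (le_of_max_le_left hm) n (le_of_max_le_left hn)
  have a2 := hM m (le_of_max_le_right hm) n (le_of_max_le_right hn)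
  rw [dist_eq_norm] at *
  have e : x * qq h (tn m) * Ps h f * star (y * qq h (tn m)) -
      x * qq h (tn n) * Ps h f * star (y * qq h (tn n)) =
      (x * qq h (tn m) * Ps h f - x * qq h (tn n) * Ps h f) * star (y * qq h (tn m)) +
      x * qq h (tn n) * star (y * qq h (tn m) * Ps h (star f) - y * qq h (tn n) * Ps h (star f)) := by
    rw [star_sub, star_mul _ (Ps h (star f)), star_mul _ (Ps h (star f)), Ps_star, star_star]
    noncomm_ring
  rw [e]
  refine (norm_add_le _ _).trans_lt ?_
  have b1 := v_norm h hy (tn_pos m)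
  have b2 := v_norm h hx (tn_pos n)
  have c1 : ‖(x * qq h (tn m) * Ps h f - x * qq h (tn n) * Ps h f) * star (y * qq h (tn m))‖ <
      ε / 2 := by
    refine (norm_mul_le _ _).trans_lt ?_
    rw [norm_star]
    refine lt_of_le_of_lt (mul_le_of_le_one_right (norm_nonneg _) b1) a1
  have c2 : ‖x * qq h (tn n) *
      star (y * qq h (tn m) * Ps h (star f) - y * qq h (tn n) * Ps h (star f))‖ < ε / 2 := by
    refine (norm_mul_le _ _).trans_lt ?_
    rw [norm_star]
    refine lt_of_le_of_lt (mul_le_of_le_one_left (norm_nonneg _) b2) a2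
  linarith

end hom2
end Glimm

end P10part

section P11part
open Filter Topology



namespace Glimm

section hom3
attribute [local instance] instOrd instOrdR
variable {A : Type u} [NonUnitalCStarAlgebra A]

theorem hom_ex {k : ℕ} (h : A) (x : Fin k → A)
    (hx : ∀ i l, star (x i) * x l = if i = l then star h * h else 0) :
    ∃ φ : Matrix (Fin k) (Fin k) C₀(↥(Set.Ioc (0:ℝ) 1), ℂ) →⋆ₙₐ[ℂ] A, ∀ F,
      Tendsto (fun n => ∑ i, ∑ j, x i * qq h (tn n) * Ps h (F i j) * star (x j * qq h (tn n)))
        atTop (𝓝 (φ F)) := by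
  have hxx : ∀ i, star (x i) * x i = star h * h := fun i => by rw [hx, if_pos rfl]
  set V : ℕ → Fin k → A := fun n i => x i * qq h (tn n) with hV
  have vn : ∀ n i, ‖V n i‖ ≤ 1 := fun n i => v_norm h (hxx i) (tn_pos n)
  let M : ℕ → A := fun n => Ph h (fun t => (fm (tn n) t : ℂ))
  have vv : ∀ n i l, star (V n i) * V n l = if i = l then M n else 0 := by
    intro n i l
    rw [hV]; dsimp only
    rw [v_mul h (hx i l)]
    split_ifs
    · exact qeq h (tn_pos n)
    · rw [mul_zero, zero_mul]
  let Sn : ℕ → Matrix (Fin k) (Fin k) C₀(↥(Set.Ioc (0:ℝ) 1), ℂ) → A := fun n F =>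
    ∑ i, ∑ j, V n i * Ps h (F i j) * star (V n j)
  have hlim : ∀ F, ∃ y, Tendsto (fun n => Sn n F) atTop (𝓝 y) := by
    intro F
    have : ∀ i j, ∃ y, Tendsto (fun n => V n i * Ps h (F i j) * star (V n j)) atTop (𝓝 y) :=
      fun i j => cauchySeq_tendsto_of_complete (w_cauchy h (hxx i) (hxx j) (F i j))
    choose y hy using this
    exact ⟨∑ i, ∑ j, y i j, tendsto_finsetSum _ fun i _ => tendsto_finsetSum _ fun j _ => hy i j⟩
  choose φ hφ using hlim
  refine ⟨⟨⟨⟨⟨φ, ?_⟩, ?_, ?_⟩, ?_⟩, ?_⟩, hφ⟩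
  · intro c F
    refine tendsto_nhds_unique (hφ (c • F)) (((hφ F).const_smul c).congr fun n => ?_)
    simp only [Sn, Matrix.smul_apply, Ps_smul, Finset.smul_sum, mul_smul_comm, smul_mul_assoc,
      MonoidHom.id_apply]
  · refine tendsto_nhds_unique (hφ 0) (tendsto_const_nhds.congr fun n => ?_)
    simp [Sn, Ps_zero]
  · intro F G
    refine tendsto_nhds_unique (hφ (F + G)) (((hφ F).add (hφ G)).congr fun n => ?_)
    simp only [Sn, Matrix.add_apply, Ps_add, mul_add, add_mul, Finset.sum_add_distrib]
  · intro F G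
    have e : ∀ n, Sn n F * Sn n G - Sn n (F * G) = ∑ i, ∑ m, ∑ j, V n i * (Ps h (F i j) *
        (M n * Ps h (G j m) - Ps h (G j m))) * star (V n m) := by
      intro n
      have e1 : Sn n F * Sn n G = ∑ i, ∑ m, ∑ j, V n i * (Ps h (F i j) *
          (M n * Ps h (G j m))) * star (V n m) := by
        simp only [Sn, Finset.sum_mul]
        refine Finset.sum_congr rfl fun i _ => ?_
        rw [Finset.sum_comm (s := Finset.univ) (t := Finset.univ) (f := fun m j =>
          V n i * (Ps h (F i j) * (M n * Ps h (G j m))) * star (V n m))]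
        refine Finset.sum_congr rfl fun j _ => ?_
        rw [Finset.mul_sum, Finset.sum_eq_single j]
        · rw [Finset.mul_sum]
          refine Finset.sum_congr rfl fun m _ => ?_
          have := vv n j j
          rw [if_pos rfl] at this
          rw [← this]; simp only [mul_assoc]
        · intro l _ hl
          rw [Finset.mul_sum]
          refine Finset.sum_eq_zero fun m _ => ?_
          have := vv n j l
          rw [if_neg hl.symm] at this
          calc V n i * Ps h (F i j) * star (V n j) * (V n l * Ps h (G l m) * star (V n m))
              = V n i * Ps h (F i j) * (star (V n j) * V n l) * (Ps h (G l m) * star (V n m)) := by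
                simp only [mul_assoc]
            _ = 0 := by rw [this, mul_zero, zero_mul]
        · intro hj; exact absurd (Finset.mem_univ _) hj
      rw [e1]
      simp only [Sn, Matrix.mul_apply, Ps_sum, Ps_mul, Finset.mul_sum, Finset.sum_mul,
        ← Finset.sum_sub_distrib, mul_sub, sub_mul]
    have t0 : Tendsto (fun n => Sn n F * Sn n G - Sn n (F * G)) atTop (𝓝 0) := by
      have : (0 : A) = ∑ i : Fin k, ∑ m : Fin k, ∑ j : Fin k, (0 : A) := by simp
      simp only [e]
      rw [this]
      refine tendsto_finsetSum _ fun i _ => tendsto_finsetSum _ fun m _ =>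
        tendsto_finsetSum _ fun j _ => ?_
      have h1 : Tendsto (fun n => ‖Ps h (F i j)‖ * ‖M n * Ps h (G j m) - Ps h (G j m)‖) atTop
          (𝓝 0) := by
        have := (tendsto_iff_norm_sub_tendsto_zero.1 (m_lim h (G j m))).const_mul ‖Ps h (F i j)‖
        rwa [mul_zero] at this
      refine squeeze_zero_norm (fun n => ?_) h1
      calc _ ≤ ‖V n i‖ * ‖Ps h (F i j) * (M n * Ps h (G j m) - Ps h (G j m))‖ * ‖star (V n m)‖ :=
            (norm_mul_le _ _).trans (by gcongr; exact norm_mul_le _ _)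
        _ ≤ 1 * ‖Ps h (F i j) * (M n * Ps h (G j m) - Ps h (G j m))‖ * 1 := by
            rw [norm_star]
            gcongr
            · exact vn n i
            · exact vn n m
        _ ≤ _ := by rw [one_mul, mul_one]; exact norm_mul_le _ _
    have t1 := ((hφ F).mul (hφ G)).sub t0
    rw [sub_zero] at t1
    refine tendsto_nhds_unique (hφ (F * G)) (t1.congr fun n => ?_)
    abel
  · intro F
    refine tendsto_nhds_unique (hφ (star F)) (((hφ F).star).congr fun n => ?_)
    simp only [Sn, star_sum, star_mul, star_star, Matrix.star_apply, Ps_star]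
    rw [Finset.sum_comm]
    simp only [mul_assoc]

/-- the identity function -/
noncomputable def idC : C₀(↥(Set.Ioc (0:ℝ) 1), ℂ) where
  toFun x := ((x : ℝ) : ℂ)
  continuous_toFun := by fun_prop
  zero_at_infty' := by
    rw [Metric.tendsto_nhds]
    intro ε hε
    rw [Filter.Eventually, mem_cocompact]
    refine ⟨{x | ε ≤ (x : ℝ)}, ?_, ?_⟩
    · rw [Subtype.isCompact_iff]
      have : (Subtype.val '' {x : ↥(Set.Ioc (0:ℝ) 1) | ε ≤ (x : ℝ)}) = Set.Icc ε 1 := by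
        ext t
        constructor
        · rintro ⟨x, hx, rfl⟩; exact ⟨hx, x.2.2⟩
        · rintro ⟨h1, h2⟩; exact ⟨⟨t, hε.trans_le h1, h2⟩, h1, rfl⟩
      rw [this]; exact isCompact_Icc
    · intro x hx
      have h1 : (x : ℝ) < ε := not_le.1 hx
      show dist ((x : ℝ) : ℂ) 0 < ε
      rw [dist_zero_right, Complex.norm_real, Real.norm_of_nonneg x.2.1.le]; exact h1

theorem ex_idC {t : ℝ} (ht : 0 ≤ t) : ex idC t = (min t 1 : ℝ) := by
  rw [ex]
  split_ifs with h
  · rfl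
  · have : t = 0 := le_antisymm (not_lt.1 h) ht
    simp [this]

theorem full_lim (h x : A) (hx : star x * x = star h * h) :
    Tendsto (fun n => star x * (x * qq h (tn n) * Ps h idC * star (x * qq h (tn n))) * x) atTop
      (𝓝 (star h * h * Ps h idC)) := by
  rw [Metric.tendsto_atTop]
  intro ε hε
  obtain ⟨N, hN⟩ := tn_lim (half_pos hε)
  refine ⟨N, fun n hn => ?_⟩
  set τ := tn n with hτd
  have hτ : 0 < τ := tn_pos n
  have hle : τ ≤ ε / 2 := hN n hn
  have ct := Complex.continuous_ofReal
  have e1 : star x * (x * qq h τ * Ps h idC * star (x * qq h τ)) * x =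
      Ph h (fun t => (t : ℂ) * (fq τ t : ℂ) * ex idC t * ((fq τ t : ℂ) * (t : ℂ))) := by
    rw [← Ph_mul h (f := fun t => (t : ℂ) * (fq τ t : ℂ) * ex idC t)
      (g := fun t => (fq τ t : ℂ) * (t : ℂ)) ((ct.mul (fq_cont hτ)).mul (ex_cont _)) (by simp)
      ((fq_cont hτ).mul ct) (by simp),
      ← Ph_mul h (f := fun t => (t : ℂ) * (fq τ t : ℂ)) (g := ex idC) (ct.mul (fq_cont hτ)) (by simp)
        (ex_cont _) (ex_zero _),
      ← Ph_mul h (f := fun t => (t : ℂ)) ct (by simp) (fq_cont hτ) (fq_zero τ),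
      ← Ph_mul h (f := fun t => (fq τ t : ℂ)) (fq_cont hτ) (fq_zero τ) ct (by simp), Ph_id,
      star_mul, qq_star, ← hx]
    simp only [Ps, qq, mul_assoc]
  rw [dist_eq_norm, e1, Ps, ← Ph_id, Ph_mul h ct (by simp) (ex_cont _) (ex_zero _),
    Ph_sub h (f := fun t => (t : ℂ) * (fq τ t : ℂ) * ex idC t * ((fq τ t : ℂ) * (t : ℂ)))
      (g := fun t => (t : ℂ) * ex idC t)
      (((ct.mul (fq_cont hτ)).mul (ex_cont _)).mul ((fq_cont hτ).mul ct)) (by simp)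
      (ct.mul (ex_cont _)) (by simp)]
  refine lt_of_le_of_lt (Ph_norm h (c := τ) fun t ht => ?_) (by linarith)
  have e2 : (t : ℂ) * (fq τ t : ℂ) * ex idC t * ((fq τ t : ℂ) * (t : ℂ)) - (t : ℂ) * ex idC t =
      ((t * min t 1 * (fm τ t - 1) : ℝ) : ℂ) := by
    rw [ex_idC ht, ← fq_sq ht]; push_cast; ring
  rw [e2, Complex.norm_real, Real.norm_eq_abs, abs_mul, abs_of_nonneg (by positivity)]
  rcases le_total τ t with h1 | h1
  · rw [fm_eq_one hτ h1]; simpa using hτ.le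
  · have h3 := fm_mem hτ ht
    have h4 : |fm τ t - 1| ≤ 1 := by rw [abs_le]; constructor <;> linarith
    have h5 : t * min t 1 ≤ τ := by
      have : min t 1 ≤ 1 := min_le_right _ _
      nlinarith
    have h6 : 0 ≤ t * min t 1 := by positivity
    nlinarith

theorem cube_id (h : A) : star h * h * Ps h idC * Ph h (fun t => ((t * max t 1 : ℝ) : ℂ)) =
    star h * h * star (star h * h) * (star h * h) := by
  have ct := Complex.continuous_ofReal
  have c1 : Continuous (fun t : ℝ => ((t * max t 1 : ℝ) : ℂ)) := by fun_prop
  rw [(nn_sa h).star_eq, ← Ph_id, Ps, Ph_mul h ct (by simp) (ex_cont _) (ex_zero _),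
    Ph_mul h (f := fun t => (t : ℂ) * ex idC t) (ct.mul (ex_cont _)) (by simp) c1 (by simp),
    Ph_mul h ct (by simp) ct (by simp),
    Ph_mul h (f := fun t => (t : ℂ) * (t : ℂ)) (ct.mul ct) (by simp) ct (by simp)]
  refine Ph_congr h fun t ht => ?_
  rw [ex_idC ht]
  have := min_mul_max t 1
  calc _ = ((t * t * (min t 1 * max t 1) : ℝ) : ℂ) := by push_cast; ring
    _ = _ := by rw [this]; push_cast; ring

/-- closed two-sided ideals are closed ideals -/
def toCI (I : TwoSidedIdeal A) (hI : IsClosed (I : Set A)) : CI A where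
  carrier := I
  zero_mem' := I.zero_mem
  add_mem' := I.add_mem
  smul_mem' c a ha := by
    have : c • a ∈ closure (I : Set A) := by
      rw [Metric.mem_closure_iff]
      intro ε hε
      obtain ⟨e, -, -, he, -⟩ := appr a (ε := ε / (‖c‖ + 1)) (by positivity)
      refine ⟨(c • e) * a, I.mul_mem_left _ _ ha, ?_⟩
      rw [dist_comm, dist_eq_norm, smul_mul_assoc, ← smul_sub, norm_smul]
      rw [lt_div_iff₀ (by positivity)] at he
      nlinarith [norm_nonneg (e * a - a), norm_nonneg c]
    rwa [hI.closure_eq] at this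
  closed' := hI
  mulL' a x hx := I.mul_mem_left a x hx
  mulR' a x hx := I.mul_mem_right x a hx

end hom3
end Glimm

end P11part

open Glimm Filter Topology in
theorem Glimm.main_aux
    {A : Type u} [NonUnitalCStarAlgebra A] [TopologicalSpace.SeparableSpace A]
    (hsr1 : Dense {a : Unitization ℂ A | IsUnit a})
    (hel : ∀ (H : Type u) [NormedAddCommGroup H] [InnerProductSpace ℂ H] [CompleteSpace H],
        Nontrivial H → ∀ φ : A →⋆ₙₐ[ℂ] (H →L[ℂ] H),
          Set.range φ ≠ {T : H →L[ℂ] H | IsCompactOperator T})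
    (k : ℕ) (hk : 1 ≤ k) :
    ∃ φ : Matrix (Fin k) (Fin k) C₀(↥(Set.Ioc (0:ℝ) 1), ℂ) →⋆ₙₐ[ℂ] A,
      ∀ I : TwoSidedIdeal A, IsClosed (I : Set A) →
        (∀ x, φ x ∈ I) → ∀ a : A, a ∈ I := by
  obtain ⟨g, g1, g2, g3⟩ := exists_g (A := A) (fun D hfull c ε hε =>
    D.sqz hsr1 (fun J hJ a => local_sq hel D hfull J hJ a) c hε)
  obtain ⟨x, h, hx, -, hf⟩ := sys_ex hsr1 g g1 g2 g3 (k - 1)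
  have hx' : ∀ i l : Fin k, star (x i) * x l = if i = l then star h * h else 0 := by
    intro i l
    have := hx i (by omega) l (by omega)
    simpa only [Fin.ext_iff] using this
  obtain ⟨φ, hφ⟩ := hom_ex h (fun i : Fin k => x i) hx'
  refine ⟨φ, fun I hI hmem a => ?_⟩
  let i0 : Fin k := ⟨0, hk⟩
  let F : Matrix (Fin k) (Fin k) C₀(↥(Set.Ioc (0:ℝ) 1), ℂ) :=
    fun i j => if i = i0 then (if j = i0 then idC else 0) else 0
  have h1 := hφ F
  have e : ∀ n, (∑ i : Fin k, ∑ j : Fin k,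
      x i * qq h (tn n) * Ps h (F i j) * star (x j * qq h (tn n))) =
      x 0 * qq h (tn n) * Ps h idC * star (x 0 * qq h (tn n)) := by
    intro n
    rw [Finset.sum_eq_single i0, Finset.sum_eq_single i0]
    · simp [F, i0]
    · intro j _ hj
      simp [F, hj, Ps_zero]
    · simp
    · intro i _ hi
      simp [F, hi, Ps_zero]
    · simp
  have h2 := (h1.const_mul (star (x 0))).mul_const (x 0)
  simp only [e] at h2
  have h00 : star (x 0) * x 0 = star h * h := by simpa using hx' i0 i0
  have h3 := tendsto_nhds_unique h2 (full_lim h (x 0) h00)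
  let K : CI A := toCI I hI
  have hK : φ F ∈ K := hmem F
  have h4 : star h * h * Ps h idC ∈ K := by
    rw [← h3]
    exact K.mulR _ (K.mulL _ hK)
  have h5 : star h * h ∈ K := by
    apply CI.cube_mem
    rw [← cube_id]
    exact K.mulR _ h4
  exact full_of_mem (K := K) hf h5 a

/-- **Global Glimm halving for separable C*-algebras of stable rank one without
elementary quotients.** If a separable C*-algebra `A` has stable rank one (i.e. the
invertible elements are dense in its minimal unitization) and admits no surjective
*-homomorphism onto the compact operators of a nonzero complex Hilbert space, then for
every `k ≥ 1` there is a *-homomorphism from `M_k(C₀((0,1]))` into `A` with full range. -/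
theorem glimm_halving_separable_stableRankOne_of_no_elementary_quotient
    {A : Type u} [NonUnitalCStarAlgebra A] [TopologicalSpace.SeparableSpace A]
    (hsr1 : Dense {a : Unitization ℂ A | IsUnit a})
    (hel : ∀ (H : Type u) [NormedAddCommGroup H] [InnerProductSpace ℂ H] [CompleteSpace H],
        Nontrivial H → ∀ φ : A →⋆ₙₐ[ℂ] (H →L[ℂ] H),
          Set.range φ ≠ {T : H →L[ℂ] H | IsCompactOperator T})
    (k : ℕ) (hk : 1 ≤ k) :
    ∃ φ : Matrix (Fin k) (Fin k) C₀(↥(Set.Ioc (0:ℝ) 1), ℂ) →⋆ₙₐ[ℂ] A,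
      ∀ I : TwoSidedIdeal A, IsClosed (I : Set A) →
        (∀ x, φ x ∈ I) → ∀ a : A, a ∈ I := by
  exact Glimm.main_aux hsr1 hel k hk
end

section
/- Let S be a Cu-semigroup. Then the following conditions are equivalent: (i) S has weak cancellation, i.e., x + z ≪ y + z implies x ≪ y for all x, y, z ∈ S; (ii) for all x, y, z ∈ S, x + z ≪ y + z implies x ≤ y; (iii) for all x, y, z, z' ∈ S, if x + z ≤ y + z' and z' ≪ z, then x ≤ y. -/
/-- The way-below (compact containment) relation on a partially ordered set:
`WayBelow x y` holds if whenever `(y n)` is an increasing sequence admitting a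
supremum `s` with `y ≤ s`, then `x ≤ y n` for some `n`. -/
def WayBelow {S : Type*} [PartialOrder S] (x y : S) : Prop :=
  ∀ f : ℕ → S, Monotone f → ∀ s : S, IsLUB (Set.range f) s → y ≤ s → ∃ n, x ≤ f n

/-- An abstract Cuntz semigroup (Cu-semigroup): a positively ordered commutative
monoid satisfying the axioms (O1)-(O4). -/
class CuSemigroup (S : Type*) [AddCommMonoid S] [PartialOrder S] : Prop where
  /-- The order is positive. -/
  zero_le : ∀ x : S, 0 ≤ x
  /-- Addition is order-preserving. -/
  add_le_add : ∀ {x y z w : S}, x ≤ y → z ≤ w → x + z ≤ y + w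
  /-- (O1): every increasing sequence has a supremum. -/
  O1 : ∀ f : ℕ → S, Monotone f → ∃ s : S, IsLUB (Set.range f) s
  /-- (O2): every element is the supremum of a `≪`-increasing sequence. -/
  O2 : ∀ x : S, ∃ f : ℕ → S, (∀ n, WayBelow (f n) (f (n + 1))) ∧ IsLUB (Set.range f) x
  /-- (O3): the way-below relation is additive. -/
  O3 : ∀ {x' x y' y : S}, WayBelow x' x → WayBelow y' y → WayBelow (x' + y') (x + y)
  /-- (O4): addition is compatible with suprema of increasing sequences. -/
  O4 : ∀ (f g : ℕ → S), Monotone f → Monotone g → ∀ a b : S,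
        IsLUB (Set.range f) a → IsLUB (Set.range g) b →
        IsLUB (Set.range fun n => f n + g n) (a + b)

/-- Axiom (O5) (almost algebraic order). -/
def O5 (S : Type*) [AddCommMonoid S] [PartialOrder S] : Prop :=
  ∀ x' x z : S, WayBelow x' x → x ≤ z → ∃ w : S, x' + w ≤ z ∧ z ≤ x + w

/-- Axiom (O6+). -/
def O6plus (S : Type*) [AddCommMonoid S] [PartialOrder S] : Prop :=
  ∀ a b c x' x y' y : S, a ≤ b + c →
    WayBelow x' x → x ≤ a → x ≤ b → WayBelow y' y → y ≤ a → y ≤ c →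
    ∃ e f : S, a ≤ e + f ∧ WayBelow x' e ∧ e ≤ a ∧ e ≤ b ∧
      WayBelow y' f ∧ f ≤ a ∧ f ≤ c

/-- Weak cancellation: `x + z ≪ y + z` implies `x ≪ y`. -/
def WeakCancel (S : Type*) [AddCommMonoid S] [PartialOrder S] : Prop :=
  ∀ x y z : S, WayBelow (x + z) (y + z) → WayBelow x y

/-- A Cu-semigroup is countably based if there is a countable subset `B` such that every
element is the supremum of a `≪`-increasing sequence with elements in `B`. -/
def CountablyBased (S : Type*) [AddCommMonoid S] [PartialOrder S] : Prop :=
  ∃ B : Set S, B.Countable ∧ ∀ x : S, ∃ f : ℕ → S, (∀ n, f n ∈ B) ∧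
    (∀ n, WayBelow (f n) (f (n + 1))) ∧ IsLUB (Set.range f) x

/-- Addition distributes over the infimum operation. -/
def InfDistrib (S : Type*) [AddCommMonoid S] [SemilatticeInf S] : Prop :=
  ∀ x y z : S, (x + z) ⊓ (y + z) = (x ⊓ y) + z

/-- A functional on an ordered monoid: a `[0,∞]`-valued map preserving `0`, addition,
order, and suprema of increasing sequences. -/
def IsFunctional {S : Type*} [AddCommMonoid S] [PartialOrder S] (l : S → ENNReal) : Prop :=
  l 0 = 0 ∧ (∀ x y : S, l (x + y) = l x + l y) ∧ (∀ x y : S, x ≤ y → l x ≤ l y) ∧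
    ∀ (f : ℕ → S) (s : S), Monotone f → IsLUB (Set.range f) s → l s = ⨆ n, l (f n)

/-- An element is soft if each of its way-below approximants `x'` satisfies
`(k+1)·x' ≤ k·x` for some `k`. -/
def Soft {S : Type*} [AddCommMonoid S] [PartialOrder S] (x : S) : Prop :=
  ∀ x' : S, WayBelow x' x → ∃ k : ℕ, (k + 1) • x' ≤ k • x

/-- An element `x` is full if `∞·x = sup_n n·x` exists and dominates every element. -/
def IsFull {S : Type*} [AddCommMonoid S] [PartialOrder S] (x : S) : Prop :=
  ∃ s : S, IsLUB (Set.range fun n : ℕ => n • x) s ∧ ∀ t : S, t ≤ s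

theorem wb_le {S : Type*} [PartialOrder S] {x y : S} (h : WayBelow x y) : x ≤ y := by
  obtain ⟨_, hn⟩ := h (fun _ => y) monotone_const y (by simp [Set.range_const]) le_rfl
  exact hn

theorem wb_mono {S : Type*} [PartialOrder S] {a x y b : S} (h1 : a ≤ x) (h : WayBelow x y)
    (h2 : y ≤ b) : WayBelow a b := by
  intro f hf s hs hb
  obtain ⟨n, hn⟩ := h f hf s hs (h2.trans hb)
  exact ⟨n, h1.trans hn⟩

theorem wb_seq {S : Type*} [AddCommMonoid S] [PartialOrder S] [CuSemigroup S] (x : S) :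
    ∃ f : ℕ → S, Monotone f ∧ (∀ n, WayBelow (f n) x) ∧ IsLUB (Set.range f) x := by
  obtain ⟨f, hf, hx⟩ := CuSemigroup.O2 x
  exact ⟨f, monotone_nat_of_le_succ fun n => wb_le (hf n),
    fun n => wb_mono le_rfl (hf n) (hx.1 ⟨n + 1, rfl⟩), hx⟩

/-- Equivalent formulations of weak cancellation in a Cu-semigroup. -/
theorem weakCancel_tfae {S : Type*} [AddCommMonoid S] [PartialOrder S] [CuSemigroup S] :
    List.TFAE
      [ ∀ x y z : S, WayBelow (x + z) (y + z) → WayBelow x y,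
        ∀ x y z : S, WayBelow (x + z) (y + z) → x ≤ y,
        ∀ x y z z' : S, x + z ≤ y + z' → WayBelow z' z → x ≤ y ] := by
  tfae_have 1 → 2 := fun h x y z hxy => wb_le (h x y z hxy)
  tfae_have 2 → 3 := by
    intro h x y z z' hle hz
    obtain ⟨f, _, hfx, hx⟩ := wb_seq x
    obtain ⟨g, hg, hgz, hzl⟩ := wb_seq z
    obtain ⟨m, hm⟩ := hz g hg z hzl le_rfl
    refine hx.2 ?_
    rintro _ ⟨n, rfl⟩
    exact h (f n) y (g m) (wb_mono le_rfl (CuSemigroup.O3 (hfx n) (hgz m))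
      (hle.trans (CuSemigroup.add_le_add le_rfl hm)))
  tfae_have 3 → 1 := by
    intro h x y z hxy
    obtain ⟨f, hf, hfy, hy⟩ := wb_seq y
    obtain ⟨g, hg, hgz, hz⟩ := wb_seq z
    obtain ⟨n, hn⟩ := hxy (fun n => f n + g n)
      (fun a b hab => CuSemigroup.add_le_add (hf hab) (hg hab)) (y + z)
      (CuSemigroup.O4 f g hf hg y z hy hz) le_rfl
    exact wb_mono (h x (f n) z (g n) hn (hgz n)) (hfy n) le_rfl
  tfae_finish
end

section
/- Let S be a countably based Cu-semigroup. Then every nonempty upward directed subset of S has a supremum (a least upper bound) in S. -/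
/-- In a countably based Cu-semigroup, every nonempty upward directed set has a
supremum. -/
theorem exists_isLUB_of_directedOn {S : Type*} [AddCommMonoid S] [PartialOrder S]
    [CuSemigroup S] (hcb : CountablyBased S)
    (D : Set S) (hne : D.Nonempty) (hdir : DirectedOn (· ≤ ·) D) :
    ∃ s : S, IsLUB D s := by
  obtain ⟨B, hB, hbase⟩ := hcb
  obtain ⟨d₀, hd₀⟩ := hne
  have hC : {b | b ∈ B ∧ ∃ d ∈ D, b ≤ d}.Countable := hB.mono fun b hb => hb.1
  have hCne : {b | b ∈ B ∧ ∃ d ∈ D, b ≤ d}.Nonempty := by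
    obtain ⟨f, hf, -, hlub⟩ := hbase d₀
    exact ⟨f 0, hf 0, d₀, hd₀, hlub.1 ⟨0, rfl⟩⟩
  obtain ⟨e, he⟩ := hC.exists_eq_range hCne
  have hw : ∀ n, ∃ d ∈ D, e n ≤ d := by
    intro n
    have h : e n ∈ {b | b ∈ B ∧ ∃ d ∈ D, b ≤ d} := by
      rw [he]
      exact ⟨n, rfl⟩
    exact h.2
  choose w hwD hew using hw
  have hdir2 : ∀ a b : D, ∃ c : D, a.1 ≤ c.1 ∧ b.1 ≤ c.1 := by
    intro a b
    obtain ⟨c, hc, h1, h2⟩ := hdir a.1 a.2 b.1 b.2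
    exact ⟨⟨c, hc⟩, h1, h2⟩
  choose j hj1 hj2 using hdir2
  let g : ℕ → D := fun n => Nat.rec ⟨d₀, hd₀⟩ (fun k x => j x ⟨w k, hwD k⟩) n
  have hmono : Monotone fun n => (g n).1 :=
    monotone_nat_of_le_succ fun n => hj1 (g n) ⟨w n, hwD n⟩
  obtain ⟨s, hs⟩ := CuSemigroup.O1 _ hmono
  refine ⟨s, ?_, ?_⟩
  · intro d hd
    obtain ⟨f, hf, -, hlub⟩ := hbase d
    apply hlub.2
    rintro _ ⟨n, rfl⟩
    have h : f n ∈ {b | b ∈ B ∧ ∃ d ∈ D, b ≤ d} := ⟨hf n, d, hd, hlub.1 ⟨n, rfl⟩⟩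
    rw [he] at h
    obtain ⟨k, hk⟩ := h
    rw [← hk]
    exact (hew k).trans ((hj2 (g k) ⟨w k, hwD k⟩).trans (hs.1 ⟨k + 1, rfl⟩))
  · intro u hu
    apply hs.2
    rintro _ ⟨n, rfl⟩
    exact hu (g n).2
end

section
/- Let S be a Cu-semigroup, and let B ⊆ S be a subset that is order-hereditary (y ≤ x and x ∈ B imply y ∈ B) and closed under suprema of increasing sequences. Define B_≪ = { x ∈ S : there exists y ∈ B with x ≪ y }. If B_≪ is upward directed, then B is upward directed. -/
/-- If `B` is an order-hereditary subset of a Cu-semigroup that is closed under suprema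
of increasing sequences, and the set `B_≪` of elements way-below some element of `B` is
upward directed, then `B` is upward directed. -/
theorem directedOn_of_directedOn_wayBelow {S : Type*} [AddCommMonoid S] [PartialOrder S]
    [CuSemigroup S] (B : Set S)
    (hhered : ∀ x y : S, y ≤ x → x ∈ B → y ∈ B)
    (hsup : ∀ f : ℕ → S, Monotone f → (∀ n, f n ∈ B) →
      ∀ s : S, IsLUB (Set.range f) s → s ∈ B)
    (hdir : DirectedOn (· ≤ ·) {x : S | ∃ y ∈ B, WayBelow x y}) :
    DirectedOn (· ≤ ·) B := by
  have hle : ∀ a b : S, WayBelow a b → a ≤ b := by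
    intro a b h
    obtain ⟨_, hn⟩ := h (fun _ => b) monotone_const b (by simp) le_rfl
    exact hn
  intro x hx y hy
  obtain ⟨f, hf, hfx⟩ := CuSemigroup.O2 x
  obtain ⟨g, hg, hgy⟩ := CuSemigroup.O2 y
  have hfB : ∀ n, f n ∈ {x : S | ∃ y ∈ B, WayBelow x y} := fun n =>
    ⟨f (n + 1), hhered x _ (hfx.1 ⟨n + 1, rfl⟩) hx, hf n⟩
  have hgB : ∀ n, g n ∈ {x : S | ∃ y ∈ B, WayBelow x y} := fun n =>
    ⟨g (n + 1), hhered y _ (hgy.1 ⟨n + 1, rfl⟩) hy, hg n⟩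
  have step : ∀ (n : ℕ) (z : {x : S | ∃ y ∈ B, WayBelow x y}),
      ∃ w : {x : S | ∃ y ∈ B, WayBelow x y}, z.1 ≤ w.1 ∧ f n ≤ w.1 ∧ g n ≤ w.1 := by
    intro n z
    obtain ⟨u, hu, h1, h2⟩ := hdir _ (hfB n) _ (hgB n)
    obtain ⟨w, hw, h3, h4⟩ := hdir _ z.2 u hu
    exact ⟨⟨w, hw⟩, h3, le_trans h1 h4, le_trans h2 h4⟩
  choose F hF1 hF2 hF3 using step
  let z : ℕ → {x : S | ∃ y ∈ B, WayBelow x y} := fun n => Nat.rec ⟨f 0, hfB 0⟩ F n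
  have hmono : Monotone (fun n => (z n).1) := monotone_nat_of_le_succ fun n => hF1 n (z n)
  obtain ⟨s, hs⟩ := CuSemigroup.O1 _ hmono
  refine ⟨s, hsup _ hmono (fun n => ?_) s hs, hfx.2 ?_, hgy.2 ?_⟩
  · obtain ⟨b, hb, hzb⟩ := (z n).2
    exact hhered b _ (hle _ _ hzb) hb
  · rintro _ ⟨n, rfl⟩
    exact le_trans (hF2 n (z n)) (hs.1 ⟨n + 1, rfl⟩)
  · rintro _ ⟨n, rfl⟩
    exact le_trans (hF3 n (z n)) (hs.1 ⟨n + 1, rfl⟩)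
end
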